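/- Let d ≥ 2 be an even integer and n = d + 2, and let Σ = {(α, λ) ∈ ℂ^{d−1} × ℂ : there exists a nonzero solution of the Schrödinger equation with parameters (α, λ) subdominant in each of S₀, S₂, …, S_{n−2}}. For m ∈ ℕ let Σ_m = {(α, λ) ∈ Σ : some nonzero solution subdominant in each of S₀, S₂, …, S_{n−2} has exactly m zeros}. Then for every m ∈ ℕ the set Σ_m is nonempty, connected, and both open and closed in the subspace topology of Σ; consequently the sets Σ_m, m = 0, 1, 2, …, are precisely the connected components of Σ. -/

import Mathlib

open Complex Filter Topology

/-- The polynomial potential `P_α(z) = z^d + α_{d-1} z^{d-1} + ⋯ + α₁ z`. -/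
noncomputable def Pol (d : ℕ) (α : Fin (d - 1) → ℂ) (z : ℂ) : ℂ :=
  z ^ d + ∑ i : Fin (d - 1), α i * z ^ ((i : ℕ) + 1)

/-- `y` is an (entire) solution of the Schrödinger equation `y'' = (P_α - λ) y`. -/
def IsSol (d : ℕ) (α : Fin (d - 1) → ℂ) (lam : ℂ) (y : ℂ → ℂ) : Prop :=
  Differentiable ℂ y ∧ ∀ z : ℂ, deriv (deriv y) z = (Pol d α z - lam) * y z

/-- `θ` is a ray direction of the Stokes sector `S_j`. -/
def DirIn (n j : ℕ) (θ : ℝ) : Prop :=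
  |θ - 2 * Real.pi * j / n| < Real.pi / n

/-- `y` is subdominant in the Stokes sector `S_j`: it tends to `0` along every ray in `S_j`. -/
def Subdominant (n j : ℕ) (y : ℂ → ℂ) : Prop :=
  ∀ θ : ℝ, DirIn n j θ →
    Tendsto (fun r : ℝ => y ((r : ℂ) * Complex.exp (θ * Complex.I))) atTop (𝓝 0)

/-!
A solution subdominant in every even sector has the form `y = Q exp (-B)`, where `Q` is a polynomial
of degree `m` and `b = B'` is the polynomial part of the square root of `P_α - λ`: the amplitude
`y exp B` has polynomial growth on a dense enough set of rays, hence everywhere by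
Phragmén–Lindelöf. The coefficient of degree `K = d / 2 - 1` of `P_α - λ - b² + b'` is then `-2 m`,
so the number of zeros is a continuous function on `Σ`, and `Σ_m` is a continuous image of the set
of pairs `(b, u)` for which `Q'' - 2 b Q' + 2 m z ^ K Q = u Q` has a solution `Q ≠ 0` of degree at
most `m`.

For fixed `b` this is a multiparameter eigenvalue problem in the `K` coefficients of `u`. It is
turned into a joint eigenvalue problem for `K` commuting operators on symmetric tensors. Suppose the
roots of `b` move along a complex line. A separation of the resulting spectral curve into two clopen
pieces gives an entire family of spectral projectors. For generic directions the rescaled problem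
at infinity has simple spectrum, so the suitably conjugated projectors are bounded, and Liouville's
theorem makes them constant. Hence the part of the spectral set over a generic line is connected,
and any two values of `b` are joined by two generic lines.
-/

/-- Symmetric tensors of rank `r` over `ι → F`, in coordinates: the coordinate at a multiset of
indices is the common value of the coordinates at all its orderings. -/
abbrev SymTensor (F ι : Type*) (r : ℕ) : Type _ := Sym ι r → F

namespace SymTensor

open scoped Matrix

section Contract

variable {F ι : Type*} [CommSemiring F] {r : ℕ}

/-- The symmetric power of a vector. -/
def power (r : ℕ) (q : ι → F) : SymTensor F ι r := fun ν => (ν.1.map q).prod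

theorem power_replicate (q : ι → F) (a : ι) : power r q (Sym.replicate r a) = q a ^ r := by
  simp [power, Sym.replicate]

variable [Fintype ι]

/-- Contraction of a symmetric tensor with a covector. -/
def contract : (ι → F) →ₗ[F] SymTensor F ι (r + 1) →ₗ[F] SymTensor F ι r :=
  LinearMap.mk₂ F (fun w Ψ μ => ∑ a, w a * Ψ (a ::ₛ μ))
    (fun w w' Ψ => by ext; simp [add_mul, Finset.sum_add_distrib])
    (fun c w Ψ => by ext; simp [mul_assoc, Finset.mul_sum])
    (fun w Ψ Ψ' => by ext; simp [mul_add, Finset.sum_add_distrib])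
    (fun c w Ψ => by ext; simp [mul_left_comm, Finset.mul_sum])

theorem contract_apply (w : ι → F) (Ψ : SymTensor F ι (r + 1)) (μ : Sym ι r) :
    contract w Ψ μ = ∑ a, w a * Ψ (a ::ₛ μ) := rfl

theorem contract_comm (v w : ι → F) (Ψ : SymTensor F ι (r + 2)) :
    contract v (contract w Ψ) = contract w (contract v Ψ) := by
  ext μ
  simp only [contract_apply, Finset.mul_sum]
  rw [Finset.sum_comm]
  refine Finset.sum_congr rfl fun a _ => Finset.sum_congr rfl fun b _ => ?_
  rw [Sym.cons_swap, mul_left_comm]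

theorem sum_smul_contract {R : Type*} [Fintype R] (v : R → F) (N : Matrix R ι F)
    (Ψ : SymTensor F ι (r + 1)) : ∑ a, v a • contract (N a) Ψ = contract (v ᵥ* N) Ψ := by
  rw [Matrix.vecMul_eq_sum, map_sum, LinearMap.sum_apply]
  exact Finset.sum_congr rfl fun a _ => by rw [map_smul, LinearMap.smul_apply]

theorem contract_power (w q : ι → F) : contract w (power (r + 1) q) = (w ⬝ᵥ q) • power r q := by
  ext μ
  simp only [contract_apply, power, dotProduct, Pi.smul_apply, smul_eq_mul, Finset.sum_mul]
  refine Finset.sum_congr rfl fun a _ => ?_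
  rw [Sym.val_eq_coe, Sym.coe_cons, Multiset.map_cons, Multiset.prod_cons, mul_assoc,
    Sym.val_eq_coe]

end Contract

section Moment

variable {F : Type*} [CommSemiring F]

/-- The covector evaluating, at the point `x`, the polynomial with given coefficients. -/
def moment (m : ℕ) (x : F) : Fin (m + 1) → F := fun a => x ^ (a : ℕ)

variable (F) in
/-- Multiplication by `z ^ i`, as a matrix on coefficients of polynomials. -/
def shift (m k i : ℕ) : Matrix (Fin (m + k + 1)) (Fin (m + 1)) F :=
  Matrix.of fun a b => if (a : ℕ) = b + i then 1 else 0

theorem moment_vecMul_shift {m k i : ℕ} (hi : i ≤ k) (x : F) :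
    moment (m + k) x ᵥ* shift F m k i = x ^ i • moment m x := by
  ext b
  have unique : ∀ a : Fin (m + k + 1), (a : ℕ) = b + i ↔ a = ⟨b + i, by omega⟩ :=
    fun a => (Fin.ext_iff (b := ⟨b + i, by omega⟩)).symm
  simp [Matrix.vecMul, dotProduct, shift, moment, unique, pow_add, mul_comm]

end Moment

section SumPow

variable {F V : Type*} [Field F] [AddCommGroup V] [Module F V]

theorem exists_sum_pow_smul_sub {n : ℕ} (B : Fin (n + 1) → V) (x₀ : F) :
    ∃ B' : Fin n → V, ∀ y : F,
      ∑ j : Fin (n + 1), y ^ (j : ℕ) • B j - ∑ j : Fin (n + 1), x₀ ^ (j : ℕ) • B j =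
      (y - x₀) • ∑ j : Fin n, y ^ (j : ℕ) • B' j := by
  induction n with
  | zero => exact ⟨0, fun y => by simp⟩
  | succ n ih =>
    obtain ⟨T, hT⟩ := ih fun j => B j.succ
    set S : F → V := fun y => ∑ j : Fin (n + 1), y ^ (j : ℕ) • B j.succ with hS
    have sum_eq : ∀ y : F, ∑ j : Fin (n + 2), y ^ (j : ℕ) • B j = B 0 + y • S y := fun y => by
      simp [hS, Fin.sum_univ_succ (n := n + 1), pow_succ', mul_smul, Finset.smul_sum]
    refine ⟨Fin.cons (S x₀) T, fun y => ?_⟩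
    have sum_cons : ∑ j : Fin (n + 1), y ^ (j : ℕ) • (Fin.cons (S x₀) T : Fin (n + 1) → V) j =
        S x₀ + y • ∑ j : Fin n, y ^ (j : ℕ) • T j := by
      simp [Fin.sum_univ_succ, pow_succ', mul_smul, Finset.smul_sum]
    rw [sum_eq, sum_eq, sum_cons, smul_add, smul_comm, ← hT y]
    module

variable [Infinite F]

theorem eq_zero_of_cofinite_sum_pow_smul {n : ℕ} {B : Fin n → V}
    (h : ∀ᶠ y : F in cofinite, ∑ j : Fin n, y ^ (j : ℕ) • B j = 0) (j : Fin n) : B j = 0 := by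
  classical
  rw [← Module.forall_dual_apply_eq_zero_iff F]
  intro f
  have roots : (Polynomial.ofFn n (f ∘ B)) = 0 := by
    refine Polynomial.eq_zero_of_infinite_isRoot _ (Set.Infinite.mono (fun y hy => ?_)
      (Set.Finite.infinite_compl h))
    have := congrArg f (of_not_not hy)
    simpa [Polynomial.ofFn_eq_sum_monomial, Polynomial.IsRoot, Polynomial.eval_finsetSum,
      mul_comm] using this
  simpa [roots] using (Polynomial.ofFn_coeff_eq_val_of_lt (f ∘ B) j.2).symm

variable {m r : ℕ}

theorem eq_zero_of_cofinite_contract {Ψ : SymTensor F (Fin (m + 1)) (r + 1)}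
    (h : ∀ᶠ y : F in cofinite, contract (moment m y) Ψ = 0) : Ψ = 0 := by
  ext ν
  obtain ⟨a, μ, rfl⟩ := Sym.exists_eq_cons_of_succ ν
  refine eq_zero_of_cofinite_sum_pow_smul (F := F) (B := fun a => Ψ (a ::ₛ μ)) ?_ a
  filter_upwards [h] with y hy using congrFun hy μ

theorem eq_zero_of_sum_contract_of_root {n : ℕ}
    {B : Fin (n + 1) → SymTensor F (Fin (m + 1)) (r + 1)}
    (ih : ∀ Ψ : Fin n → SymTensor F (Fin (m + 1)) (r + 1),
      (∀ᶠ x : F in cofinite, ∑ i : Fin n, x ^ (i : ℕ) • contract (moment m x) (Ψ i) = 0) →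
        ∀ i, Ψ i = 0)
    {x₀ : F} (h₀ : ∑ j : Fin (n + 1), x₀ ^ (j : ℕ) • B j = 0)
    (h : ∀ᶠ y : F in cofinite, ∑ j : Fin (n + 1), y ^ (j : ℕ) • contract (moment m y) (B j) = 0)
    (j : Fin (n + 1)) : B j = 0 := by
  obtain ⟨B', hB'⟩ := exists_sum_pow_smul_sub B x₀
  simp only [h₀, sub_zero] at hB'
  have quotient_eq_zero : ∀ i, B' i = 0 := by
    refine ih B' ?_
    filter_upwards [h, (Set.finite_singleton x₀).compl_mem_cofinite] with y hy hne
    have := congrArg (contract (moment m y)) (hB' y)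
    simp only [map_sum, map_smul, hy] at this
    exact (smul_eq_zero.mp this.symm).resolve_left (sub_ne_zero.mpr hne)
  refine eq_zero_of_cofinite_sum_pow_smul (Eventually.of_forall fun y : F => ?_) j
  simp [hB' y, quotient_eq_zero]

theorem eq_zero_of_sum_contract {n : ℕ} (hn : n ≤ r + 1)
    {Ψ : Fin n → SymTensor F (Fin (m + 1)) (r + 1)}
    (h : ∀ᶠ x : F in cofinite, ∑ i : Fin n, x ^ (i : ℕ) • contract (moment m x) (Ψ i) = 0)
    (i : Fin n) : Ψ i = 0 := by
  induction r generalizing n with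
  | zero =>
    obtain rfl : n = 1 := by have := i.2; omega
    rw [Subsingleton.elim i 0]
    exact eq_zero_of_cofinite_contract (by simpa using h)
  | succ r ih =>
    obtain ⟨n, rfl⟩ : ∃ k, n = k + 1 := ⟨n - 1, by have := i.2; omega⟩
    refine eq_zero_of_cofinite_contract ?_
    filter_upwards [h] with x hx
    refine eq_zero_of_sum_contract_of_root (B := fun i => contract (moment m x) (Ψ i))
      (fun _ => ih (by omega)) hx ?_ i
    filter_upwards [h] with y hy
    have := congrArg (contract (moment m x)) hy
    simpa only [map_sum, map_smul, map_zero, contract_comm (moment m x)] using this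

theorem eq_zero_of_antisymm_sum_contract [CharZero F]
    {A : Fin (r + 2) → Fin (r + 2) → SymTensor F (Fin (m + 1)) (r + 2)}
    (hA : ∀ i j, A i j = -A j i)
    (h : ∀ x y : F, ∑ j : Fin (r + 2), y ^ (j : ℕ) • contract (moment m y)
      (∑ i : Fin (r + 2), x ^ (i : ℕ) • contract (moment m x) (A i j)) = 0) (i j : Fin (r + 2)) :
    A i j = 0 := by
  have column_eq_zero : ∀ x : F, ∀ j,
      ∑ i : Fin (r + 2), x ^ (i : ℕ) • contract (moment m x) (A i j) = 0 := by
    intro x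
    refine eq_zero_of_sum_contract_of_root (x₀ := x)
      (fun _ => eq_zero_of_sum_contract le_rfl) ?_ (Eventually.of_forall (h x))
    refine self_eq_neg.mp ?_
    simp only [Finset.smul_sum, ← Finset.sum_neg_distrib]
    rw [Finset.sum_comm]
    refine Finset.sum_congr rfl fun i _ => Finset.sum_congr rfl fun j _ => ?_
    rw [hA j i, map_neg, smul_neg, smul_neg, smul_comm, neg_neg]
  exact eq_zero_of_sum_contract le_rfl (Ψ := fun i => A i j)
    (Eventually.of_forall fun x => column_eq_zero x j) i

end SumPow

theorem card_sym_fin_succ (m r : ℕ) : Fintype.card (Sym (Fin (m + 1)) r) = (m + r).choose r := by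
  rw [Sym.card_sym_eq_choose, Fintype.card_fin, Nat.add_right_comm, Nat.add_sub_cancel]

section JointOp

variable {F : Type*} [Field F] {m k : ℕ}

/-- The family `(Ψ i)` is sent to the tensor `∑ i, z ^ i Ψ i (z, ·)`, polynomial of degree at
most `m + k` in the distinguished variable `z`. -/
def assemble (F : Type*) [Field F] (m k : ℕ) :
    (Fin (k + 1) → SymTensor F (Fin (m + 1)) (k + 1)) →ₗ[F]
      (Fin (m + k + 1) → SymTensor F (Fin (m + 1)) k) :=
  LinearMap.pi fun a => ∑ i : Fin (k + 1), contract (shift F m k i a) ∘ₗ LinearMap.proj i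

theorem assemble_apply (Ψ : Fin (k + 1) → SymTensor F (Fin (m + 1)) (k + 1))
    (a : Fin (m + k + 1)) :
    assemble F m k Ψ a = ∑ i : Fin (k + 1), contract (shift F m k i a) (Ψ i) := by
  simp [assemble]

theorem sum_moment_smul_assemble (Ψ : Fin (k + 1) → SymTensor F (Fin (m + 1)) (k + 1)) (x : F) :
    ∑ a, moment (m + k) x a • assemble F m k Ψ a =
      ∑ i : Fin (k + 1), x ^ (i : ℕ) • contract (moment m x) (Ψ i) := by
  simp only [assemble_apply, Finset.smul_sum]
  rw [Finset.sum_comm]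
  refine Finset.sum_congr rfl fun i _ => ?_
  rw [sum_smul_contract, moment_vecMul_shift (Nat.lt_succ_iff.mp i.2), map_smul,
    LinearMap.smul_apply]

theorem assemble_injective (F : Type*) [Field F] [Infinite F] (m k : ℕ) :
    Function.Injective (assemble F m k) := by
  refine (injective_iff_map_eq_zero _).mpr fun Ψ h => funext fun i =>
    eq_zero_of_sum_contract le_rfl (Eventually.of_forall fun x => ?_) i
  rw [← sum_moment_smul_assemble, h]
  simp

variable [Infinite F]

/-- `assemble` as a linear equivalence: both sides have dimension `(k + 1) * (m + k + 1).choose k`.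
-/
noncomputable def assembleEquiv (F : Type*) [Field F] [Infinite F] (m k : ℕ) :
    (Fin (k + 1) → SymTensor F (Fin (m + 1)) (k + 1)) ≃ₗ[F]
      (Fin (m + k + 1) → SymTensor F (Fin (m + 1)) k) :=
  LinearEquiv.ofInjectiveOfFinrankEq (assemble F m k) (assemble_injective F m k) (by
    have := Nat.add_one_mul_choose_eq (m + k) k
    simp only [Module.finrank_pi_fintype, Module.finrank_self, Finset.sum_const, Finset.card_univ,
      Fintype.card_fin, smul_eq_mul, mul_one, card_sym_fin_succ, ← add_assoc]
    linarith)

/-- The operators `H i` on symmetric tensors with `N Ψ = ∑ i, z ^ i H i Ψ`, where the matrix `N`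
acts on one variable of `Ψ`. They linearise the pencil `N q = (∑ i, u i z ^ i) q`, whose
solutions are their joint eigenvectors. -/
noncomputable def jointOp (m k : ℕ) (i : Fin (k + 1)) :
    Matrix (Fin (m + k + 1)) (Fin (m + 1)) F →ₗ[F]
      Module.End F (SymTensor F (Fin (m + 1)) (k + 1)) :=
  (LinearMap.mk₂ F (fun (N : Matrix (Fin (m + k + 1)) (Fin (m + 1)) F) Ψ a => contract (N a) Ψ)
    (fun N N' Ψ => funext fun a => LinearMap.map_add₂ contract (N a) (N' a) Ψ)
    (fun c N Ψ => funext fun a => LinearMap.map_smul₂ contract c (N a) Ψ)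
    (fun N Ψ Ψ' => funext fun a => map_add (contract (N a)) Ψ Ψ')
    (fun c N Ψ => funext fun a => map_smul (contract (N a)) c Ψ)).compr₂
    (LinearMap.proj i ∘ₗ (assembleEquiv F m k).symm.toLinearMap)

variable {N : Matrix (Fin (m + k + 1)) (Fin (m + 1)) F} {Ψ : SymTensor F (Fin (m + 1)) (k + 1)}

variable (N Ψ) in
theorem sum_contract_shift_jointOp (a : Fin (m + k + 1)) :
    ∑ i : Fin (k + 1), contract (shift F m k i a) (jointOp m k i N Ψ) = contract (N a) Ψ := by
  have := congrFun ((assembleEquiv F m k).apply_symm_apply fun a => contract (N a) Ψ) a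
  rw [← this]
  exact (assemble_apply _ a).symm

variable (N Ψ) in
theorem sum_contract_moment_jointOp (x : F) :
    ∑ i : Fin (k + 1), x ^ (i : ℕ) • contract (moment m x) (jointOp m k i N Ψ) =
      contract (moment (m + k) x ᵥ* N) Ψ := by
  rw [← sum_moment_smul_assemble, ← sum_smul_contract]
  exact Finset.sum_congr rfl fun a _ => by rw [assemble_apply, sum_contract_shift_jointOp]

theorem jointOp_eq_of_sum_contract {Φ : Fin (k + 1) → SymTensor F (Fin (m + 1)) (k + 1)}
    (h : ∀ᶠ x : F in cofinite, ∑ i : Fin (k + 1), x ^ (i : ℕ) • contract (moment m x) (Φ i) =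
      contract (moment (m + k) x ᵥ* N) Ψ) (i : Fin (k + 1)) : jointOp m k i N Ψ = Φ i := by
  refine sub_eq_zero.mp (eq_zero_of_sum_contract le_rfl
    (Ψ := fun i => jointOp m k i N Ψ - Φ i) ?_ i)
  filter_upwards [h] with x hx
  simp only [map_sub, smul_sub, Finset.sum_sub_distrib, hx, sum_contract_moment_jointOp, sub_self]

theorem sum_contract_sum_contract_jointOp
    (N : Matrix (Fin (m + (k + 1) + 1)) (Fin (m + 1)) F) (Ψ : SymTensor F (Fin (m + 1)) (k + 2))
    (x y : F) :
    ∑ j : Fin (k + 2), y ^ (j : ℕ) • contract (moment m y) (∑ i : Fin (k + 2), x ^ (i : ℕ) •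
      contract (moment m x) (jointOp m (k + 1) i N (jointOp m (k + 1) j N Ψ))) =
    contract (moment (m + (k + 1)) x ᵥ* N) (contract (moment (m + (k + 1)) y ᵥ* N) Ψ) := by
  simp only [sum_contract_moment_jointOp, contract_comm (moment m y)]
  rw [← sum_contract_moment_jointOp N Ψ y, map_sum]
  simp only [map_smul]

theorem jointOp_commute [CharZero F] (N : Matrix (Fin (m + k + 1)) (Fin (m + 1)) F)
    (i j : Fin (k + 1)) : Commute (jointOp m k i N) (jointOp m k j N) := by
  cases k with
  | zero => rw [Subsingleton.elim (α := Fin 1) i j]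
  | succ k =>
    refine LinearMap.ext fun Ψ => sub_eq_zero.mp ?_
    refine eq_zero_of_antisymm_sum_contract (A := fun i j =>
      jointOp m (k + 1) i N (jointOp m (k + 1) j N Ψ) -
        jointOp m (k + 1) j N (jointOp m (k + 1) i N Ψ)) (fun i j => (neg_sub _ _).symm)
      (fun x y => ?_) i j
    simp only [map_sub, smul_sub, Finset.sum_sub_distrib, sub_eq_zero,
      sum_contract_sum_contract_jointOp]
    rw [contract_comm, ← sum_contract_sum_contract_jointOp]
    simp only [map_sum, map_smul, Finset.smul_sum]
    rw [Finset.sum_comm]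
    refine Finset.sum_congr rfl fun i _ => Finset.sum_congr rfl fun j _ => ?_
    rw [contract_comm, smul_comm]

end JointOp

section PencilEigenvector

variable {F : Type*} [Field F] {m k : ℕ} {N : Matrix (Fin (m + k + 1)) (Fin (m + 1)) F}
  {u : Fin (k + 1) → F}

/-- `q` is the coefficient vector of a nonzero polynomial with `N q = (∑ i, u i z ^ i) q`. -/
def IsPencilEigenvector (N : Matrix (Fin (m + k + 1)) (Fin (m + 1)) F) (u : Fin (k + 1) → F)
    (q : Fin (m + 1) → F) : Prop :=
  q ≠ 0 ∧ N *ᵥ q = (∑ i : Fin (k + 1), u i • shift F m k i) *ᵥ q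

variable [Infinite F]

theorem IsPencilEigenvector.jointOp_power {q : Fin (m + 1) → F} (h : IsPencilEigenvector N u q)
    (i : Fin (k + 1)) : jointOp m k i N (power (k + 1) q) = u i • power (k + 1) q := by
  refine jointOp_eq_of_sum_contract (Φ := fun i => u i • power (k + 1) q)
    (Eventually.of_forall fun x => ?_) i
  have pencil_at_x : moment (m + k) x ᵥ* N ⬝ᵥ q =
      ∑ i : Fin (k + 1), u i * (x ^ (i : ℕ) * (moment m x ⬝ᵥ q)) := by
    rw [← Matrix.dotProduct_mulVec, h.2, Matrix.dotProduct_mulVec, Matrix.vecMul_sum,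
      sum_dotProduct]
    refine Finset.sum_congr rfl fun i _ => ?_
    rw [Matrix.vecMul_smul, moment_vecMul_shift (Nat.lt_succ_iff.mp i.2), smul_dotProduct,
      smul_dotProduct, smul_eq_mul, smul_eq_mul]
  simp only [map_smul, contract_power, pencil_at_x, Finset.sum_smul, smul_smul]
  exact Finset.sum_congr rfl fun i _ => by ring_nf

theorem exists_isPencilEigenvector_of_jointOp {Ψ : SymTensor F (Fin (m + 1)) (k + 1)}
    (hΨ : Ψ ≠ 0) (h : ∀ i, jointOp m k i N Ψ = u i • Ψ) : ∃ q, IsPencilEigenvector N u q := by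
  obtain ⟨ν, hν⟩ := Function.ne_iff.mp hΨ
  obtain ⟨a, μ, rfl⟩ := Sym.exists_eq_cons_of_succ ν
  refine ⟨fun b => Ψ (b ::ₛ μ), fun h₀ => hν (congrFun h₀ a), funext fun b => ?_⟩
  have := congrFun (sum_contract_shift_jointOp N Ψ b) μ
  simp only [h, map_smul, Finset.sum_apply, Pi.smul_apply, contract_apply, smul_eq_mul] at this
  rw [Matrix.sum_mulVec, Finset.sum_apply]
  simp only [Matrix.smul_mulVec, Pi.smul_apply, smul_eq_mul]
  exact this.symm

end PencilEigenvector

end SymTensor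

section CommutingFamily

open Polynomial

variable {F V κ : Type*} [Field F] [AddCommGroup V] [Module F V]

/-- `Ψ` is a nonzero joint eigenvector of the family `H`, with eigenvalues `v`. -/
def IsJointEigenvector (H : κ → Module.End F V) (v : κ → F) (Ψ : V) : Prop :=
  Ψ ≠ 0 ∧ ∀ i, H i Ψ = v i • Ψ

theorem commute_aeval {A : Type*} [Ring A] [Algebra F A] {T B : A} (h : Commute T B) (p : F[X]) :
    Commute (aeval T p) B := by
  have mem : T ∈ Subalgebra.centralizer F {B} := by
    simpa [Subalgebra.mem_centralizer_iff] using h.symm.eq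
  have := Algebra.adjoin_singleton_le mem (aeval_mem_adjoin_singleton F T (p := p))
  exact (Subalgebra.mem_centralizer_iff F |>.mp this B rfl).symm

theorem exists_dual_injOn [Infinite F] {S : Set V} (hS : S.Finite) :
    ∃ φ : Module.Dual F V, Set.InjOn φ S := by
  have := hS.to_subtype
  obtain ⟨φ, hφ⟩ := Module.exists_dual_forall_apply_ne_zero (K := F)
    (fun x : {x : S × S // x.1 ≠ x.2} => (x.1.1 : V) - x.1.2)
    fun x => sub_ne_zero.mpr fun h => x.2 (Subtype.ext h)
  refine ⟨φ, fun x hx y hy h => by_contra fun hne => ?_⟩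
  refine hφ ⟨(⟨x, hx⟩, ⟨y, hy⟩), fun h => hne (congrArg Subtype.val h)⟩ ?_
  rw [map_sub, h, sub_self]

variable {H : κ → Module.End F V}

theorem IsJointEigenvector.sum_smul_apply [Fintype κ] {v : κ → F} {Ψ : V}
    (h : IsJointEigenvector H v Ψ) (a : κ → F) : (∑ i, a i • H i) Ψ = (a ⬝ᵥ v) • Ψ := by
  simp only [LinearMap.sum_apply, LinearMap.smul_apply, h.2, smul_smul, dotProduct, Finset.sum_smul]

theorem IsJointEigenvector.aeval_apply [Fintype κ] {v : κ → F} {Ψ : V}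
    (h : IsJointEigenvector H v Ψ) (a : κ → F) (p : F[X]) :
    aeval (∑ i, a i • H i) p Ψ = p.eval (a ⬝ᵥ v) • Ψ :=
  Module.End.aeval_apply_of_hasEigenvector
    ⟨Module.End.mem_eigenspace_iff.mpr (h.sum_smul_apply a), h.1⟩

variable [FiniteDimensional F V]

theorem finite_setOf_isJointEigenvector [Finite κ] (H : κ → Module.End F V) :
    {v | ∃ Ψ, IsJointEigenvector H v Ψ}.Finite := by
  refine (Set.Finite.pi (t := fun i => {μ | (H i).HasEigenvalue μ}) fun i =>
    Module.End.finite_hasEigenvalue (H i)).subset ?_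
  rintro v ⟨Ψ, hΨ, h⟩ i _
  exact Module.End.hasEigenvalue_of_hasEigenvector ⟨Module.End.mem_eigenspace_iff.mpr (h i), hΨ⟩

theorem eq_sum_smul_aeval_lagrangeBasis {J : Type*} [Fintype J] [DecidableEq J]
    (hJ : Fintype.card J = Module.finrank F V) {ν : J → F} (hν : Function.Injective ν)
    {A E : Module.End F V} {Ψ : J → V} {ε : J → F}
    (hA : ∀ j, A.HasEigenvector (ν j) (Ψ j)) (hE : ∀ j, E (Ψ j) = ε j • Ψ j) :
    E = ∑ j, ε j • aeval A (Lagrange.basis Finset.univ ν j) := by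
  have indep := Module.End.eigenvectors_linearIndependent' A ν hν Ψ hA
  refine (basisOfLinearIndependentOfCardEqFinrank' Ψ indep hJ).ext fun k => ?_
  simp only [coe_basisOfLinearIndependentOfCardEqFinrank', hE, LinearMap.sum_apply,
    LinearMap.smul_apply, Module.End.aeval_apply_of_hasEigenvector (hA k)]
  rw [Finset.sum_eq_single_of_mem k (Finset.mem_univ k) fun j _ hjk => by
    rw [Lagrange.eval_basis_of_ne hjk (Finset.mem_univ k), zero_smul, smul_zero],
    Lagrange.eval_basis_self hν.injOn (Finset.mem_univ k), one_smul]

variable [IsAlgClosed F]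

-- A minimal nonzero invariant subspace is contained in an eigenspace of each `H i`.
theorem exists_isJointEigenvector_mem (hH : ∀ i j, Commute (H i) (H j)) {W : Submodule F V}
    (hW : W ≠ ⊥) (hinv : ∀ i, Set.MapsTo (H i) W W) : ∃ v, ∃ Ψ ∈ W, IsJointEigenvector H v Ψ := by
  obtain ⟨U, ⟨hUW, hU, hUinv⟩, hmin⟩ := (wellFounded_lt (α := Submodule F V)).has_min
    {U | U ≤ W ∧ U ≠ ⊥ ∧ ∀ i, Set.MapsTo (H i) U U} ⟨W, le_rfl, hW, hinv⟩
  have scalar : ∀ i, ∃ c, U ≤ (H i).eigenspace c := fun i => by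
    have : Nontrivial U := Submodule.nontrivial_iff_ne_bot.mpr hU
    obtain ⟨c, hc⟩ := Module.End.exists_eigenvalue ((H i).restrict (hUinv i))
    obtain ⟨x, hx⟩ := hc.exists_hasEigenvector
    refine ⟨c, inf_eq_left.mp (eq_of_le_of_not_lt inf_le_left (hmin _ ⟨inf_le_left.trans hUW, ?_,
      fun j => ?_⟩))⟩
    · refine (Submodule.ne_bot_iff _).mpr ⟨x, ⟨x.2, ?_⟩, by simpa using hx.2⟩
      exact Module.End.mem_eigenspace_iff.mpr (congrArg Subtype.val hx.apply_eq_smul)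
    · exact (hUinv j).inter_inter (Module.End.mapsTo_genEigenspace_of_comm (hH i j) c 1)
  choose v hv using scalar
  obtain ⟨Ψ, hΨU, hΨ⟩ := U.ne_bot_iff.mp hU
  exact ⟨v, Ψ, hUW hΨU, hΨ, fun i => Module.End.mem_eigenspace_iff.mp (hv i hΨU)⟩

theorem exists_isJointEigenvector_of_hasEigenvalue (hH : ∀ i j, Commute (H i) (H j))
    {T : Module.End F V} (hT : ∀ i, Commute T (H i)) {μ : F} (hμ : T.HasEigenvalue μ) :
    ∃ v Ψ, T Ψ = μ • Ψ ∧ IsJointEigenvector H v Ψ := by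
  obtain ⟨v, Ψ, hΨ, h⟩ := exists_isJointEigenvector_mem hH hμ fun i =>
    Module.End.mapsTo_genEigenspace_of_comm (hT i) μ 1
  exact ⟨v, Ψ, Module.End.mem_eigenspace_iff.mp hΨ, h⟩

theorem isNilpotent_of_forall_hasEigenvalue {T : Module.End F V}
    (h : ∀ μ, T.HasEigenvalue μ → μ = 0) : IsNilpotent T := by
  rw [LinearMap.isNilpotent_iff_charpoly]
  have splits := IsAlgClosed.splits T.charpoly
  have roots : T.charpoly.roots = Multiset.replicate (Module.finrank F V) 0 := by
    rw [Multiset.eq_replicate, ← splits.natDegree_eq_card_roots, LinearMap.charpoly_natDegree]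
    refine ⟨rfl, fun μ hμ => h μ ?_⟩
    rw [Module.End.hasEigenvalue_iff_isRoot_charpoly]
    exact isRoot_of_mem_roots hμ
  rw [splits.eq_prod_roots_of_monic (LinearMap.charpoly_monic T), roots]
  simp

theorem isNilpotent_of_forall_isJointEigenvector (hH : ∀ i j, Commute (H i) (H j))
    {T : Module.End F V} (hT : ∀ i, Commute T (H i))
    (h : ∀ v Ψ, IsJointEigenvector H v Ψ → T Ψ = 0) : IsNilpotent T := by
  refine isNilpotent_of_forall_hasEigenvalue fun μ hμ => ?_
  obtain ⟨v, Ψ, hTΨ, hΨ⟩ := exists_isJointEigenvector_of_hasEigenvalue hH hT hμ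
  exact (smul_eq_zero.mp (hTΨ.symm.trans (h v Ψ hΨ))).resolve_right hΨ.1

theorem exists_polynomial_eval_dotProduct [Fintype κ] (H : κ → Module.End F V) (e : (κ → F) → F) :
    ∃ (a : κ → F) (q : F[X]), ∀ v Ψ, IsJointEigenvector H v Ψ → q.eval (a ⬝ᵥ v) = e v := by
  classical
  have hfin := finite_setOf_isJointEigenvector H
  obtain ⟨φ, hφ⟩ := exists_dual_injOn (F := F) hfin
  obtain ⟨a, rfl⟩ := (dotProductEquiv F κ).surjective φ
  refine ⟨a, Lagrange.interpolate hfin.toFinset (a ⬝ᵥ ·) e, fun v Ψ h =>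
    Lagrange.eval_interpolate_at_node e ?_ (hfin.mem_toFinset.mpr ⟨Ψ, h⟩)⟩
  rw [hfin.coe_toFinset]
  exact hφ

theorem exists_isIdempotentElem_aeval [Fintype κ] (hH : ∀ i j, Commute (H i) (H j))
    {e : (κ → F) → F} (he : ∀ v Ψ, IsJointEigenvector H v Ψ → e v = 0 ∨ e v = 1) :
    ∃ (a : κ → F) (p : F[X]), IsIdempotentElem (aeval (∑ i, a i • H i) p) ∧
      ∀ v Ψ, IsJointEigenvector H v Ψ → p.eval (a ⬝ᵥ v) = e v := by
  obtain ⟨a, q, hq⟩ := exists_polynomial_eval_dotProduct H e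
  set T := ∑ i, a i • H i
  have commute : ∀ i, Commute T (H i) := fun i =>
    Commute.sum_left _ _ _ fun j _ => (hH j i).smul_left _
  obtain ⟨n, hn⟩ : IsNilpotent (aeval T (q - q ^ 2)) := by
    refine isNilpotent_of_forall_isJointEigenvector hH
      (fun i => commute_aeval (commute i) _) fun v Ψ h => ?_
    rw [h.aeval_apply, eval_sub, eval_pow, hq v Ψ h]
    rcases he v Ψ h with h₀ | h₁ <;> simp [*]
  refine ⟨a, 1 - (1 - q ^ (n + 1)) ^ (n + 1), ?_, fun v Ψ h => ?_⟩
  · have := isIdempotentElem_one_sub_one_sub_pow_pow (aeval T q) (n + 1)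
      (by rw [pow_succ, ← map_pow, ← map_sub, hn, zero_mul])
    simpa using this
  · simp only [eval_sub, eval_one, eval_pow, hq v Ψ h]
    rcases he v Ψ h with h₀ | h₁ <;> simp [*]

theorem eq_of_isIdempotentElem_of_isJointEigenvector (hH : ∀ i j, Commute (H i) (H j))
    {P Q : Module.End F V} (hP : IsIdempotentElem P) (hQ : IsIdempotentElem Q) (hPQ : Commute P Q)
    (hPH : ∀ i, Commute P (H i)) (hQH : ∀ i, Commute Q (H i))
    (h : ∀ v Ψ, IsJointEigenvector H v Ψ → P Ψ = Q Ψ) : P = Q :=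
  eq_of_isNilpotent_sub_of_isIdempotentElem_of_commute hP hQ
    (isNilpotent_of_forall_isJointEigenvector hH (fun i => (hPH i).sub_left (hQH i))
      fun v Ψ hΨ => sub_eq_zero.mpr (h v Ψ hΨ)) hPQ

end CommutingFamily

section LocalIdempotent

variable {A : Type*} [NormedRing A] [NormedAlgebra ℂ A]

theorem hasFDerivAt_mul_self_one :
    HasFDerivAt (fun x : A => x * x)
      ((ContinuousLinearEquiv.smulLeft (Units.mk0 (2 : ℂ) two_ne_zero) : A ≃L[ℂ] A) : A →L[ℂ] A)
      1 := by
  refine ((hasFDerivAt_id (𝕜 := ℂ) (1 : A)).mul' (hasFDerivAt_id (𝕜 := ℂ) (1 : A))).congr_fderiv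
    (ContinuousLinearMap.ext fun x => ?_)
  simpa using (two_smul ℂ x).symm

variable [CompleteSpace A]

-- Conjugation by `1 + ε • B` moves `x` to a nearby square root of `x * x`, that is, to `x` itself.
theorem commute_of_eventually_sq_eq {x B : A} (hx : ∀ᶠ y in 𝓝 x, y * y = x * x → y = x)
    (hB : Commute B (x * x)) : Commute B x := by
  set u : ℂ → A := fun ε => 1 + ε • B with hu
  have cont : ContinuousAt u 0 := by fun_prop
  have u_zero : u 0 = ((1 : Aˣ) : A) := by simp [hu]
  have isUnit : ∀ᶠ ε in 𝓝 0, IsUnit (u ε) :=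
    cont.eventually (Units.isOpen.mem_nhds (u_zero ▸ (1 : Aˣ).isUnit))
  have conj : Tendsto (fun ε => u ε * x * Ring.inverse (u ε)) (𝓝 0) (𝓝 x) := by
    have inv : ContinuousAt (fun ε => Ring.inverse (u ε)) 0 :=
      ContinuousAt.comp (g := Ring.inverse) (u_zero ▸ NormedRing.inverse_continuousAt (1 : Aˣ)) cont
    have := (cont.mul_const x).tendsto.mul inv.tendsto
    simpa only [u_zero, Units.val_one, Ring.inverse_one, one_mul, mul_one] using this
  obtain ⟨ε, ⟨⟨v, hv⟩, fixed⟩, hε⟩ := (((isUnit.and (conj.eventually hx)).filter_mono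
    nhdsWithin_le_nhds).and (self_mem_nhdsWithin (s := {0}ᶜ) (a := (0 : ℂ)))).exists
  have commute_sq : Commute (v : A) (x * x) := by
    rw [hv]
    exact (Commute.one_left _).add_left (hB.smul_left ε)
  rw [← hv, Ring.inverse_unit] at fixed
  have commute : Commute (v : A) x := by
    refine (Units.mul_inv_eq_iff_eq_mul v).mp (fixed ?_)
    calc (v : A) * x * ↑v⁻¹ * (↑v * x * ↑v⁻¹) = ↑v * x * (↑v⁻¹ * ↑v) * x * ↑v⁻¹ := by noncomm_ring
      _ = ↑v * (x * x) * ↑v⁻¹ := by rw [Units.inv_mul, mul_one, mul_assoc (v : A)]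
      _ = x * x := by rw [commute_sq.eq, Units.mul_inv_cancel_right]
  have smul_B : ε⁻¹ • ((v : A) - 1) = B := by
    rw [hv, hu, add_sub_cancel_left, inv_smul_smul₀ hε]
  exact smul_B ▸ (commute.sub_left (Commute.one_left x)).smul_left ε⁻¹

theorem exists_local_sqrt : ∃ r : A → A, r 1 = 1 ∧ ∀ᶠ w in 𝓝 1,
    DifferentiableAt ℂ r w ∧ r w * r w = w ∧ ∀ B, Commute B w → Commute B (r w) := by
  have smooth : ContDiffAt ℂ 1 (fun x : A => x * x) 1 := (contDiff_id.mul contDiff_id).contDiffAt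
  have strict := smooth.hasStrictFDerivAt' hasFDerivAt_mul_self_one one_ne_zero
  have smooth_inv := smooth.to_localInverse hasFDerivAt_mul_self_one one_ne_zero
  have r_one := smooth.localInverse_apply_image hasFDerivAt_mul_self_one one_ne_zero
  set r := smooth.localInverse hasFDerivAt_mul_self_one one_ne_zero
  have sq : ∀ᶠ w in 𝓝 (1 * 1 : A), r w * r w = w := strict.eventually_right_inverse
  have r_sq : ∀ᶠ x in 𝓝 (1 : A), r (x * x) = x := strict.eventually_left_inverse
  simp only [mul_one] at r_one smooth_inv sq
  have tendsto : Tendsto r (𝓝 1) (𝓝 1) := by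
    simpa only [r_one] using smooth_inv.continuousAt.tendsto
  refine ⟨r, r_one, ?_⟩
  filter_upwards [smooth_inv.eventually (by simp), sq, tendsto.eventually r_sq.eventually_nhds]
    with w hdiff hw hr
  refine ⟨hdiff.differentiableAt one_ne_zero, hw, fun B hB =>
    commute_of_eventually_sq_eq (hr.mono fun y hy h => ?_) (hw.symm ▸ hB)⟩
  rw [← hy, h, hr.self_of_nhds]

theorem exists_local_retraction_involutions {x₀ : A} (h₀ : x₀ * x₀ = 1) :
    ∃ S : A → A, S x₀ = x₀ ∧ ∀ᶠ x in 𝓝 x₀,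
      DifferentiableAt ℂ S x ∧ S x * S x = 1 ∧ ∀ B, Commute B x → Commute B (S x) := by
  obtain ⟨r, r_one, hr⟩ := exists_local_sqrt (A := A)
  set f : A → A := fun x => Ring.inverse (x * x) with hf
  have f_x₀ : f x₀ = 1 := by simp [hf, h₀]
  have isUnit : IsUnit (x₀ * x₀) := h₀ ▸ isUnit_one
  have diff : ∀ {x : A}, IsUnit (x * x) → DifferentiableAt ℂ f x := fun {x} hx =>
    (differentiableAt_inverse (𝕜 := ℂ) hx).comp (f := fun x => x * x) x
      (differentiableAt_id.mul differentiableAt_id)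
  have eventually_isUnit : ∀ᶠ x in 𝓝 x₀, IsUnit (x * x) :=
    (show ContinuousAt (fun x : A => x * x) x₀ by fun_prop).eventually
      (Units.isOpen.mem_nhds isUnit)
  have tendsto : Tendsto f (𝓝 x₀) (𝓝 1) := f_x₀ ▸ (diff isUnit).continuousAt.tendsto
  refine ⟨fun x => x * r (f x), by simp [f_x₀, r_one], ?_⟩
  filter_upwards [eventually_isUnit, tendsto.eventually hr] with x hx ⟨hdiff, hsq, hcomm⟩
  have commute : ∀ B, Commute B x → Commute B (r (f x)) := fun B hB => by
    obtain ⟨u, hu⟩ := hx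
    refine hcomm B ?_
    simp only [hf, ← hu, Ring.inverse_unit]
    exact (hu ▸ hB.mul_right hB : Commute B u).units_inv_right
  refine ⟨differentiableAt_id.mul (hdiff.comp x (diff hx)), ?_,
    fun B hB => hB.mul_right (commute B hB)⟩
  calc x * r (f x) * (x * r (f x)) = x * x * (r (f x) * r (f x)) :=
        (commute x (Commute.refl x)).symm.mul_mul_mul_comm x (r (f x))
    _ = 1 := by rw [hsq, Ring.mul_inverse_cancel _ hx]

theorem exists_local_retraction_idempotents {P₀ : A} (h₀ : IsIdempotentElem P₀) :
    ∃ E : A → A, E P₀ = P₀ ∧ ∀ᶠ P in 𝓝 P₀,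
      DifferentiableAt ℂ E P ∧ IsIdempotentElem (E P) ∧ ∀ B, Commute B P → Commute B (E P) := by
  set J : A → A := fun P => (2 : ℂ) • P - 1 with hJ
  have J_sq : J P₀ * J P₀ = 1 := by
    simp only [hJ, sub_mul, mul_sub, smul_mul_smul_comm, h₀.eq, one_mul, mul_one]
    module
  have diff : Differentiable ℂ J := (differentiable_id.const_smul (2 : ℂ)).sub_const 1
  obtain ⟨S, hS₀, hS⟩ := exists_local_retraction_involutions J_sq
  refine ⟨fun P => (1 / 2 : ℂ) • (1 + S (J P)), ?_, ?_⟩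
  · change (1 / 2 : ℂ) • (1 + S (J P₀)) = P₀
    rw [hS₀]
    module
  · filter_upwards [diff.continuous.continuousAt.eventually hS] with P ⟨hdiff, hsq, hcomm⟩
    refine ⟨((hdiff.comp P (diff P)).const_add 1).fun_const_smul _, ?_, fun B hB => ?_⟩
    · simp only [IsIdempotentElem, smul_mul_smul_comm, add_mul, mul_add, hsq, one_mul, mul_one]
      module
    · exact ((Commute.one_right B).add_right
        (hcomm B ((hB.smul_right _).sub_right (Commute.one_right B)))).smul_right _

end LocalIdempotent

section AnalyticFamily

open Polynomial

theorem differentiable_aeval {A : Type*} [NormedRing A] [NormedAlgebra ℂ A] {T : ℂ → A}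
    (hT : Differentiable ℂ T) (p : ℂ[X]) : Differentiable ℂ fun s => aeval (T s) p := by
  simp only [aeval_eq_sum_range]
  fun_prop

variable {V : Type*} [NormedAddCommGroup V] [NormedSpace ℂ V]

theorem idempotent_apply_eq_smul {E P : V →L[ℂ] V} (hE : IsIdempotentElem E) (hEP : Commute E P)
    (hnear : ‖E - P‖ < 1 / 2) {c ε : ℂ} (hε : ε = 0 ∨ ε = 1) (hc : ‖c - ε‖ < 1 / 2) {Ψ : V}
    (hP : P Ψ = c • Ψ) : E Ψ = ε • Ψ := by
  by_contra hne
  set Θ := E Ψ - ε • Ψ with hΘ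
  have E_E : E (E Ψ) = E Ψ := congrArg (fun F : V →L[ℂ] V => F Ψ) hE.eq
  have P_E : P (E Ψ) = E (P Ψ) := congrArg (fun F : V →L[ℂ] V => F Ψ) hEP.eq.symm
  have E_Θ : E Θ = (1 - ε) • Θ := by
    rcases hε with rfl | rfl <;> simp [hΘ, E_E]
  have P_Θ : P Θ = c • Θ := by
    rw [hΘ, map_sub, map_smul, P_E, hP, map_smul, smul_sub, smul_comm ε]
  have norm_le : ‖1 - ε - c‖ ≤ ‖E - P‖ := by
    refine le_of_mul_le_mul_right ?_ (norm_pos_iff.mpr (sub_ne_zero.mpr hne))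
    rw [← norm_smul, sub_smul, ← E_Θ, ← P_Θ]
    exact (E - P).le_opNorm Θ
  have one_le : 1 ≤ ‖1 - ε - c‖ + ‖c - ε‖ := by
    refine le_trans ?_ (norm_add_le _ _)
    rw [show 1 - ε - c + (c - ε) = 1 - 2 * ε by ring]
    rcases hε with rfl | rfl <;> norm_num
  linarith

variable {κ : Type*}

/-- The joint spectral curve of a one-parameter family of commuting operators. -/
def curve (H : κ → ℂ → Module.End ℂ V) : Set (ℂ × (κ → ℂ)) :=
  {x | ∃ Ψ, IsJointEigenvector (fun i => H i x.1) x.2 Ψ}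

theorem exists_mem_sphere_of_mem_curve {H : κ → ℂ → Module.End ℂ V} {x : ℂ × (κ → ℂ)}
    (hx : x ∈ curve H) :
    ∃ Ψ ∈ Metric.sphere (0 : V) 1, IsJointEigenvector (fun i => H i x.1) x.2 Ψ := by
  obtain ⟨Ψ, hΨ, h⟩ := hx
  have norm_ne : (‖Ψ‖ : ℂ)⁻¹ ≠ 0 := by simpa using hΨ
  refine ⟨(‖Ψ‖ : ℂ)⁻¹ • Ψ, ?_, smul_ne_zero norm_ne hΨ, fun i => ?_⟩
  · simp [norm_smul, hΨ]
  · rw [map_smul, h, smul_comm]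

variable [FiniteDimensional ℂ V]

local notation "Φ" => Module.End.toContinuousLinearMap V

theorem differentiable_toContinuousLinearMap {f : ℂ → Module.End ℂ V}
    (hf : ∀ x, Differentiable ℂ fun s => f s x) : Differentiable ℂ fun s => Φ (f s) :=
  (contDiff_clm_apply_iff.mpr fun x => (hf x).contDiff (n := 1)).differentiable one_ne_zero

theorem aeval_toContinuousLinearMap (T : Module.End ℂ V) (p : ℂ[X]) :
    aeval (Φ T) p = Φ (aeval T p) :=
  aeval_algHom_apply (Φ).toAlgHom T p

theorem IsJointEigenvector.norm_apply_le {H : κ → Module.End ℂ V} {v : κ → ℂ} {Ψ : V}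
    (h : IsJointEigenvector H v Ψ) (i : κ) : ‖v i‖ ≤ ‖Φ (H i)‖ := by
  refine le_of_mul_le_mul_right ?_ (norm_pos_iff.mpr h.1)
  rw [← norm_smul, ← h.2 i]
  exact (Φ (H i)).le_opNorm Ψ

variable {H : κ → ℂ → Module.End ℂ V}

theorem isClosed_setOf_forall_apply_eq_smul (hd : ∀ i x, Differentiable ℂ fun s => H i s x) :
    IsClosed {z : ℂ × (κ → ℂ) × V | ∀ i, H i z.1 z.2.2 = z.2.1 i • z.2.2} := by
  simp only [Set.ofPred_forall]
  refine isClosed_iInter fun i => ?_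
  have cont : Continuous fun z : ℂ × (κ → ℂ) × V => Φ (H i z.1) z.2.2 :=
    ((differentiable_toContinuousLinearMap (hd i)).continuous.comp continuous_fst).clm_apply
      continuous_snd.snd
  exact isClosed_eq cont (by fun_prop)

variable [Finite κ]

theorem eventually_forall_mem_curve (hd : ∀ i x, Differentiable ℂ fun s => H i s x) (s₀ : ℂ)
    {P : ℂ × (κ → ℂ) → Prop}
    (hP : ∀ v, (s₀, v) ∈ curve H → ∀ᶠ x in 𝓝[curve H] (s₀, v), P x) :
    ∀ᶠ s in 𝓝 s₀, ∀ v, (s, v) ∈ curve H → P (s, v) := by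
  have := FiniteDimensional.proper ℂ V
  cases nonempty_fintype κ
  set R : ℝ := ∑ i, ‖Φ (H i s₀)‖ + 1
  have norm_lt : ∀ᶠ s in 𝓝 s₀, ∀ i, ‖Φ (H i s)‖ < R := by
    refine eventually_all.mpr fun i => ((differentiable_toContinuousLinearMap
      (hd i)).continuous.norm.continuousAt.eventually_lt_const (lt_add_of_le_of_pos ?_ one_pos))
    exact Finset.single_le_sum (fun j _ => norm_nonneg (Φ (H j s₀))) (Finset.mem_univ i)
  have compact := (isCompact_closedBall (0 : κ → ℂ) R).prod (isCompact_sphere (0 : V) 1)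
  have of_compact := compact.eventually_forall_of_forall_eventually (x₀ := s₀)
    (P := fun s y => (∀ i, H i s y.2 = y.1 i • y.2) → P (s, y.1)) <| by
      rintro ⟨v, Ψ⟩ ⟨-, hΨ⟩
      have ne_zero : Ψ ≠ 0 := ne_zero_of_mem_unit_sphere ⟨Ψ, hΨ⟩
      by_cases hv : ∀ i, H i s₀ Ψ = v i • Ψ
      · have proj : Tendsto (fun z : ℂ × (κ → ℂ) × V => (z.1, z.2.1)) (𝓝 (s₀, v, Ψ))
            (𝓝 (s₀, v)) := Continuous.tendsto (by fun_prop) _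
        have eventually_ne : ∀ᶠ z : ℂ × (κ → ℂ) × V in 𝓝 (s₀, v, Ψ), z.2.2 ≠ 0 :=
          (Continuous.tendsto (by fun_prop) _).eventually_ne ne_zero
        filter_upwards [proj.eventually (eventually_nhdsWithin_iff.mp (hP v ⟨Ψ, ne_zero, hv⟩)),
          eventually_ne] with z hz hne hz'
        exact hz ⟨z.2.2, hne, hz'⟩
      · filter_upwards [(isClosed_setOf_forall_apply_eq_smul hd).isOpen_compl.mem_nhds hv]
          with z hz hz'
        exact absurd hz' hz
  filter_upwards [of_compact, norm_lt] with s hs hlt v hv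
  obtain ⟨Ψ, mem, h⟩ := exists_mem_sphere_of_mem_curve hv
  refine hs (v, Ψ) ⟨?_, mem⟩ h.2
  rw [mem_closedBall_zero_iff, pi_norm_le_iff_of_nonneg (by positivity)]
  exact fun i => (h.norm_apply_le i).trans (hlt i).le

theorem exists_local_projector (hd : ∀ i x, Differentiable ℂ fun s => H i s x)
    (hH : ∀ s i j, Commute (H i s) (H j s)) {e : ℂ × (κ → ℂ) → ℂ} (hec : ContinuousOn e (curve H))
    (he : ∀ x ∈ curve H, e x = 0 ∨ e x = 1) (s₀ : ℂ) :
    ∃ E : ℂ → (V →L[ℂ] V), ∀ᶠ s in 𝓝 s₀, DifferentiableAt ℂ E s ∧ IsIdempotentElem (E s) ∧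
      (∀ B, (∀ i, Commute B (Φ (H i s))) → Commute B (E s)) ∧
      ∀ v Ψ, IsJointEigenvector (fun i => H i s) v Ψ → E s Ψ = e (s, v) • Ψ := by
  cases nonempty_fintype κ
  obtain ⟨a, p, idem, hpe⟩ := exists_isIdempotentElem_aeval (hH s₀) (e := fun v => e (s₀, v))
    fun v Ψ h => he (s₀, v) ⟨Ψ, h⟩
  set P : ℂ → (V →L[ℂ] V) := fun s => aeval (∑ i, a i • Φ (H i s)) p with hP
  have P_eq : ∀ s, P s = Φ (aeval (∑ i, a i • H i s) p) := fun s => by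
    simp [hP, ← aeval_toContinuousLinearMap]
  have diff : Differentiable ℂ P := differentiable_aeval (Differentiable.fun_sum fun i _ =>
    (differentiable_toContinuousLinearMap (hd i)).fun_const_smul (a i)) p
  have commute : ∀ s B, (∀ i, Commute B (Φ (H i s))) → Commute B (P s) := fun s B hB =>
    (commute_aeval (Commute.sum_left _ _ _ fun i _ => (hB i).symm.smul_left _) p).symm
  have near : ∀ᶠ s in 𝓝 s₀, ∀ v, (s, v) ∈ curve H → ‖p.eval (a ⬝ᵥ v) - e (s, v)‖ < 1 / 2 := by
    refine eventually_forall_mem_curve hd s₀ (P := fun x => ‖p.eval (a ⬝ᵥ x.2) - e x‖ < 1 / 2)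
      fun v hv => ?_
    have cont : Continuous fun x : ℂ × (κ → ℂ) => p.eval (a ⬝ᵥ x.2) := by fun_prop
    refine (cont.continuousWithinAt.sub (hec _ hv)).norm.eventually_lt_const ?_
    obtain ⟨Ψ, hΨ⟩ := hv
    simp [hpe v Ψ hΨ]
  obtain ⟨E, E_P, hE⟩ := exists_local_retraction_idempotents (P_eq s₀ ▸ idem.map Φ)
  have close : ∀ᶠ Q in 𝓝 (P s₀), ‖E Q - Q‖ < 1 / 2 :=
    ((hE.self_of_nhds.1.continuousAt.sub continuousAt_id).norm.eventually_lt_const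
      (by simp [E_P]))
  refine ⟨fun s => E (P s), ?_⟩
  filter_upwards [near, diff.continuous.continuousAt.eventually (hE.and close)]
    with s hs ⟨⟨hdiff, hidem, hcomm⟩, hclose⟩
  refine ⟨hdiff.comp s (diff s), hidem, fun B hB => hcomm B (commute s B hB), fun v Ψ h => ?_⟩
  refine idempotent_apply_eq_smul hidem (hcomm _ (Commute.refl _)).symm hclose
    (he _ ⟨Ψ, h⟩) (hs v ⟨Ψ, h⟩) ?_
  rw [P_eq]
  exact h.aeval_apply a p

-- The local projectors are determined by their values on joint eigenvectors, hence they glue.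
theorem exists_projector (hd : ∀ i x, Differentiable ℂ fun s => H i s x)
    (hH : ∀ s i j, Commute (H i s) (H j s)) {e : ℂ × (κ → ℂ) → ℂ} (hec : ContinuousOn e (curve H))
    (he : ∀ x ∈ curve H, e x = 0 ∨ e x = 1) :
    ∃ E : ℂ → (V →L[ℂ] V), Differentiable ℂ E ∧
      ∀ s v Ψ, IsJointEigenvector (fun i => H i s) v Ψ → E s Ψ = e (s, v) • Ψ := by
  choose E hE using exists_local_projector hd hH hec he
  refine ⟨fun s => E s s, fun s₀ => ?_, fun s => (hE s).self_of_nhds.2.2.2⟩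
  refine (hE s₀).self_of_nhds.1.congr_of_eventuallyEq ?_
  filter_upwards [hE s₀] with s ⟨_, idem₀, comm₀, apply₀⟩
  obtain ⟨_, idem, comm, apply⟩ := (hE s).self_of_nhds
  have commute : ∀ i j, Commute (Φ (H i s)) (Φ (H j s)) := fun i j => (hH s i j).map Φ
  refine (Φ).symm.injective (eq_of_isIdempotentElem_of_isJointEigenvector (hH s)
    (idem.map (Φ).symm) (idem₀.map (Φ).symm) ((comm₀ _ fun i => ?_).map (Φ).symm)
    (fun i => ?_) (fun i => ?_) fun v Ψ h => ?_)
  · exact (comm _ (commute i)).symm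
  · simpa using ((comm _ (commute i)).map (Φ).symm).symm
  · simpa using ((comm₀ _ (commute i)).map (Φ).symm).symm
  · exact (apply v Ψ h).trans (apply₀ v Ψ h).symm

section SimpleSpectrum

variable {S : Type*} {l : Filter S} {T : S → (V →L[ℂ] V)} {T₀ : V →L[ℂ] V}

theorem eventually_exists_hasEigenvalue (hT : Tendsto T l (𝓝 T₀)) {μ : ℂ}
    (hμ : Module.End.HasEigenvalue (T₀ : V →ₗ[ℂ] V) μ) {δ : ℝ} (hδ : 0 < δ) :
    ∀ᶠ s in l, ∃ ν, Module.End.HasEigenvalue (T s : V →ₗ[ℂ] V) ν ∧ ‖μ - ν‖ < δ := by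
  have eval_charpoly : ∀ A : V →L[ℂ] V, (A : V →ₗ[ℂ] V).charpoly.eval μ =
      (algebraMap ℂ (V →L[ℂ] V) μ - A).det := fun A => LinearMap.eval_charpoly _ _
  have tendsto : Tendsto (fun s => ‖(T s : V →ₗ[ℂ] V).charpoly.eval μ‖) l (𝓝 0) := by
    have root : (T₀ : V →ₗ[ℂ] V).charpoly.eval μ = 0 :=
      (Module.End.hasEigenvalue_iff_isRoot_charpoly _ _).mp hμ
    rw [← norm_zero (E := ℂ), ← root]
    simp only [eval_charpoly]
    exact ((ContinuousLinearMap.continuous_det.tendsto _).comp (tendsto_const_nhds.sub hT)).norm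
  filter_upwards [tendsto.eventually_lt_const (pow_pos hδ (Module.finrank ℂ V))] with s hs
  by_contra! far
  refine not_le_of_gt hs ?_
  have splits := IsAlgClosed.splits (T s : V →ₗ[ℂ] V).charpoly
  rw [splits.eval_eq_prod_roots_of_monic (LinearMap.charpoly_monic _),
    ← LinearMap.charpoly_natDegree (T s : V →ₗ[ℂ] V), splits.natDegree_eq_card_roots,
    ← Multiset.prod_replicate, ← Multiset.map_const']
  refine le_of_le_of_eq ?_ (map_multiset_prod (normHom : ℂ →*₀ ℝ) _).symm
  rw [Multiset.map_map]
  refine Multiset.prod_map_le_prod_map₀ _ _ (fun _ _ => hδ.le) fun ν hν => far ν ?_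
  exact (Module.End.hasEigenvalue_iff_isRoot_charpoly _ _).mpr (isRoot_of_mem_roots hν)

theorem eventually_injective {J X : Type*} [Finite J] [TopologicalSpace X] [T2Space X] {μ : J → X}
    (hμ : Function.Injective μ) : ∀ᶠ ν in 𝓝 μ, Function.Injective ν := by
  have ne : ∀ᶠ ν in 𝓝 μ, ∀ i j, i ≠ j → ν i ≠ ν j := by
    refine eventually_all.mpr fun i => eventually_all.mpr fun j =>
      eventually_imp_distrib_left.mpr fun hij => ?_
    exact ((continuous_apply i).continuousAt.ne_iff_eventually_ne
      (continuous_apply j).continuousAt).mp (hμ.ne hij)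
  exact ne.mono fun ν hν i j => not_imp_not.mp (hν i j)

variable {J : Type*} [Fintype J]

theorem continuousAt_aeval_lagrangeBasis [DecidableEq J] {A : Type*} [NormedRing A]
    [NormedAlgebra ℂ A] {μ : J → ℂ} (hμ : Function.Injective μ) (x : A) (j : J) :
    ContinuousAt (fun z : (J → ℂ) × A => aeval z.2 (Lagrange.basis Finset.univ z.1 j)) (μ, x) := by
  have expand : ∀ z : (J → ℂ) × A, aeval z.2 (Lagrange.basis Finset.univ z.1 j) =
      ((Finset.univ.erase j).toList.map fun i =>
        aeval z.2 (Lagrange.basisDivisor (z.1 j) (z.1 i))).prod := fun z => by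
    rw [Lagrange.basis, ← Finset.prod_map_toList, map_list_prod, List.map_map]
    rfl
  simp only [expand]
  refine tendsto_list_prod _ fun i hi => ?_
  have ne : μ j - μ i ≠ 0 := sub_ne_zero.mpr (hμ.ne (by simpa [eq_comm] using hi))
  have cont : ContinuousAt (fun z : (J → ℂ) × A => (z.1 j - z.1 i)⁻¹) (μ, x) :=
    ContinuousAt.inv₀ (by fun_prop) ne
  have cont_sub : ContinuousAt (fun z : (J → ℂ) × A => z.2 - algebraMap ℂ A (z.1 i)) (μ, x) := by
    fun_prop
  simpa [Lagrange.basisDivisor, Algebra.smul_def, ContinuousAt] using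
    cont.tendsto.smul cont_sub.tendsto

theorem exists_bound_of_simple_spectrum {E : S → (V →L[ℂ] V)} (hT : Tendsto T l (𝓝 T₀))
    {μ : J → ℂ} (hJ : Fintype.card J = Module.finrank ℂ V) (hμ : Function.Injective μ)
    (hT₀ : ∀ j, Module.End.HasEigenvalue (T₀ : V →ₗ[ℂ] V) (μ j))
    (hE : ∀ᶠ s in l, ∀ ν, Module.End.HasEigenvalue (T s : V →ₗ[ℂ] V) ν →
      ∃ Ψ, Module.End.HasEigenvector (T s : V →ₗ[ℂ] V) ν Ψ ∧ (E s Ψ = 0 ∨ E s Ψ = Ψ)) :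
    ∃ C, ∀ᶠ s in l, ‖E s‖ ≤ C := by
  classical
  have bound : ∀ᶠ z in 𝓝 (μ, T₀), Function.Injective z.1 ∧ ∀ j,
      ‖aeval z.2 (Lagrange.basis Finset.univ z.1 j)‖ <
        ‖aeval T₀ (Lagrange.basis Finset.univ μ j)‖ + 1 := by
    refine (continuousAt_fst.eventually (eventually_injective hμ)).and
      (eventually_all.mpr fun j => ?_)
    exact (continuousAt_aeval_lagrangeBasis hμ T₀ j).norm.eventually_lt_const (lt_add_one _)
  rw [nhds_prod_eq, eventually_prod_iff] at bound
  obtain ⟨p, hp, q, hq, hpq⟩ := bound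
  obtain ⟨δ, hδ, hball⟩ := Metric.eventually_nhds_iff.mp hp
  refine ⟨∑ j, 1 * (‖aeval T₀ (Lagrange.basis Finset.univ μ j)‖ + 1), ?_⟩
  filter_upwards [hE, hT.eventually hq, eventually_all.mpr fun j =>
    eventually_exists_hasEigenvalue hT (hT₀ j) hδ] with s hEs hqs near
  choose ν hν hνμ using near
  obtain ⟨inj, lt⟩ := hpq (hball (y := ν) ((dist_pi_lt_iff hδ).mpr fun j => by
    rw [dist_comm, dist_eq_norm]; exact hνμ j)) hqs
  choose Ψ hΨ hEΨ using fun j => hEs (ν j) (hν j)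
  have scalar : ∀ j, ∃ ε : ℂ, ‖ε‖ ≤ 1 ∧ E s (Ψ j) = ε • Ψ j := fun j => by
    rcases hEΨ j with h | h
    · exact ⟨0, by simp, by simp [h]⟩
    · exact ⟨1, by simp, by simp [h]⟩
  choose ε hε hEε using scalar
  have expand : E s = ∑ j, ε j • aeval (T s) (Lagrange.basis Finset.univ ν j) := by
    have := congrArg Φ (eq_sum_smul_aeval_lagrangeBasis hJ inj (E := (E s : V →ₗ[ℂ] V)) hΨ hEε)
    simp only [map_sum, map_smul, ← aeval_toContinuousLinearMap] at this
    exact this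
  rw [expand]
  refine norm_sum_le_of_le _ fun j _ => ?_
  rw [norm_smul]
  exact mul_le_mul (hε j) (lt j).le (norm_nonneg _) zero_le_one

end SimpleSpectrum

end AnalyticFamily

namespace SymTensor

open scoped Matrix

section Weight

variable {m r : ℕ}

/-- The weight of the monomial `∏ z ^ a`, namely the sum of its exponents. -/
def weight (ν : Sym (Fin (m + 1)) r) : ℕ := (ν.1.map fun a : Fin (m + 1) => (a : ℕ)).sum

theorem weight_cons (a : Fin (m + 1)) (μ : Sym (Fin (m + 1)) r) :
    weight (a ::ₛ μ) = a + weight μ := by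
  simp [weight, Sym.coe_cons, Multiset.map_cons, Multiset.sum_cons]

theorem weight_le (ν : Sym (Fin (m + 1)) r) : weight ν ≤ r * m := by
  have := Multiset.sum_le_card_nsmul (ν.1.map fun a : Fin (m + 1) => (a : ℕ)) m fun x hx => by
    obtain ⟨a, -, rfl⟩ := Multiset.mem_map.mp hx
    exact Fin.is_le a
  simpa [weight] using this

theorem weight_replicate_last : weight (Sym.replicate r (Fin.last m)) = r * m := by
  simp [weight, Sym.replicate]

theorem eq_replicate_of_weight_eq {ν : Sym (Fin (m + 1)) r} (h : weight ν = r * m) :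
    ν = Sym.replicate r (Fin.last m) := by
  induction r with
  | zero => exact Subsingleton.elim _ _
  | succ r ih =>
    obtain ⟨a, μ, rfl⟩ := Sym.exists_eq_cons_of_succ ν
    rw [weight_cons, add_one_mul] at h
    have μ_le := weight_le μ
    have a_eq : a = Fin.last m := Fin.ext (le_antisymm (Fin.is_le a) (by rw [Fin.val_last]; omega))
    rw [ih (ν := μ) (by omega), a_eq, Sym.replicate_succ]

end Weight

section Dilation

variable {F : Type*} [Field F] {m r k : ℕ} {s t : F}

/-- The action on polynomials in several variables of the dilation of all variables by `t`. -/
def dil (t : F) : SymTensor F (Fin (m + 1)) r →ₗ[F] SymTensor F (Fin (m + 1)) r :=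
  LinearMap.pi fun ν => t ^ weight ν • LinearMap.proj ν

theorem dil_apply (t : F) (Ψ : SymTensor F (Fin (m + 1)) r) (ν : Sym (Fin (m + 1)) r) :
    dil t Ψ ν = t ^ weight ν * Ψ ν := rfl

theorem dil_dil (h : s * t = 1) (Ψ : SymTensor F (Fin (m + 1)) r) : dil s (dil t Ψ) = Ψ := by
  ext ν
  rw [dil_apply, dil_apply, ← mul_assoc, ← mul_pow, h, one_pow, one_mul]

theorem dil_single (t : F) (ν : Sym (Fin (m + 1)) r) :
    dil t (Pi.single ν 1) = t ^ weight ν • (Pi.single ν 1 : SymTensor F (Fin (m + 1)) r) := by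
  ext ν'
  obtain rfl | h := eq_or_ne ν' ν
  · rfl
  · simp [dil_apply, Pi.single_eq_of_ne h]

theorem contract_dil (w : Fin (m + 1) → F) (t : F) (Ψ : SymTensor F (Fin (m + 1)) (r + 1)) :
    contract w (dil t Ψ) = dil t (contract (fun b => w b * t ^ (b : ℕ)) Ψ) := by
  ext μ
  simp only [contract_apply, dil_apply, weight_cons, Finset.mul_sum]
  exact Finset.sum_congr rfl fun a _ => by ring

/-- The matrix `N` in the dilated variable, normalised so that the top power `z ^ (k + 1)` keeps
its coefficient when `s * t = 1`. -/
def dilMatrix (s t : F) (N : Matrix (Fin (m + k + 1)) (Fin (m + 1)) F) :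
    Matrix (Fin (m + k + 1)) (Fin (m + 1)) F :=
  Matrix.of fun a b => t ^ (k + 1) * s ^ (a : ℕ) * N a b * t ^ (b : ℕ)

theorem moment_vecMul_dilMatrix (h : s * t = 1) (N : Matrix (Fin (m + k + 1)) (Fin (m + 1)) F)
    (x : F) : moment (m + k) (x * t) ᵥ* dilMatrix s t N =
      t ^ (k + 1) • fun b => (moment (m + k) x ᵥ* N) b * t ^ (b : ℕ) := by
  ext b
  simp only [Matrix.vecMul, dotProduct, moment, dilMatrix, Matrix.of_apply, Pi.smul_apply,
    smul_eq_mul, Finset.sum_mul, Finset.mul_sum]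
  refine Finset.sum_congr rfl fun a _ => ?_
  have pow_mul_pow : s ^ (a : ℕ) * t ^ (a : ℕ) = 1 := by rw [← mul_pow, h, one_pow]
  linear_combination (x ^ (a : ℕ) * t ^ (k + 1) * N a b * t ^ (b : ℕ)) * pow_mul_pow

variable [Infinite F]

theorem jointOp_dil (h : s * t = 1) (N : Matrix (Fin (m + k + 1)) (Fin (m + 1)) F)
    (Ψ : SymTensor F (Fin (m + 1)) (k + 1)) (i : Fin (k + 1)) :
    jointOp m k i N (dil t Ψ) =
      s ^ (k + 1 - i : ℕ) • dil t (jointOp m k i (dilMatrix s t N) Ψ) := by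
  refine jointOp_eq_of_sum_contract (Φ := fun i : Fin (k + 1) =>
    s ^ (k + 1 - i : ℕ) • dil t (jointOp m k i (dilMatrix s t N) Ψ))
    (Eventually.of_forall fun x => ?_) i
  have pow_mul_pow (j : ℕ) : s ^ j * t ^ j = 1 := by rw [← mul_pow, h, one_pow]
  have moment_dil : (fun b : Fin (m + 1) => moment m x b * t ^ (b : ℕ)) = moment m (x * t) :=
    funext fun b => (mul_pow x t b).symm
  have coeff (i : Fin (k + 1)) :
      x ^ (i : ℕ) * s ^ (k + 1 - i : ℕ) = s ^ (k + 1) * (x * t) ^ (i : ℕ) := by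
    have split : s ^ (k + 1) = s ^ (k + 1 - i : ℕ) * s ^ (i : ℕ) := by
      rw [← pow_add, Nat.sub_add_cancel i.2.le]
    rw [split, mul_pow]
    linear_combination -(s ^ (k + 1 - i : ℕ) * x ^ (i : ℕ)) * pow_mul_pow i
  calc ∑ i : Fin (k + 1), x ^ (i : ℕ) • contract (moment m x)
        (s ^ (k + 1 - i : ℕ) • dil t (jointOp m k i (dilMatrix s t N) Ψ))
      = s ^ (k + 1) • dil t (∑ i : Fin (k + 1), (x * t) ^ (i : ℕ) •
          contract (moment m (x * t)) (jointOp m k i (dilMatrix s t N) Ψ)) := by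
        simp only [map_smul, contract_dil, moment_dil, smul_smul, coeff, map_sum, Finset.smul_sum]
    _ = contract (moment (m + k) x ᵥ* N) (dil t Ψ) := by
        rw [sum_contract_moment_jointOp, moment_vecMul_dilMatrix h, map_smul, contract_dil,
          LinearMap.smul_apply, map_smul, smul_smul, pow_mul_pow, one_smul]

theorem isJointEigenvector_dil_inv {N : Matrix (Fin (m + k + 1)) (Fin (m + 1)) F} (hs : s ≠ 0)
    {v : Fin (k + 1) → F} {Ψ : SymTensor F (Fin (m + 1)) (k + 1)}
    (h : IsJointEigenvector (fun i => jointOp m k i (dilMatrix s s⁻¹ N)) v Ψ) :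
    IsJointEigenvector (fun i => jointOp m k i N) (fun i => s ^ (k + 1 - i : ℕ) * v i)
      (dil s⁻¹ Ψ) := by
  have mul_inv : s * s⁻¹ = 1 := mul_inv_cancel₀ hs
  refine ⟨fun h₀ => h.1 ?_, fun i => ?_⟩
  · rw [← dil_dil mul_inv Ψ, h₀, map_zero]
  · rw [jointOp_dil mul_inv, h.2, map_smul, smul_smul]

end Dilation

section PencilCurve

variable {m k : ℕ} {F : Type*} [Field F]

theorem power_ne_zero {ι : Type*} {q : ι → F} (hq : q ≠ 0) (r : ℕ) : power r q ≠ 0 := by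
  obtain ⟨a, ha⟩ := Function.ne_iff.mp hq
  intro h
  have := congrFun h (Sym.replicate r a)
  rw [power_replicate] at this
  exact pow_ne_zero r ha this

theorem IsPencilEigenvector.isJointEigenvector_power [Infinite F]
    {N : Matrix (Fin (m + k + 1)) (Fin (m + 1)) F} {u : Fin (k + 1) → F} {q : Fin (m + 1) → F}
    (h : IsPencilEigenvector N u q) :
    IsJointEigenvector (fun i => jointOp m k i N) u (power (k + 1) q) :=
  ⟨power_ne_zero h.1 _, h.jointOp_power⟩

/-- The matrix `N` has as many pencil eigenvalues as the space of symmetric tensors, on which the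
joint operators act, has dimensions. -/
def HasSimpleSpectrum (N : Matrix (Fin (m + k + 1)) (Fin (m + 1)) F) : Prop :=
  ∃ U : Finset (Fin (k + 1) → F), U.card = (m + k + 1).choose (k + 1) ∧
    ∀ u ∈ U, ∃ q, IsPencilEigenvector N u q

/-- The curve of pencil eigenvalues of a one-parameter family of matrices. -/
def pencilCurve (N : F → Matrix (Fin (m + k + 1)) (Fin (m + 1)) F) : Set (F × (Fin (k + 1) → F)) :=
  {x | ∃ q, IsPencilEigenvector (N x.1) x.2 q}

theorem curve_jointOp (N : ℂ → Matrix (Fin (m + k + 1)) (Fin (m + 1)) ℂ) :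
    curve (fun i s => jointOp m k i (N s)) = pencilCurve N :=
  Set.ext fun _ => ⟨fun ⟨_, hΨ, h⟩ => exists_isPencilEigenvector_of_jointOp hΨ h,
    fun ⟨_, h⟩ => ⟨_, h.isJointEigenvector_power⟩⟩

theorem differentiable_jointOp {N : ℂ → Matrix (Fin (m + k + 1)) (Fin (m + 1)) ℂ}
    (hN : ∀ a b, Differentiable ℂ fun s => N s a b) (i : Fin (k + 1))
    (Ψ : SymTensor ℂ (Fin (m + 1)) (k + 1)) :
    Differentiable ℂ fun s => jointOp m k i (N s) Ψ := by
  have expand : ∀ s, jointOp m k i (N s) Ψ =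
      ∑ a, ∑ b, N s a b • jointOp m k i (Matrix.single a b 1) Ψ := fun s => by
    conv_lhs => rw [Matrix.matrix_eq_sum_single (N s)]
    simp only [map_sum, LinearMap.sum_apply]
    refine Finset.sum_congr rfl fun a _ => Finset.sum_congr rfl fun b _ => ?_
    rw [← LinearMap.smul_apply, ← map_smul, Matrix.smul_single, smul_eq_mul, mul_one]
  simp only [expand]
  exact Differentiable.fun_sum fun a _ => Differentiable.fun_sum fun b _ =>
    (hN a b).smul_const _

variable {N : ℂ → Matrix (Fin (m + k + 1)) (Fin (m + 1)) ℂ}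
  {N₀ : Matrix (Fin (m + k + 1)) (Fin (m + 1)) ℂ}
  {E : ℂ → (SymTensor ℂ (Fin (m + 1)) (k + 1) →L[ℂ] SymTensor ℂ (Fin (m + 1)) (k + 1))}

/-- The linear combination of the joint operators with coefficients `a`. -/
noncomputable def combinedOp (a : Fin (k + 1) → F) [Infinite F] :
    Matrix (Fin (m + k + 1)) (Fin (m + 1)) F →ₗ[F]
      Module.End F (SymTensor F (Fin (m + 1)) (k + 1)) :=
  ∑ i, a i • jointOp m k i

theorem combinedOp_apply [Infinite F] (a : Fin (k + 1) → F)
    (M : Matrix (Fin (m + k + 1)) (Fin (m + 1)) F) :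
    combinedOp a M = ∑ i, a i • jointOp m k i M := by
  simp only [combinedOp, LinearMap.sum_apply, LinearMap.smul_apply]

theorem exists_isJointEigenvector_of_hasEigenvalue_combinedOp [IsAlgClosed F] [CharZero F]
    {a : Fin (k + 1) → F} {M : Matrix (Fin (m + k + 1)) (Fin (m + 1)) F} {μ : F}
    (hμ : (combinedOp a M).HasEigenvalue μ) :
    ∃ v Ψ, combinedOp a M Ψ = μ • Ψ ∧ IsJointEigenvector (fun i => jointOp m k i M) v Ψ := by
  refine exists_isJointEigenvector_of_hasEigenvalue (fun i j => jointOp_commute M i j)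
    (fun i => ?_) hμ
  rw [combinedOp_apply]
  exact Commute.sum_left _ _ _ fun j _ => (jointOp_commute M j i).smul_left _

theorem exists_bound_dil
    (hN₀ : Tendsto (fun s => dilMatrix s s⁻¹ (N s)) (Bornology.cobounded ℂ) (𝓝 N₀))
    (hsimple : HasSimpleSpectrum N₀)
    (hE : ∀ s v Ψ, IsJointEigenvector (fun i => jointOp m k i (N s)) v Ψ →
      E s Ψ = 0 ∨ E s Ψ = Ψ) :
    ∃ C, ∀ᶠ s in Bornology.cobounded ℂ, ∀ Ψ, ‖dil s (E s (dil s⁻¹ Ψ))‖ ≤ C * ‖Ψ‖ := by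
  classical
  obtain ⟨U, card_U, hU⟩ := hsimple
  obtain ⟨φ, hφ⟩ := exists_dual_injOn (F := ℂ) U.finite_toSet
  obtain ⟨a, rfl⟩ := (dotProductEquiv ℂ (Fin (k + 1))).surjective φ
  let Φ : Module.End ℂ (SymTensor ℂ (Fin (m + 1)) (k + 1)) ≃ₐ[ℂ] _ :=
    Module.End.toContinuousLinearMap (SymTensor ℂ (Fin (m + 1)) (k + 1))
  have cont : Continuous fun M : Matrix (Fin (m + k + 1)) (Fin (m + 1)) ℂ =>
      Φ (combinedOp a M) :=
    (Φ.toLinearMap.comp (combinedOp a)).continuous_of_finiteDimensional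
  suffices ∃ C, ∀ᶠ s in Bornology.cobounded ℂ, ‖Φ (dil s) * E s * Φ (dil s⁻¹)‖ ≤ C by
    obtain ⟨C, hC⟩ := this
    exact ⟨C, hC.mono fun s hs => (Φ (dil s) * E s * Φ (dil s⁻¹)).le_of_opNorm_le hs⟩
  refine exists_bound_of_simple_spectrum (J := U) (μ := fun u => a ⬝ᵥ u.1)
    (T := fun s => Φ (combinedOp a (dilMatrix s s⁻¹ (N s)))) ((cont.tendsto N₀).comp hN₀)
    ?_ hφ.injective (fun u => ?_) ?_
  · rw [Fintype.card_coe, card_U, Module.finrank_fintype_fun_eq_card, card_sym_fin_succ, add_assoc]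
  · obtain ⟨q, hq⟩ := hU u u.2
    have := hq.isJointEigenvector_power
    refine Module.End.hasEigenvalue_of_hasEigenvector
      ⟨Module.End.mem_eigenspace_iff.mpr ?_, this.1⟩
    change combinedOp a N₀ _ = _
    rw [combinedOp_apply]
    exact this.sum_smul_apply a
  · filter_upwards [Bornology.eventually_ne_cobounded (0 : ℂ)] with s hs ν hν
    obtain ⟨v, Ψ, hΨ, h⟩ := exists_isJointEigenvector_of_hasEigenvalue_combinedOp hν
    refine ⟨Ψ, ⟨Module.End.mem_eigenspace_iff.mpr hΨ, h.1⟩, ?_⟩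
    change dil s (E s (dil s⁻¹ Ψ)) = 0 ∨ dil s (E s (dil s⁻¹ Ψ)) = Ψ
    refine (hE s _ _ (isJointEigenvector_dil_inv hs h)).imp (fun h₀ => ?_) fun h₁ => ?_
    · rw [h₀, map_zero]
    · rw [h₁, dil_dil (mul_inv_cancel₀ hs)]

theorem exists_const_of_bound {f : ℂ → ℂ} (hf : Differentiable ℂ f) {C : ℝ}
    (h : ∀ᶠ s in Bornology.cobounded ℂ, ‖f s‖ ≤ C) : ∃ c, ∀ s, f s = c := by
  refine hf.exists_const_forall_eq_of_bounded ?_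
  obtain ⟨R, -, hR⟩ := (Filter.hasBasis_cobounded_norm (E := ℂ)).eventually_iff.mp h
  obtain ⟨C', hC'⟩ :=
    ((isCompact_closedBall (0 : ℂ) R).image hf.continuous).isBounded.exists_norm_le
  refine isBounded_iff_forall_norm_le.mpr ⟨max C C', ?_⟩
  rintro _ ⟨s, rfl⟩
  rcases le_total R ‖s‖ with hs | hs
  · exact (hR hs).trans (le_max_left _ _)
  · exact (hC' _ ⟨s, by simpa using hs, rfl⟩).trans (le_max_right _ _)

theorem norm_topEntry_le {A : SymTensor ℂ (Fin (m + 1)) r →L[ℂ] SymTensor ℂ (Fin (m + 1)) r}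
    {C : ℝ} {s : ℂ} (hs : s ≠ 0) (h : ∀ Ψ, ‖dil s (A (dil s⁻¹ Ψ))‖ ≤ C * ‖Ψ‖)
    (ν : Sym (Fin (m + 1)) r) :
    ‖A (Pi.single ν 1) (Sym.replicate r (Fin.last m))‖ ≤ C * ‖s‖⁻¹ ^ (r * m - weight ν) := by
  have le_C := (norm_le_pi_norm _ (Sym.replicate r (Fin.last m))).trans (h (Pi.single ν 1))
  rw [dil_apply, weight_replicate_last, dil_single, map_smul, Pi.smul_apply, smul_eq_mul,
    Pi.norm_single, norm_one, mul_one, ← mul_assoc, norm_mul, inv_pow,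
    ← pow_sub₀ s hs (weight_le ν), norm_pow] at le_C
  rwa [inv_pow, ← div_eq_mul_inv, le_div_iff₀ (by positivity), mul_comm]

theorem exists_topCoord_eq_smul (hEd : Differentiable ℂ E) {C : ℝ}
    (hC : ∀ᶠ s in Bornology.cobounded ℂ, ∀ Ψ, ‖dil s (E s (dil s⁻¹ Ψ))‖ ≤ C * ‖Ψ‖) :
    ∃ c, ∀ s Ψ, E s Ψ (Sym.replicate (k + 1) (Fin.last m)) =
      c * Ψ (Sym.replicate (k + 1) (Fin.last m)) := by
  set ν₀ : Sym (Fin (m + 1)) (k + 1) := Sym.replicate (k + 1) (Fin.last m)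
  have diff : ∀ ν, Differentiable ℂ fun s => E s (Pi.single ν 1) ν₀ := fun ν =>
    differentiable_pi.mp (hEd.clm_apply (differentiable_const _)) ν₀
  have bound (ν : Sym (Fin (m + 1)) (k + 1)) : ∀ᶠ s in Bornology.cobounded ℂ,
      ‖E s (Pi.single ν 1) ν₀‖ ≤ C * ‖s‖⁻¹ ^ ((k + 1) * m - weight ν) := by
    filter_upwards [hC, Bornology.eventually_ne_cobounded (0 : ℂ)] with s hs s_ne
    exact norm_topEntry_le s_ne hs ν
  have offdiag : ∀ ν ≠ ν₀, ∀ s, E s (Pi.single ν 1) ν₀ = 0 := fun ν hν s => by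
    refine (diff ν).apply_eq_of_tendsto_cocompact s ?_
    rw [← Metric.cobounded_eq_cocompact]
    refine squeeze_zero_norm' (bound ν) ?_
    have weight_lt : (k + 1) * m - weight ν ≠ 0 := fun h =>
      hν (eq_replicate_of_weight_eq ((weight_le ν).antisymm (Nat.sub_eq_zero_iff_le.mp h)))
    have := ((tendsto_inv_atTop_zero.comp (tendsto_norm_cobounded_atTop (E := ℂ))).pow
      ((k + 1) * m - weight ν)).const_mul C
    rwa [zero_pow weight_lt, mul_zero] at this
  obtain ⟨c, diag⟩ := exists_const_of_bound (diff ν₀) ((bound ν₀).mono fun s hs => by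
    rwa [weight_replicate_last, Nat.sub_self, pow_zero, mul_one] at hs)
  refine ⟨c, fun s Ψ => ?_⟩
  conv_lhs => rw [pi_eq_sum_univ' Ψ, map_sum, Finset.sum_apply]
  rw [Finset.sum_eq_single_of_mem ν₀ (Finset.mem_univ _) fun ν _ hν => by
    rw [map_smul, Pi.smul_apply, offdiag ν hν, smul_zero], map_smul, Pi.smul_apply, diag,
    smul_eq_mul, mul_comm]

/- A locally constant `{0, 1}`-valued function `e` on the curve is the eigenvalue of an entire
family of projectors. As the dilated family stays bounded at infinity, by Liouville's theorem the
projectors multiply the top coordinate by a constant, and no pencil eigenvector has a vanishing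
top coordinate. -/
theorem isPreconnected_pencilCurve (hN : ∀ a b, Differentiable ℂ fun s => N s a b)
    (hlast : ∀ s u q, IsPencilEigenvector (N s) u q → q (Fin.last m) ≠ 0)
    (hN₀ : Tendsto (fun s => dilMatrix s s⁻¹ (N s)) (Bornology.cobounded ℂ) (𝓝 N₀))
    (hsimple : HasSimpleSpectrum N₀) : IsPreconnected (pencilCurve N) := by
  refine isPreconnected_of_forall_constant fun f hf => ?_
  let e : ℂ × (Fin (k + 1) → ℂ) → ℂ := fun x => if f x then 1 else 0
  have e_cont : ContinuousOn e (pencilCurve N) :=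
    (continuous_of_discreteTopology
      (f := fun b : Bool => if b then (1 : ℂ) else 0)).comp_continuousOn hf
  have e_eq (x) : e x = 0 ∨ e x = 1 := by
    cases h : f x <;> simp [e, h]
  have f_eq (x y) (h : e x = e y) : f x = f y := by
    cases hx : f x <;> cases hy : f y <;> simp [e, hx, hy] at h ⊢
  obtain ⟨E, E_diff, hE⟩ := exists_projector (differentiable_jointOp hN)
    (fun s => jointOp_commute (N s)) (curve_jointOp N ▸ e_cont) fun x _ => e_eq x
  obtain ⟨C, hC⟩ := exists_bound_dil hN₀ hsimple (E := E) fun s v Ψ h =>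
    (e_eq (s, v)).imp (fun h₀ => by rw [hE s v Ψ h, h₀, zero_smul])
      fun h₁ => by rw [hE s v Ψ h, h₁, one_smul]
  obtain ⟨c, hc⟩ := exists_topCoord_eq_smul E_diff hC
  have e_eq_c : ∀ x ∈ pencilCurve N, e x = c := by
    rintro ⟨s, v⟩ ⟨q, hq⟩
    have top_ne := pow_ne_zero (k + 1) (hlast s v q hq)
    rw [← power_replicate] at top_ne
    have := hc s (power (k + 1) q)
    rw [hE s v _ hq.isJointEigenvector_power] at this
    exact mul_right_cancel₀ top_ne this
  exact fun x hx y hy => f_eq x y ((e_eq_c x hx).trans (e_eq_c y hy).symm)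

end PencilCurve

end SymTensor

section DiffOp

open Polynomial

section RootPoly

variable {R : Type*} [CommRing R] {n : ℕ}

/-- The monic polynomial with given roots. -/
noncomputable def rootPoly (γ : Fin n → R) : R[X] := ∏ i, (X - C (γ i))

theorem rootPoly_monic (γ : Fin n → R) : (rootPoly γ).Monic :=
  monic_prod_X_sub_C γ Finset.univ

theorem natDegree_rootPoly [Nontrivial R] (γ : Fin n → R) : (rootPoly γ).natDegree = n := by
  rw [rootPoly, natDegree_prod_of_monic _ _ fun i _ => monic_X_sub_C (γ i)]
  simp

theorem rootPoly_smul_comp (s : R) (γ : Fin n → R) :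
    (rootPoly (s • γ)).comp (C s * X) = C (s ^ n) * rootPoly γ := by
  have factor (i : Fin n) : (X - C ((s • γ) i)).comp (C s * X) = C s * (X - C (γ i)) := by
    rw [sub_comp, X_comp, C_comp, Pi.smul_apply, smul_eq_mul, C_mul, mul_sub]
  simp only [rootPoly, prod_comp, factor, Finset.prod_mul_distrib, Finset.prod_const,
    Finset.card_univ, Fintype.card_fin, C_pow]

theorem differentiable_coeff_rootPoly (c : ℕ) :
    Differentiable ℂ fun γ : Fin n → ℂ => (rootPoly γ).coeff c := by
  unfold rootPoly
  induction Finset.univ (α := Fin n) using Finset.induction_on generalizing c with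
  | empty => simp
  | insert a s ha ih =>
    simp only [Finset.prod_insert ha, coeff_mul, coeff_sub, coeff_X, coeff_C]
    refine Differentiable.fun_sum fun x _ => Differentiable.fun_mul ?_ (ih x.2)
    split_ifs <;> fun_prop

end RootPoly

section Degree

variable {R : Type*} [CommRing R] {K m : ℕ} {ε : R} {b Q : R[X]}

/-- The operator `ε Q'' - 2 b Q' + 2 m z ^ K Q` on polynomials. When `b` is monic of degree `K + 1`,
the coefficient `2 m` makes it lower the expected degree of polynomials of degree `m`. -/
noncomputable def diffOp (K m : ℕ) (ε : R) (b : R[X]) : R[X] →ₗ[R] R[X] where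
  toFun Q := C ε * derivative (derivative Q) - 2 * b * derivative Q + C (2 * m : R) * (X ^ K * Q)
  map_add' Q R := by
    simp only [derivative_add]
    ring
  map_smul' c Q := by
    simp only [smul_eq_C_mul, RingHom.id_apply, derivative_C_mul]
    ring

theorem diffOp_apply (K m : ℕ) (ε : R) (b Q : R[X]) : diffOp K m ε b Q =
    C ε * derivative (derivative Q) - 2 * b * derivative Q + C (2 * m : R) * (X ^ K * Q) := rfl

theorem diffOp_comp {s t : R} (h : s * t = 1) (m : ℕ) (ε : R) (γ : Fin (K + 1) → R)
    (Q : R[X]) : (diffOp K m ε (rootPoly (s • γ)) Q).comp (C s * X) =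
      C (s ^ K) * diffOp K m (ε * t ^ (K + 2)) (rootPoly γ) (Q.comp (C s * X)) := by
  have pow_mul_pow : C s ^ (K + 2) * C t ^ (K + 2) = (1 : R[X]) := by
    rw [← mul_pow, ← C_mul, h, C_1, one_pow]
  simp only [diffOp_apply, derivative_comp, derivative_mul, derivative_C, derivative_X, sub_comp,
    add_comp, mul_comp, rootPoly_smul_comp, C_comp, pow_comp, X_comp, ofNat_comp, C_mul, C_pow,
    zero_mul, zero_add, mul_one]
  linear_combination -C ε * (derivative (derivative Q)).comp (C s * X) * pow_mul_pow

theorem coeff_mul_derivative_of_natDegree_le (hb : b.Monic) (hK : b.natDegree = K + 1) {j : ℕ}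
    (hQ : Q.natDegree ≤ j) : (b * derivative Q).coeff (j + K) = j * Q.coeff j := by
  cases j with
  | zero =>
    rw [eq_C_of_natDegree_le_zero hQ]
    simp
  | succ j =>
    have deg : (derivative Q).natDegree ≤ j := (natDegree_derivative_le Q).trans (by omega)
    rw [show j + 1 + K = K + 1 + j by ring, coeff_mul_add_eq_of_natDegree_le hK.le deg, ← hK,
      hb.coeff_natDegree, coeff_derivative]
    push_cast
    ring

theorem coeff_derivative_derivative_eq_zero {j a : ℕ} (hQ : Q.natDegree ≤ j) (ha : j ≤ a) :
    (derivative (derivative Q)).coeff a = 0 := by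
  rw [coeff_derivative, coeff_derivative, coeff_eq_zero_of_natDegree_lt (by omega), zero_mul,
    zero_mul]

theorem coeff_diffOp (a : ℕ) : (diffOp K m ε b Q).coeff a =
    ε * (derivative (derivative Q)).coeff a - 2 * (b * derivative Q).coeff a +
      2 * m * (X ^ K * Q).coeff a := by
  rw [diffOp_apply, mul_assoc, show (2 : R[X]) = C 2 from rfl]
  simp only [coeff_add, coeff_sub, coeff_C_mul]

theorem coeff_diffOp_of_natDegree_le (hb : b.Monic) (hK : b.natDegree = K + 1) {j : ℕ}
    (hQ : Q.natDegree ≤ j) :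
    (diffOp K m ε b Q).coeff (j + K) = (2 * m - 2 * j) * Q.coeff j := by
  rw [coeff_diffOp, coeff_derivative_derivative_eq_zero hQ (Nat.le_add_right j K),
    coeff_mul_derivative_of_natDegree_le hb hK hQ, coeff_X_pow_mul]
  ring

theorem natDegree_diffOp_le (hK : b.natDegree ≤ K + 1) {j : ℕ} (hQ : Q.natDegree ≤ j) :
    (diffOp K m ε b Q).natDegree ≤ j + K := by
  refine natDegree_le_iff_coeff_eq_zero.mpr fun a ha => ?_
  have mul_derivative : (b * derivative Q).coeff a = 0 := by
    cases j with
    | zero =>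
      rw [eq_C_of_natDegree_le_zero hQ]
      simp
    | succ j =>
      have := natDegree_derivative_le Q
      exact coeff_eq_zero_of_natDegree_lt (natDegree_mul_le.trans_lt (by omega))
  have X_pow_mul : (X ^ K * Q).coeff a = 0 :=
    coeff_eq_zero_of_natDegree_lt <| natDegree_mul_le.trans_lt <|
      (add_le_add (natDegree_X_pow_le K) hQ).trans_lt (by omega)
  rw [coeff_diffOp, coeff_derivative_derivative_eq_zero hQ (by omega), mul_derivative, X_pow_mul]
  ring

theorem natDegree_eq_of_diffOp_eq_mul [IsDomain R] [CharZero R] (hb : b.Monic)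
    (hK : b.natDegree = K + 1) {u : R[X]} (hu : u.degree < K) (hQ : Q ≠ 0)
    (h : diffOp K m ε b Q = u * Q) : Q.natDegree = m := by
  have top := coeff_diffOp_of_natDegree_le (m := m) (ε := ε) hb hK (le_refl Q.natDegree)
  have top_eq_zero : (u * Q).coeff (Q.natDegree + K) = 0 := by
    refine coeff_eq_zero_of_degree_lt ?_
    rw [degree_mul, degree_eq_natDegree hQ, Nat.cast_add, add_comm]
    exact WithBot.add_lt_add_left (WithBot.natCast_ne_bot _) hu
  rw [h, top_eq_zero, coeff_natDegree] at top
  have := (mul_eq_zero.mp top.symm).resolve_right (leadingCoeff_ne_zero.mpr hQ)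
  rw [← mul_sub, mul_eq_zero, sub_eq_zero] at this
  exact_mod_cast (this.resolve_left two_ne_zero).symm

end Degree

theorem differentiable_coeff_diffOp {K m n : ℕ} (Q : ℂ[X]) (a : ℕ) :
    Differentiable ℂ fun p : ℂ × (Fin n → ℂ) => (diffOp K m p.1 (rootPoly p.2) Q).coeff a := by
  simp only [coeff_diffOp, coeff_mul]
  have := fun c => (differentiable_coeff_rootPoly (n := n) c).comp (differentiable_snd (E := ℂ))
  simp only [Function.comp_def] at this
  fun_prop

end DiffOp

section OpMatrix

open Polynomial SymTensor
open scoped Matrix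

theorem eq_of_toFn_eq_of_degree_lt {R : Type*} [Semiring R] {n : ℕ} {p q : R[X]}
    (hp : p.degree < n) (hq : q.degree < n) (h : toFn n p = toFn n q) : p = q := by
  ext a
  by_cases ha : a < n
  · exact congrFun h ⟨a, ha⟩
  · have ha : (n : WithBot ℕ) ≤ a := by exact_mod_cast not_lt.mp ha
    rw [coeff_eq_zero_of_degree_lt (hp.trans_le ha), coeff_eq_zero_of_degree_lt (hq.trans_le ha)]

theorem degree_diffOp_lt {R : Type*} [CommRing R] {K m : ℕ} {b Q : R[X]} (ε : R) (hb : b.Monic)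
    (hK : b.natDegree = K + 1) (hQ : Q.natDegree ≤ m) :
    (diffOp K m ε b Q).degree < (m + K : ℕ) := by
  refine (degree_lt_iff_coeff_zero _ _).mpr fun a ha => ?_
  rcases ha.eq_or_lt with rfl | ha
  · rw [coeff_diffOp_of_natDegree_le hb hK hQ, sub_self, zero_mul]
  · exact coeff_eq_zero_of_natDegree_lt ((natDegree_diffOp_le hK.le hQ).trans_lt ha)

variable {F : Type*} [Field F] {m k : ℕ}

/-- The matrix of `diffOp` on polynomials of degree at most `m`. -/
noncomputable def opMatrix (m k : ℕ) (ε : F) (b : F[X]) :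
    Matrix (Fin (m + k + 1)) (Fin (m + 1)) F :=
  Matrix.of fun a j => (diffOp (k + 1) m ε b (X ^ (j : ℕ))).coeff a

section PencilEigenvector

variable [DecidableEq F] (u : Fin (k + 1) → F) (q : Fin (m + 1) → F)

theorem natDegree_ofFn_succ_le : (ofFn (m + 1) q).natDegree ≤ m :=
  Nat.lt_succ_iff.mp (ofFn_natDegree_lt (by omega) q)

theorem opMatrix_mulVec (ε : F) (b : F[X]) :
    opMatrix m k ε b *ᵥ q = toFn (m + k + 1) (diffOp (k + 1) m ε b (ofFn (m + 1) q)) := by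
  ext a
  change _ = (diffOp (k + 1) m ε b (ofFn (m + 1) q)).coeff a
  simp only [Matrix.mulVec, dotProduct, opMatrix, Matrix.of_apply, ofFn_eq_sum_monomial,
    ← smul_X_eq_monomial, map_sum, map_smul, finsetSum_coeff, coeff_smul, smul_eq_mul, mul_comm]

theorem sum_smul_shift_mulVec : (∑ i : Fin (k + 1), u i • shift F m k i) *ᵥ q =
    toFn (m + k + 1) (ofFn (k + 1) u * ofFn (m + 1) q) := by
  ext a
  change _ = (ofFn (k + 1) u * ofFn (m + 1) q).coeff a
  simp only [Matrix.mulVec, dotProduct, Matrix.sum_apply, Matrix.smul_apply, smul_eq_mul, shift,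
    Matrix.of_apply, ofFn_eq_sum_monomial, Finset.mul_sum (s := Finset.univ (α := Fin (m + 1))),
    Finset.sum_mul, finsetSum_coeff, monomial_mul_monomial, coeff_monomial]
  refine Finset.sum_congr rfl fun i _ => Finset.sum_congr rfl fun j _ => ?_
  simp only [mul_ite, mul_one, mul_zero, ite_mul, zero_mul, eq_comm (a := (a : ℕ)),
    add_comm (i : ℕ)]

theorem isPencilEigenvector_opMatrix_iff {ε : F} {b : F[X]} (hb : b.Monic)
    (hK : b.natDegree = k + 2) : IsPencilEigenvector (opMatrix m k ε b) u q ↔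
      q ≠ 0 ∧ diffOp (k + 1) m ε b (ofFn (m + 1) q) = ofFn (k + 1) u * ofFn (m + 1) q := by
  have degree_mul_lt : (ofFn (k + 1) u * ofFn (m + 1) q).degree < (m + (k + 1) : ℕ) := by
    refine degree_le_natDegree.trans_lt (Nat.cast_lt.mpr ?_)
    have := natDegree_ofFn_succ_le u
    have := natDegree_ofFn_succ_le q
    exact natDegree_mul_le.trans_lt (by omega)
  rw [IsPencilEigenvector, opMatrix_mulVec, sum_smul_shift_mulVec]
  exact and_congr_right fun _ => ⟨eq_of_toFn_eq_of_degree_lt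
    (degree_diffOp_lt ε hb hK (natDegree_ofFn_succ_le q)) degree_mul_lt, congrArg _⟩

end PencilEigenvector

theorem dilMatrix_opMatrix {s t : F} (h : s * t = 1) (x : Fin (k + 2) → F) :
    dilMatrix s t (opMatrix m k 1 (rootPoly (s • x))) =
      opMatrix m k (t ^ (k + 3)) (rootPoly x) := by
  ext a j
  have X_pow_comp : (X ^ (j : ℕ) : F[X]).comp (C s * X) = s ^ (j : ℕ) • X ^ (j : ℕ) := by
    rw [X_pow_comp, mul_pow, ← C_pow, smul_eq_C_mul]
  have scaled := congrArg (coeff · (a : ℕ)) (diffOp_comp (K := k + 1) h m 1 x (X ^ (j : ℕ)))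
  simp only [comp_C_mul_X_coeff, coeff_C_mul, X_pow_comp, map_smul, coeff_smul, smul_eq_mul,
    one_mul] at scaled
  have pow_mul_pow (i : ℕ) : s ^ i * t ^ i = 1 := by rw [← mul_pow, h, one_pow]
  have := pow_mul_pow (k + 1 + j)
  simp only [dilMatrix, opMatrix, Matrix.of_apply]
  rw [pow_add, pow_add] at this
  linear_combination t ^ (k + 1) * t ^ (j : ℕ) * scaled +
    (diffOp (k + 1) m (t ^ (k + 3)) (rootPoly x) (X ^ (j : ℕ))).coeff a * this

theorem differentiable_opMatrix (a : Fin (m + k + 1)) (j : Fin (m + 1)) :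
    Differentiable ℂ fun p : ℂ × (Fin (k + 2) → ℂ) => opMatrix m k p.1 (rootPoly p.2) a j := by
  simp only [opMatrix, Matrix.of_apply]
  exact differentiable_coeff_diffOp (X ^ (j : ℕ)) a

theorem tendsto_dilMatrix_opMatrix (γ β : Fin (k + 2) → ℂ) :
    Tendsto (fun s : ℂ => dilMatrix s s⁻¹ (opMatrix m k 1 (rootPoly (γ + s • β))))
      (Bornology.cobounded ℂ) (𝓝 (opMatrix m k 0 (rootPoly β))) := by
  have opMatrix_cont :
      Continuous fun p : ℂ × (Fin (k + 2) → ℂ) => opMatrix m k p.1 (rootPoly p.2) :=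
    continuous_matrix fun a j => (differentiable_opMatrix a j).continuous
  have inv_tendsto : Tendsto (fun s : ℂ => s⁻¹) (Bornology.cobounded ℂ) (𝓝 0) :=
    tendsto_inv₀_cobounded
  have : Tendsto (fun s : ℂ => ((s⁻¹) ^ (k + 3), s⁻¹ • γ + β)) (Bornology.cobounded ℂ)
      (𝓝 (0, β)) :=
    .prodMk_nhds (by simpa using inv_tendsto.pow (k + 3))
      (by simpa using (inv_tendsto.smul_const γ).add_const β)
  refine ((opMatrix_cont.tendsto _).comp this).congr' ?_
  filter_upwards [Bornology.eventually_ne_cobounded (0 : ℂ)] with s hs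
  rw [Function.comp_apply, ← dilMatrix_opMatrix (mul_inv_cancel₀ hs), smul_add,
    smul_inv_smul₀ hs]

end OpMatrix

section MultiRoot

open Polynomial

variable {R : Type*} [CommRing R] {K : ℕ} (β : Fin (K + 1) → R)

/-- The monic polynomial with roots `β i`, for `i` in a multiset. -/
noncomputable def multiRoot (M : Multiset (Fin (K + 1))) : R[X] := (M.map fun i => X - C (β i)).prod

/-- The product of the `X - C (β j)` with `j ≠ i`. -/
noncomputable def omitRoot (i : Fin (K + 1)) : R[X] := ∏ j ∈ Finset.univ.erase i, (X - C (β j))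

/-- The sum over `i` in a multiset of the products `omitRoot β i`; it is `rootPoly β` times the
logarithmic derivative of `multiRoot β M`. -/
noncomputable def omitSum (M : Multiset (Fin (K + 1))) : R[X] := (M.map (omitRoot β)).sum

/-- The eigenvalue of `diffOp K M.card 0 (rootPoly β)` on `multiRoot β M`. -/
noncomputable def limitPoly (M : Multiset (Fin (K + 1))) : R[X] :=
  C (2 * M.card : R) * X ^ K - 2 * omitSum β M

theorem multiRoot_cons (i : Fin (K + 1)) (M : Multiset (Fin (K + 1))) :
    multiRoot β (i ::ₘ M) = (X - C (β i)) * multiRoot β M := by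
  rw [multiRoot, Multiset.map_cons, Multiset.prod_cons, multiRoot]

theorem omitSum_cons (i : Fin (K + 1)) (M : Multiset (Fin (K + 1))) :
    omitSum β (i ::ₘ M) = omitRoot β i + omitSum β M := by
  rw [omitSum, Multiset.map_cons, Multiset.sum_cons, omitSum]

theorem multiRoot_monic (M : Multiset (Fin (K + 1))) : (multiRoot β M).Monic :=
  monic_multiset_prod_of_monic _ _ fun i _ => monic_X_sub_C (β i)

theorem omitRoot_monic (i : Fin (K + 1)) : (omitRoot β i).Monic :=
  monic_prod_of_monic _ _ fun j _ => monic_X_sub_C (β j)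

theorem natDegree_multiRoot [Nontrivial R] (M : Multiset (Fin (K + 1))) :
    (multiRoot β M).natDegree = M.card := by
  rw [multiRoot, natDegree_multiset_prod_of_monic _ fun f hf => ?_]
  · simp
  · obtain ⟨i, -, rfl⟩ := Multiset.mem_map.mp hf
    exact monic_X_sub_C (β i)

theorem natDegree_omitRoot [Nontrivial R] (i : Fin (K + 1)) : (omitRoot β i).natDegree = K := by
  rw [omitRoot, natDegree_prod_of_monic _ _ fun j _ => monic_X_sub_C (β j)]
  simp

theorem rootPoly_mul_derivative_multiRoot (M : Multiset (Fin (K + 1))) :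
    rootPoly β * derivative (multiRoot β M) = omitSum β M * multiRoot β M := by
  induction M using Multiset.induction_on with
  | empty => simp [multiRoot, omitSum]
  | cons i M ih =>
    have rootPoly_eq : rootPoly β = (X - C (β i)) * omitRoot β i :=
      (Finset.mul_prod_erase _ _ (Finset.mem_univ i)).symm
    rw [multiRoot_cons, omitSum_cons, derivative_mul, derivative_X_sub_C]
    linear_combination (X - C (β i)) * ih + multiRoot β M * rootPoly_eq

theorem diffOp_multiRoot (M : Multiset (Fin (K + 1))) :
    diffOp K M.card 0 (rootPoly β) (multiRoot β M) = limitPoly β M * multiRoot β M := by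
  rw [diffOp_apply, limitPoly, C_0]
  linear_combination (-2 : R[X]) * rootPoly_mul_derivative_multiRoot β M

theorem coeff_omitSum_of_le [Nontrivial R] (M : Multiset (Fin (K + 1))) {a : ℕ} (ha : K ≤ a) :
    (omitSum β M).coeff a = if a = K then (M.card : R) else 0 := by
  have coeff_omitRoot (i : Fin (K + 1)) : (omitRoot β i).coeff a = if a = K then 1 else 0 := by
    split_ifs with h
    · simpa only [h, natDegree_omitRoot] using (omitRoot_monic β i).coeff_natDegree
    · exact coeff_eq_zero_of_natDegree_lt (by rw [natDegree_omitRoot]; omega)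
  induction M using Multiset.induction_on with
  | empty => simp [omitSum]
  | cons i M ih =>
    rw [omitSum_cons, coeff_add, coeff_omitRoot, ih, Multiset.card_cons]
    split_ifs <;> push_cast <;> ring

theorem degree_limitPoly_lt [Nontrivial R] (M : Multiset (Fin (K + 1))) :
    (limitPoly β M).degree < K := by
  refine (degree_lt_iff_coeff_zero _ _).mpr fun a ha => ?_
  rw [limitPoly, show (2 : R[X]) = C 2 from rfl, coeff_sub, coeff_C_mul, coeff_C_mul, coeff_X_pow,
    coeff_omitSum_of_le β M ha]
  split_ifs <;> ring

theorem eval_omitSum (M : Multiset (Fin (K + 1))) (i : Fin (K + 1)) :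
    (omitSum β M).eval (β i) = M.count i * (omitRoot β i).eval (β i) := by
  induction M using Multiset.induction_on with
  | empty => simp [omitSum]
  | cons a M ih =>
    rw [omitSum_cons, eval_add, ih, Multiset.count_cons]
    split_ifs with h
    · rw [h]
      push_cast
      ring
    · have : (omitRoot β a).eval (β i) = 0 := by
        rw [omitRoot, eval_prod, Finset.prod_eq_zero (i := i) (by simp [h]) (by simp)]
      rw [this, zero_add, add_zero]

theorem limitPoly_injOn [IsDomain R] [CharZero R] (hβ : Function.Injective β) (m : ℕ) :
    Set.InjOn (limitPoly β) {M | M.card = m} := by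
  intro M hM M' hM' h
  rw [limitPoly, limitPoly, hM, hM', sub_right_inj] at h
  ext i
  have eval_eq := congrArg (eval (β i)) (mul_left_cancel₀ (two_ne_zero (α := R[X])) h)
  have eval_ne_zero : (omitRoot β i).eval (β i) ≠ 0 := by
    rw [omitRoot, eval_prod, Finset.prod_ne_zero_iff]
    intro j hj
    rw [eval_sub, eval_X, eval_C]
    exact sub_ne_zero.mpr (hβ.ne (Finset.ne_of_mem_erase hj).symm)
  rw [eval_omitSum, eval_omitSum] at eval_eq
  exact_mod_cast mul_right_cancel₀ eval_ne_zero eval_eq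

end MultiRoot

section SpectralSet

open Polynomial SymTensor

theorem hasSimpleSpectrum_opMatrix_zero {k : ℕ} (m : ℕ) {β : Fin (k + 2) → ℂ}
    (hβ : Function.Injective β) : HasSimpleSpectrum (opMatrix m k 0 (rootPoly β)) := by
  have ofFn_toFn {n : ℕ} {p : ℂ[X]} (hp : p.degree < n) : ofFn n (toFn n p) = p :=
    eq_of_toFn_eq_of_degree_lt (ofFn_degree_lt _) hp (toFn_comp_ofFn_eq_id n _)
  let eigenvalue (M : Sym (Fin (k + 2)) m) : Fin (k + 1) → ℂ := toFn (k + 1) (limitPoly β M)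
  have eigenvalue_injective : Function.Injective eigenvalue := fun M M' h =>
    Sym.coe_injective <| limitPoly_injOn β hβ m M.2 M'.2 <|
      eq_of_toFn_eq_of_degree_lt (degree_limitPoly_lt β M) (degree_limitPoly_lt β M') h
  refine ⟨Finset.univ.image eigenvalue, ?_, fun u hu => ?_⟩
  · rw [Finset.card_image_of_injective _ eigenvalue_injective, Finset.card_univ,
      card_sym_fin_succ, ← Nat.choose_symm_add]
    congr 1
    omega
  · obtain ⟨M, -, rfl⟩ := Finset.mem_image.mp hu
    have card_eq : (M : Multiset (Fin (k + 2))).card = m := M.2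
    have multiRoot_eq : ofFn (m + 1) (toFn (m + 1) (multiRoot β M)) = multiRoot β M :=
      ofFn_comp_toFn_eq_id_of_natDegree_lt (by rw [natDegree_multiRoot, card_eq]; omega)
    refine ⟨toFn (m + 1) (multiRoot β M), (isPencilEigenvector_opMatrix_iff _ _
      (rootPoly_monic β) (natDegree_rootPoly β)).mpr ⟨fun h => ?_, ?_⟩⟩
    · rw [h, map_zero] at multiRoot_eq
      exact (multiRoot_monic β M).ne_zero multiRoot_eq.symm
    · rw [multiRoot_eq, ofFn_toFn (degree_limitPoly_lt β M), ← diffOp_multiRoot, card_eq]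

/-- The pairs consisting of the roots of `b` and of a polynomial `u` of degree less than `K` for
which `Q'' - 2 b Q' + 2 m z ^ K Q = u Q` has a nonzero polynomial solution of degree at most `m`. -/
def spectralSet (K m : ℕ) : Set ((Fin (K + 1) → ℂ) × (Fin K → ℂ)) :=
  {x | ∃ Q : ℂ[X], Q ≠ 0 ∧ Q.natDegree ≤ m ∧ diffOp K m 1 (rootPoly x.1) Q = ofFn K x.2 * Q}

theorem mem_spectralSet_iff {m k : ℕ} {x : (Fin (k + 2) → ℂ) × (Fin (k + 1) → ℂ)} :
    x ∈ spectralSet (k + 1) m ↔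
      ∃ q, IsPencilEigenvector (opMatrix m k 1 (rootPoly x.1)) x.2 q := by
  simp only [isPencilEigenvector_opMatrix_iff _ _ (rootPoly_monic _) (natDegree_rootPoly _)]
  constructor
  · rintro ⟨Q, hQ, deg, h⟩
    have ofFn_eq := ofFn_comp_toFn_eq_id_of_natDegree_lt (Nat.lt_succ_iff.mpr deg)
    refine ⟨toFn (m + 1) Q, fun h₀ => hQ ?_, by rwa [ofFn_eq]⟩
    rw [← ofFn_eq, h₀, map_zero]
  · rintro ⟨q, hq, h⟩
    exact ⟨_, (map_ne_zero_iff _ (injective_ofFn _)).mpr hq, natDegree_ofFn_succ_le q, h⟩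

theorem exists_mem_spectralSet (m : ℕ) {k : ℕ} (γ : Fin (k + 2) → ℂ) :
    ∃ v, (γ, v) ∈ spectralSet (k + 1) m := by
  obtain ⟨v, Ψ, -, hΨ, h⟩ := exists_isJointEigenvector_mem
    (jointOp_commute (opMatrix m k 1 (rootPoly γ))) top_ne_bot fun _ _ _ => Submodule.mem_top
  exact ⟨v, mem_spectralSet_iff.mpr (exists_isPencilEigenvector_of_jointOp hΨ h)⟩

theorem isPreconnected_spectralSet_line {m k : ℕ} (γ : Fin (k + 2) → ℂ) {β : Fin (k + 2) → ℂ}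
    (hβ : Function.Injective β) :
    IsPreconnected {x : ℂ × (Fin (k + 1) → ℂ) | (γ + x.1 • β, x.2) ∈ spectralSet (k + 1) m} := by
  simp only [mem_spectralSet_iff]
  refine isPreconnected_pencilCurve (N := fun s => opMatrix m k 1 (rootPoly (γ + s • β)))
    (fun a j => ?_) (fun s u q h => ?_)
    (tendsto_dilMatrix_opMatrix γ β) (hasSimpleSpectrum_opMatrix_zero m hβ)
  · exact (differentiable_opMatrix a j).comp
      (f := fun s : ℂ => ((1 : ℂ), γ + s • β)) (by fun_prop)
  · have monic := rootPoly_monic (γ + s • β)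
    have degree := natDegree_rootPoly (γ + s • β)
    obtain ⟨hq, h⟩ := (isPencilEigenvector_opMatrix_iff _ _ monic degree).mp h
    replace hq := (map_ne_zero_iff _ (injective_ofFn _)).mpr hq
    have := leadingCoeff_ne_zero.mpr hq
    rwa [leadingCoeff, natDegree_eq_of_diffOp_eq_mul monic degree (ofFn_degree_lt u) hq h,
      ofFn_coeff_eq_val_of_lt q (Nat.lt_succ_self m)] at this

theorem exists_injective_add_eq {n : ℕ} (γ γ' : Fin n → ℂ) :
    ∃ β β' : Fin n → ℂ, Function.Injective β ∧ Function.Injective β' ∧ γ + β = γ' + β' := by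
  obtain ⟨c, hc⟩ := ((Set.finite_singleton (0 : ℂ)).union (Set.finite_range fun p : Fin n × Fin n =>
    ((γ' p.1 - γ p.1) - (γ' p.2 - γ p.2)) / ((p.1 : ℂ) - p.2))).exists_notMem
  simp only [Set.mem_union, Set.mem_singleton_iff, Set.mem_range, not_or, not_exists] at hc
  have val_injective : Function.Injective fun i : Fin n => ((i : ℕ) : ℂ) :=
    Nat.cast_injective.comp Fin.val_injective
  refine ⟨fun i => c * i, fun i => c * i + (γ i - γ' i), fun i j h => ?_, fun i j h => ?_, ?_⟩
  · exact val_injective (mul_left_cancel₀ hc.1 h)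
  · by_contra hne
    refine hc.2 (i, j) ((div_eq_iff (sub_ne_zero.mpr (val_injective.ne hne))).mpr ?_)
    simp only at h
    linear_combination -h
  · ext i
    simp only [Pi.add_apply]
    ring

theorem spectralSet_zero (m : ℕ) : spectralSet 0 m = Set.univ := by
  refine Set.eq_univ_of_forall fun x => ?_
  have monic := rootPoly_monic x.1
  have degree := natDegree_rootPoly x.1
  let A : (Fin (m + 1) → ℂ) →ₗ[ℂ] (Fin m → ℂ) :=
    toFn m ∘ₗ diffOp 0 m 1 (rootPoly x.1) ∘ₗ ofFn (m + 1)
  obtain ⟨q, hq, hq₀⟩ := (Submodule.ne_bot_iff _).mp (A.ker_ne_bot_of_finrank_lt (by simp))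
  refine ⟨ofFn (m + 1) q, (map_ne_zero_iff _ (injective_ofFn _)).mpr hq₀,
    natDegree_ofFn_succ_le q, ?_⟩
  rw [ofFn_zero', zero_mul]
  refine eq_of_toFn_eq_of_degree_lt (degree_diffOp_lt 1 monic degree (natDegree_ofFn_succ_le q))
    ?_ ?_
  · rw [degree_zero]
    exact WithBot.bot_lt_coe _
  · rw [map_zero]
    exact hq

theorem isConnected_spectralSet (K m : ℕ) : IsConnected (spectralSet K m) := by
  cases K with
  | zero =>
    rw [spectralSet_zero]
    exact isConnected_univ
  | succ k =>
    obtain ⟨v, hv⟩ := exists_mem_spectralSet m (0 : Fin (k + 2) → ℂ)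
    refine ⟨⟨_, hv⟩, isPreconnected_of_forall_pair fun x hx y hy => ?_⟩
    let line (γ β : Fin (k + 2) → ℂ) : Set ((Fin (k + 2) → ℂ) × (Fin (k + 1) → ℂ)) :=
      (fun x : ℂ × (Fin (k + 1) → ℂ) => (γ + x.1 • β, x.2)) ''
        {x | (γ + x.1 • β, x.2) ∈ spectralSet (k + 1) m}
    have mem_line {γ β v} (s : ℂ) (h : (γ + s • β, v) ∈ spectralSet (k + 1) m) :
        (γ + s • β, v) ∈ line γ β := ⟨(s, v), h, rfl⟩
    have line_subset (γ β) : line γ β ⊆ spectralSet (k + 1) m := Set.image_subset_iff.mpr subset_rfl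
    have line_preconnected (γ) {β} (hβ : Function.Injective β) : IsPreconnected (line γ β) :=
      (isPreconnected_spectralSet_line γ hβ).image _ (by fun_prop)
    obtain ⟨β, β', hβ, hβ', meet⟩ := exists_injective_add_eq x.1 y.1
    obtain ⟨w, hw⟩ := exists_mem_spectralSet m (x.1 + β)
    refine ⟨line x.1 β ∪ line y.1 β', Set.union_subset (line_subset _ _) (line_subset _ _),
      .inl (by simpa using mem_line (β := β) 0 (by simpa using hx)),
      .inr (by simpa using mem_line (β := β') 0 (by simpa using hy)),
      (line_preconnected _ hβ).union (x.1 + β, w) ?_ ?_ (line_preconnected _ hβ')⟩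
    · simpa using mem_line (β := β) 1 (by simpa using hw)
    · rw [meet] at hw ⊢
      simpa using mem_line (β := β') 1 (by simpa using hw)

end SpectralSet

section EnergyEstimates

open scoped InnerProductSpace

theorem le_mul_rpow_of_mul_deriv_le {f f' : ℝ → ℝ} {x₀ p : ℝ} (hx₀ : 0 < x₀)
    (hf : ∀ x, x₀ ≤ x → HasDerivAt f (f' x) x) (h : ∀ x, x₀ ≤ x → x * f' x ≤ p * f x)
    {x : ℝ} (hx : x₀ ≤ x) : f x ≤ f x₀ * (x₀ ^ p)⁻¹ * x ^ p := by
  have hderiv (x : ℝ) (hx : x₀ ≤ x) : HasDerivAt (fun x => f x * x ^ (-p))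
      (f' x * x ^ (-p) + f x * (-p * x ^ (-p - 1))) x :=
    (hf x hx).mul (Real.hasDerivAt_rpow_const (Or.inl (hx₀.trans_le hx).ne'))
  have hanti : AntitoneOn (fun x => f x * x ^ (-p)) (Set.Ici x₀) := by
    refine antitoneOn_of_hasDerivWithinAt_nonpos (convex_Ici x₀)
      (fun x hx => (hderiv x hx).continuousAt.continuousWithinAt)
      (fun x hx => (hderiv x (interior_subset hx)).hasDerivWithinAt) fun x hx => ?_
    have hxpos : 0 < x := hx₀.trans_le (interior_subset hx)
    have hsplit : x ^ (-p) = x * x ^ (-p - 1) := by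
      rw [Real.rpow_sub_one hxpos.ne', mul_div_cancel₀ _ hxpos.ne']
    rw [hsplit]
    linarith [mul_le_mul_of_nonneg_right (h x (interior_subset hx))
      (Real.rpow_pos_of_pos hxpos (-p - 1)).le]
  have hxpos : 0 < x := hx₀.trans_le hx
  have hle : f x * x ^ (-p) ≤ f x₀ * x₀ ^ (-p) := hanti Set.self_mem_Ici hx hx
  rwa [Real.rpow_neg hxpos.le, Real.rpow_neg hx₀.le, ← div_eq_mul_inv,
    div_le_iff₀ (Real.rpow_pos_of_pos hxpos p)] at hle

theorem inner_mul_self_right (z a : ℂ) : ⟪z, a * z⟫_ℝ = a.re * ‖z‖ ^ 2 := by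
  rw [Complex.inner, mul_assoc, mul_conj', ← ofReal_pow, re_mul_ofReal]

theorem inner_mul_add_mul_le {a v : ℂ} {κ ρ : ℝ} (ha : a.re ≤ -κ) (hv : ‖v‖ ≤ ρ) (w u : ℂ) :
    ⟪w, a * w + v * u⟫_ℝ ≤ -κ * ‖w‖ ^ 2 + ρ * (‖w‖ * ‖u‖) := by
  rw [inner_add_right, inner_mul_self_right]
  refine add_le_add (mul_le_mul_of_nonneg_right ha (sq_nonneg _)) ?_
  calc ⟪w, v * u⟫_ℝ ≤ ‖w‖ * ‖v * u‖ := real_inner_le_norm _ _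
    _ = ‖v‖ * (‖w‖ * ‖u‖) := by rw [norm_mul]; ring
    _ ≤ ρ * (‖w‖ * ‖u‖) := by gcongr

theorem le_inner_mul_add_mul {a v : ℂ} {κ ρ : ℝ} (ha : κ ≤ a.re) (hv : ‖v‖ ≤ ρ) (w u : ℂ) :
    κ * ‖w‖ ^ 2 - ρ * (‖w‖ * ‖u‖) ≤ ⟪w, a * w + v * u⟫_ℝ := by
  have h := inner_mul_add_mul_le (a := -a) (neg_le_neg ha) ((norm_neg v).trans_le hv) w u
  rw [neg_mul a, neg_mul v, ← neg_add, inner_neg_right] at h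
  linarith

theorem mul_deriv_energy_le {U W a v : ℂ} {K : ℕ} {x c C : ℝ} (hx : 0 < x) (hc : 0 < c)
    (ha : a.re ≤ -(c * x ^ (K + 1))) (hv : ‖v‖ ≤ C * x ^ K) :
    x * (2 * ⟪U, W⟫_ℝ + (-(K * x ^ (K - 1)) / (x ^ K) ^ 2 * ‖W‖ ^ 2 +
      (x ^ K)⁻¹ * (2 * ⟪W, a * W + v * U⟫_ℝ))) ≤
      (1 + C) ^ 2 / (2 * c) * (‖U‖ ^ 2 + (x ^ K)⁻¹ * ‖W‖ ^ 2) := by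
  have hUW : ⟪U, W⟫_ℝ ≤ ‖U‖ * ‖W‖ := real_inner_le_norm U W
  have hweight : -(K * x ^ (K - 1)) / (x ^ K) ^ 2 * ‖W‖ ^ 2 ≤ 0 := by
    rw [neg_div, neg_mul]
    exact neg_nonpos.mpr (by positivity)
  have hW : (x ^ K)⁻¹ * (2 * ⟪W, a * W + v * U⟫_ℝ) ≤
      -2 * c * x * ‖W‖ ^ 2 + 2 * C * (‖U‖ * ‖W‖) := by
    calc (x ^ K)⁻¹ * (2 * ⟪W, a * W + v * U⟫_ℝ)
        ≤ (x ^ K)⁻¹ * (2 * (-(c * x ^ (K + 1)) * ‖W‖ ^ 2 + C * x ^ K * (‖W‖ * ‖U‖))) := by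
          gcongr
          exact inner_mul_add_mul_le ha hv W U
      _ = _ := by
          rw [pow_succ]
          field_simp
  calc _ ≤ x * (2 * (‖U‖ * ‖W‖) + (0 + (-2 * c * x * ‖W‖ ^ 2 + 2 * C * (‖U‖ * ‖W‖)))) := by
        gcongr
    _ = 2 * (1 + C) * ‖U‖ * (x * ‖W‖) - 2 * c * (x * ‖W‖) ^ 2 := by ring
    _ ≤ (1 + C) ^ 2 / (2 * c) * ‖U‖ ^ 2 := by
        rw [div_mul_eq_mul_div, le_div_iff₀ (by positivity)]
        linarith [sq_nonneg ((1 + C) * ‖U‖ - 2 * c * (x * ‖W‖))]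
    _ ≤ _ := by
        gcongr
        exact le_add_of_nonneg_right (by positivity)

theorem exists_norm_sq_le_mul_rpow {U W a v : ℝ → ℂ} {K : ℕ} {x₀ c C : ℝ} (hx₀ : 0 < x₀)
    (hc : 0 < c) (hU : ∀ x, x₀ ≤ x → HasDerivAt U (W x) x)
    (hW : ∀ x, x₀ ≤ x → HasDerivAt W (a x * W x + v x * U x) x)
    (ha : ∀ x, x₀ ≤ x → (a x).re ≤ -(c * x ^ (K + 1)))
    (hv : ∀ x, x₀ ≤ x → ‖v x‖ ≤ C * x ^ K) :
    ∃ A p : ℝ, ∀ x, x₀ ≤ x → ‖U x‖ ^ 2 ≤ A * x ^ p := by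
  have henergy (x : ℝ) (hx : x₀ ≤ x) :
      HasDerivAt (fun x => ‖U x‖ ^ 2 + (x ^ K)⁻¹ * ‖W x‖ ^ 2) _ x :=
    (hU x hx).norm_sq.add
      (((hasDerivAt_pow K x).inv (pow_pos (hx₀.trans_le hx) K).ne').mul (hW x hx).norm_sq)
  refine ⟨_, _, fun x hx => le_trans (le_add_of_nonneg_right ?_)
    (le_mul_rpow_of_mul_deriv_le hx₀ henergy (fun x hx =>
      mul_deriv_energy_le (hx₀.trans_le hx) hc (ha x hx) (hv x hx)) hx)⟩
  have hxpos : 0 < x := hx₀.trans_le hx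
  positivity

theorem add_mul_le_of_le_deriv {f f' : ℝ → ℝ} {x₀ δ : ℝ}
    (hf : ∀ x, x₀ ≤ x → HasDerivAt f (f' x) x) (h : ∀ x, x₀ ≤ x → δ ≤ f' x) {x : ℝ}
    (hx : x₀ ≤ x) : f x₀ + δ * (x - x₀) ≤ f x := by
  have hle := (convex_Ici x₀).mul_sub_le_image_sub_of_le_deriv
    (fun x hx => (hf x hx).continuousAt.continuousWithinAt)
    (fun x hx => (hf x (interior_subset hx)).differentiableAt.differentiableWithinAt)
    (fun x hx => (h x (interior_subset hx)).trans_eq (hf x (interior_subset hx)).deriv.symm)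
    x₀ Set.self_mem_Ici x hx hx
  linarith

theorem tendsto_atTop_of_le_deriv {f f' : ℝ → ℝ} {x₀ δ : ℝ} (hδ : 0 < δ)
    (hf : ∀ x, x₀ ≤ x → HasDerivAt f (f' x) x) (h : ∀ x, x₀ ≤ x → δ ≤ f' x) :
    Tendsto f atTop atTop := by
  refine tendsto_atTop_mono' atTop
    ((eventually_ge_atTop x₀).mono fun x hx => add_mul_le_of_le_deriv hf h hx) ?_
  exact tendsto_atTop_add_const_left _ _
    ((tendsto_atTop_add_const_right _ (-x₀) tendsto_id).const_mul_atTop hδ)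

theorem tendsto_atTop_of_le_deriv_deriv {f f' f'' : ℝ → ℝ} {x₀ δ : ℝ} (hδ : 0 < δ)
    (hf : ∀ x, x₀ ≤ x → HasDerivAt f (f' x) x) (hf' : ∀ x, x₀ ≤ x → HasDerivAt f' (f'' x) x)
    (h : ∀ x, x₀ ≤ x → δ ≤ f'' x) : Tendsto f atTop atTop := by
  obtain ⟨x₁, hx₁⟩ := eventually_atTop.mp
    ((tendsto_atTop_of_le_deriv hδ hf' h).eventually_ge_atTop 1)
  exact tendsto_atTop_of_le_deriv one_pos (fun x hx => hf x ((le_max_left x₀ x₁).trans hx))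
    fun x hx => hx₁ x ((le_max_right x₀ x₁).trans hx)

theorem not_tendsto_zero_of_le_norm_sq_add {Y Z R : ℝ → ℂ} {x₀ δ : ℝ} (hδ : 0 < δ)
    (hY : ∀ x, x₀ ≤ x → HasDerivAt Y (Z x) x) (hZ : ∀ x, x₀ ≤ x → HasDerivAt Z (R x * Y x) x)
    (h : ∀ x, x₀ ≤ x → δ ≤ ‖Z x‖ ^ 2 + (R x).re * ‖Y x‖ ^ 2) : ¬ Tendsto Y atTop (𝓝 0) := by
  intro ht
  have hZ' (x : ℝ) (hx : x₀ ≤ x) : HasDerivAt (fun x => 2 * ⟪Y x, Z x⟫_ℝ)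
      (2 * (‖Z x‖ ^ 2 + (R x).re * ‖Y x‖ ^ 2)) x := by
    refine (((hY x hx).inner ℝ (hZ x hx)).const_mul 2).congr_deriv ?_
    rw [inner_mul_self_right, real_inner_self_eq_norm_sq, add_comm]
  have htop := tendsto_atTop_of_le_deriv_deriv (mul_pos two_pos hδ) (fun x hx => (hY x hx).norm_sq)
    hZ' fun x hx => mul_le_mul_of_nonneg_left (h x hx) two_pos.le
  exact not_tendsto_nhds_of_tendsto_atTop htop _ (ht.norm.pow 2)

theorem monotoneOn_norm_sq_sub_norm_sq {g T p q r s : ℝ → ℂ} {κ : ℝ → ℝ} {x₀ : ℝ}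
    (hg : ∀ x, x₀ ≤ x → HasDerivAt g (p x * g x + q x * T x) x)
    (hT : ∀ x, x₀ ≤ x → HasDerivAt T (r x * T x + s x * g x) x)
    (hp : ∀ x, x₀ ≤ x → κ x ≤ (p x).re) (hq : ∀ x, x₀ ≤ x → ‖q x‖ ≤ κ x)
    (hr : ∀ x, x₀ ≤ x → (r x).re ≤ -κ x) (hs : ∀ x, x₀ ≤ x → ‖s x‖ ≤ κ x) :
    MonotoneOn (fun x => ‖g x‖ ^ 2 - ‖T x‖ ^ 2) (Set.Ici x₀) := by
  have hderiv := fun x (hx : x₀ ≤ x) => (hg x hx).norm_sq.sub (hT x hx).norm_sq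
  refine monotoneOn_of_hasDerivWithinAt_nonneg (convex_Ici x₀)
    (fun x hx => (hderiv x hx).continuousAt.continuousWithinAt)
    (fun x hx => (hderiv x (interior_subset hx)).hasDerivWithinAt) fun x hx => ?_
  have hx' : x₀ ≤ x := interior_subset hx
  have hg' := le_inner_mul_add_mul (hp x hx') (hq x hx') (g x) (T x)
  have hT' := inner_mul_add_mul_le (hr x hx') (hs x hx') (T x) (g x)
  have hκ : 0 ≤ κ x := (norm_nonneg _).trans (hq x hx')
  linarith [mul_nonneg hκ (sq_nonneg (‖g x‖ - ‖T x‖))]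

theorem norm_sq_le_of_norm_eq_one {Y g β τ R : ℂ} {c C t : ℝ} (hc : 0 < c) (hτ : ‖τ‖ = 1)
    (hβ : ‖β‖ ≤ C * t) (hR : c * t ^ 2 ≤ R.re) :
    ‖g‖ ^ 2 ≤ 2 * (1 + C ^ 2 / c) * (‖-β * Y + τ * g‖ ^ 2 + R.re * ‖Y‖ ^ 2) := by
  set Z := -β * Y + τ * g with hZ
  have hRpos : 0 ≤ R.re := le_trans (by positivity) hR
  have hg : ‖g‖ ≤ ‖Z‖ + C * t * ‖Y‖ := by
    calc ‖g‖ = ‖Z + β * Y‖ := by rw [hZ, neg_mul, neg_add_cancel_comm, norm_mul, hτ, one_mul]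
      _ ≤ ‖Z‖ + ‖β * Y‖ := norm_add_le _ _
      _ ≤ ‖Z‖ + C * t * ‖Y‖ := by
        rw [norm_mul]
        gcongr
  have hY : (C * t * ‖Y‖) ^ 2 ≤ C ^ 2 / c * (R.re * ‖Y‖ ^ 2) := by
    calc (C * t * ‖Y‖) ^ 2 = C ^ 2 / c * (c * t ^ 2 * ‖Y‖ ^ 2) := by field_simp
      _ ≤ C ^ 2 / c * (R.re * ‖Y‖ ^ 2) := by gcongr
  have hZC : 0 ≤ C ^ 2 / c * ‖Z‖ ^ 2 := by positivity
  have hRY : 0 ≤ R.re * ‖Y‖ ^ 2 := by positivity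
  calc ‖g‖ ^ 2 ≤ (‖Z‖ + C * t * ‖Y‖) ^ 2 := by gcongr
    _ ≤ 2 * (‖Z‖ ^ 2 + (C * t * ‖Y‖) ^ 2) := add_sq_le
    _ ≤ _ := by linarith

theorem monotoneOn_norm_sq_sub_norm_sq_div {Y g β v : ℝ → ℂ} {τ : ℂ} {K : ℕ} {x₀ c C : ℝ}
    (hx₀ : 1 ≤ x₀) (hc : 0 < c) (hC : 0 < C) (hcC : C / c ≤ c * x₀) (hτ : ‖τ‖ = 1)
    (hY : ∀ x, x₀ ≤ x → HasDerivAt Y (-β x * Y x + τ * g x) x)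
    (hg : ∀ x, x₀ ≤ x → HasDerivAt g (β x * g x + v x * Y x) x)
    (hβ : ∀ x, x₀ ≤ x → c * x ^ (K + 1) ≤ (β x).re)
    (hv : ∀ x, x₀ ≤ x → ‖v x‖ ≤ C * x ^ K) :
    MonotoneOn (fun x => ‖g x‖ ^ 2 - ‖((C / c / x : ℝ) : ℂ) * Y x‖ ^ 2) (Set.Ici x₀) := by
  have hpos {x : ℝ} (hx : x₀ ≤ x) : 0 < x := by linarith
  have hcancel {x : ℝ} (hx : x₀ ≤ x) : c * x / C * (C / c / x) = 1 := by
    have := hpos hx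
    field_simp
  refine monotoneOn_norm_sq_sub_norm_sq (p := β) (q := fun x => v x * (c * x / C : ℝ))
    (r := fun x => -β x - (x⁻¹ : ℝ)) (s := fun x => (C / c / x : ℝ) * τ)
    (κ := fun x => c * x ^ (K + 1)) (fun x hx => ?_) (fun x hx => ?_) hβ (fun x hx => ?_)
    (fun x hx => ?_) fun x hx => ?_
  · refine (hg x hx).congr_deriv ?_
    rw [mul_assoc, ← mul_assoc (ofReal _), ← ofReal_mul, hcancel hx, ofReal_one, one_mul]
  · have hweight : HasDerivAt (fun x : ℝ => C / c / x) (-(C / c / x * x⁻¹)) x :=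
      ((hasDerivAt_inv (hpos hx).ne').const_mul (C / c)).congr_deriv (by ring)
    refine (hweight.ofReal_comp.mul (hY x hx)).congr_deriv ?_
    push_cast
    ring
  · rw [norm_mul, Complex.norm_of_nonneg (by have := hpos hx; positivity)]
    calc ‖v x‖ * (c * x / C) ≤ C * x ^ K * (c * x / C) := by
          gcongr
          · have := hpos hx
            positivity
          · exact hv x hx
      _ = c * x ^ (K + 1) := by
          rw [pow_succ]
          field_simp
  · rw [sub_re, neg_re, ofReal_re]
    linarith [hβ x hx, inv_pos.mpr (hpos hx)]
  · rw [norm_mul, hτ, mul_one, Complex.norm_of_nonneg (by have := hpos hx; positivity),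
      div_le_iff₀ (hpos hx)]
    calc C / c ≤ c * x₀ := hcC
      _ ≤ c * (x ^ (K + 1) * x) := by
          have : 1 ≤ x ^ (K + 1) := one_le_pow₀ (hx₀.trans hx)
          gcongr
          nlinarith
      _ = c * x ^ (K + 1) * x := by ring

theorem exists_norm_le_div_mul_norm {Y g β v R : ℝ → ℂ} {τ : ℂ} {K : ℕ} {x₀ c C : ℝ}
    (hx₀ : 1 ≤ x₀) (hc : 0 < c) (hC : 0 < C) (hτ : ‖τ‖ = 1)
    (hY : ∀ x, x₀ ≤ x → HasDerivAt Y (-β x * Y x + τ * g x) x)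
    (hg : ∀ x, x₀ ≤ x → HasDerivAt g (β x * g x + v x * Y x) x)
    (hYY : ∀ x, x₀ ≤ x → HasDerivAt (fun x => -β x * Y x + τ * g x) (R x * Y x) x)
    (hβ : ∀ x, x₀ ≤ x → c * x ^ (K + 1) ≤ (β x).re)
    (hβ' : ∀ x, x₀ ≤ x → ‖β x‖ ≤ C * x ^ (K + 1)) (hv : ∀ x, x₀ ≤ x → ‖v x‖ ≤ C * x ^ K)
    (hR : ∀ x, x₀ ≤ x → c * (x ^ (K + 1)) ^ 2 ≤ (R x).re) (ht : Tendsto Y atTop (𝓝 0)) :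
    ∃ A x₁ : ℝ, x₀ ≤ x₁ ∧ ∀ x, x₁ ≤ x → ‖g x‖ ≤ A / x * ‖Y x‖ := by
  set x₁ := max x₀ (C / c / c)
  have hx₀₁ : x₀ ≤ x₁ := le_max_left _ _
  refine ⟨C / c, x₁, hx₀₁, fun x hx => ?_⟩
  have hmono := monotoneOn_norm_sq_sub_norm_sq_div (hx₀.trans hx₀₁) hc hC
    ((div_le_iff₀' hc).mp (le_max_right _ _)) hτ (fun x hx => hY x (hx₀₁.trans hx))
    (fun x hx => hg x (hx₀₁.trans hx)) (fun x hx => hβ x (hx₀₁.trans hx))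
    fun x hx => hv x (hx₀₁.trans hx)
  have hxpos : 0 < x := by linarith
  rw [← Complex.norm_of_nonneg (by positivity : 0 ≤ C / c / x), ← norm_mul]
  by_contra! hlt
  -- Outside the cone `‖g‖` stays bounded below, which forces `‖Y‖²` to be uniformly convex.
  have hδ := sub_pos.mpr (pow_lt_pow_left₀ hlt (norm_nonneg _) two_ne_zero)
  set δ := ‖g x‖ ^ 2 - ‖((C / c / x : ℝ) : ℂ) * Y x‖ ^ 2
  refine not_tendsto_zero_of_le_norm_sq_add (x₀ := x) (div_pos hδ (b := 2 * (1 + C ^ 2 / c))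
    (by positivity)) (fun w hw => hY w ((hx₀₁.trans hx).trans hw))
    (fun w hw => hYY w ((hx₀₁.trans hx).trans hw)) (fun w hw => ?_) ht
  have hw₀ : x₀ ≤ w := (hx₀₁.trans hx).trans hw
  rw [div_le_iff₀' (by positivity)]
  calc δ ≤ ‖g w‖ ^ 2 - ‖((C / c / w : ℝ) : ℂ) * Y w‖ ^ 2 := hmono hx (hx.trans hw) hw
    _ ≤ ‖g w‖ ^ 2 := sub_le_self _ (sq_nonneg _)
    _ ≤ _ := norm_sq_le_of_norm_eq_one hc hτ (hβ' w hw₀) (hR w hw₀)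

end EnergyEstimates

section PolynomialGrowth

open Polynomial Set

theorem exists_derivative_eq (p : ℂ[X]) : ∃ q : ℂ[X], derivative q = p := by
  induction p using Polynomial.induction_on' with
  | add p q hp hq =>
    obtain ⟨P, rfl⟩ := hp
    obtain ⟨Q, rfl⟩ := hq
    exact ⟨P + Q, derivative_add⟩
  | monomial n a =>
    refine ⟨monomial (n + 1) (a / (n + 1)), ?_⟩
    rw [derivative_monomial_succ, div_mul_cancel₀ _ (Nat.cast_add_one_ne_zero n)]

theorem tendsto_eval_mul_ofReal_div_pow {p : ℂ[X]} {N : ℕ} (hp : p.natDegree ≤ N) (ω : ℂ) :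
    Tendsto (fun x : ℝ => p.eval (ω * x) / (x : ℂ) ^ N) atTop (𝓝 (p.coeff N * ω ^ N)) := by
  set q := reflect N (p.comp (C ω * X))
  have hq : q.eval 0 = p.coeff N * ω ^ N := by
    rw [← coeff_zero_eq_eval_zero, coeff_reflect, revAt_zero, comp_C_mul_X_coeff]
  have hdeg : (p.comp (C ω * X)).natDegree ≤ N :=
    calc _ ≤ p.natDegree * (C ω * X).natDegree := natDegree_comp_le
      _ ≤ p.natDegree * 1 :=
        Nat.mul_le_mul_left _ ((natDegree_C_mul_le _ _).trans_eq natDegree_X)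
      _ ≤ N := (mul_one _).trans_le hp
  have hinv : Tendsto (fun x : ℝ => ((x⁻¹ : ℝ) : ℂ)) atTop (𝓝 0) :=
    ofReal_zero ▸ (continuous_ofReal.tendsto 0).comp tendsto_inv_atTop_zero
  refine Tendsto.congr' ?_ (hq ▸ (q.continuous.tendsto 0).comp hinv)
  filter_upwards [eventually_ne_atTop 0] with x hx
  have hx' : (x : ℂ) ≠ 0 := ofReal_ne_zero.mpr hx
  let := invertibleOfNonzero hx'
  have hreflect := eval₂_reflect_mul_pow (RingHom.id ℂ) (x : ℂ) N (p.comp (C ω * X)) hdeg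
  rw [eq_div_iff (pow_ne_zero N hx'), Function.comp_apply, ofReal_inv, ← invOf_eq_inv, eval,
    hreflect, ← eval, eval_comp, eval_mul, eval_C, eval_X]

theorem eventually_re_eval_mul_ofReal_le {p : ℂ[X]} {N : ℕ} (hp : p.natDegree ≤ N) {ω : ℂ} {c : ℝ}
    (hc : (p.coeff N * ω ^ N).re < c) : ∀ᶠ x : ℝ in atTop, (p.eval (ω * x)).re ≤ c * x ^ N := by
  have htendsto := (continuous_re.tendsto _).comp (tendsto_eval_mul_ofReal_div_pow hp ω)
  filter_upwards [htendsto.eventually_lt_const hc, eventually_gt_atTop 0] with x hx hxpos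
  rw [Function.comp_apply, ← ofReal_pow, div_ofReal_re, div_lt_iff₀ (pow_pos hxpos N)] at hx
  exact hx.le

theorem eventually_le_re_eval_mul_ofReal {p : ℂ[X]} {N : ℕ} (hp : p.natDegree ≤ N) {ω : ℂ} {c : ℝ}
    (hc : c < (p.coeff N * ω ^ N).re) : ∀ᶠ x : ℝ in atTop, c * x ^ N ≤ (p.eval (ω * x)).re := by
  have hneg : ((-p).coeff N * ω ^ N).re < -c := by
    rw [coeff_neg, neg_mul, neg_re]
    exact neg_lt_neg hc
  filter_upwards [eventually_re_eval_mul_ofReal_le ((natDegree_neg p).trans_le hp) hneg] with x hx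
  rwa [eval_neg, neg_re, neg_mul, neg_le_neg_iff] at hx

theorem exists_norm_eval_le_mul_one_add_norm_pow {p : ℂ[X]} {N : ℕ} (hp : p.natDegree ≤ N) :
    ∃ C : ℝ, 0 < C ∧ ∀ z : ℂ, ‖p.eval z‖ ≤ C * (1 + ‖z‖) ^ N := by
  refine ⟨1 + ∑ i ∈ Finset.range (N + 1), ‖p.coeff i‖, by positivity, fun z => ?_⟩
  have hz : 1 ≤ 1 + ‖z‖ := le_add_of_nonneg_right (norm_nonneg z)
  calc ‖p.eval z‖ ≤ ∑ i ∈ Finset.range (N + 1), ‖p.coeff i * z ^ i‖ := by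
        rw [eval_eq_sum_range' (Nat.lt_succ_of_le hp)]
        exact norm_sum_le _ _
    _ ≤ ∑ i ∈ Finset.range (N + 1), ‖p.coeff i‖ * (1 + ‖z‖) ^ N := by
        gcongr with i hi
        rw [norm_mul, norm_pow]
        gcongr
        calc ‖z‖ ^ i ≤ (1 + ‖z‖) ^ i := by gcongr; exact le_add_of_nonneg_left zero_le_one
          _ ≤ (1 + ‖z‖) ^ N := pow_le_pow_right₀ hz (Finset.mem_range_succ_iff.mp hi)
    _ ≤ _ := by
        rw [← Finset.sum_mul]
        gcongr
        exact le_add_of_nonneg_left zero_le_one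

theorem exists_norm_eval_mul_ofReal_le_mul_pow {p : ℂ[X]} {N : ℕ} (hp : p.natDegree ≤ N) {ω : ℂ}
    (hω : ‖ω‖ = 1) : ∃ C : ℝ, 0 < C ∧ ∀ x : ℝ, 1 ≤ x → ‖p.eval (ω * x)‖ ≤ C * x ^ N := by
  obtain ⟨C, hC, h⟩ := exists_norm_eval_le_mul_one_add_norm_pow hp
  refine ⟨C * 2 ^ N, by positivity, fun x hx => (h _).trans ?_⟩
  rw [norm_mul, hω, one_mul, Complex.norm_of_nonneg (by linarith), mul_assoc, ← mul_pow]
  gcongr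
  linarith

/-- The function `u` grows at most polynomially on the set `S`. -/
def HasPolyBoundOn (u : ℂ → ℂ) (S : Set ℂ) : Prop :=
  ∃ (C : ℝ) (N : ℕ), ∀ z ∈ S, ‖u z‖ ≤ C * (1 + ‖z‖) ^ N

theorem HasPolyBoundOn.mono {u : ℂ → ℂ} {S T : Set ℂ} (h : HasPolyBoundOn u T) (hST : S ⊆ T) :
    HasPolyBoundOn u S := by
  obtain ⟨C, N, h⟩ := h
  exact ⟨C, N, fun z hz => h z (hST hz)⟩

theorem HasPolyBoundOn.union {u : ℂ → ℂ} {S T : Set ℂ} (hS : HasPolyBoundOn u S)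
    (hT : HasPolyBoundOn u T) : HasPolyBoundOn u (S ∪ T) := by
  obtain ⟨C₁, N₁, hS⟩ := hS
  obtain ⟨C₂, N₂, hT⟩ := hT
  have hle {C : ℝ} {N : ℕ} (hC : C ≤ max |C₁| |C₂|) (hN : N ≤ max N₁ N₂) (z : ℂ) :
      C * (1 + ‖z‖) ^ N ≤ max |C₁| |C₂| * (1 + ‖z‖) ^ max N₁ N₂ := by
    gcongr
    exact le_add_of_nonneg_right (norm_nonneg z)
  refine ⟨max |C₁| |C₂|, max N₁ N₂, fun z hz => ?_⟩
  rcases hz with hz | hz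
  · exact (hS z hz).trans (hle ((le_abs_self _).trans (le_max_left _ _)) (le_max_left _ _) z)
  · exact (hT z hz).trans (hle ((le_abs_self _).trans (le_max_right _ _)) (le_max_right _ _) z)

theorem hasPolyBoundOn_biUnion_lt {u : ℂ → ℂ} {S : ℕ → Set ℂ} (h : ∀ l, HasPolyBoundOn u (S l))
    (L : ℕ) : HasPolyBoundOn u (⋃ l < L, S l) := by
  induction L with
  | zero => exact ⟨0, 0, by simp⟩
  | succ L ih => exact biUnion_lt_succ S L ▸ ih.union (h L)

theorem hasPolyBoundOn_of_isCompact {u : ℂ → ℂ} (hu : Continuous u) {S : Set ℂ} (hS : IsCompact S) :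
    HasPolyBoundOn u S := by
  obtain ⟨C, hC⟩ := hS.exists_bound_of_continuousOn hu.continuousOn
  exact ⟨C, 0, fun z hz => by simpa using hC z hz⟩

theorem iteratedDeriv_zero_eq_zero_of_norm_le {u : ℂ → ℂ} (hu : Differentiable ℂ u) {C : ℝ}
    {N k : ℕ} (h : ∀ z, ‖u z‖ ≤ C * (1 + ‖z‖) ^ N) (hk : N < k) : iteratedDeriv k u 0 = 0 := by
  have hC : 0 ≤ C := by simpa using (norm_nonneg _).trans (h 0)
  have hcauchy (R : ℝ) (hR : 1 ≤ R) :
      ‖iteratedDeriv k u 0‖ ≤ k.factorial * (C * 2 ^ N) / R := by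
    have hRpos : 0 < R := one_pos.trans_le hR
    have hsphere (z : ℂ) (hz : z ∈ Metric.sphere 0 R) : ‖u z‖ ≤ C * (2 * R) ^ N := by
      refine (h z).trans ?_
      rw [mem_sphere_zero_iff_norm.mp hz]
      gcongr
      linarith
    calc ‖iteratedDeriv k u 0‖ ≤ k.factorial * (C * (2 * R) ^ N) / R ^ k :=
          norm_iteratedDeriv_le_of_forall_mem_sphere_norm_le k hRpos hu.diffContOnCl hsphere
      _ ≤ k.factorial * (C * (2 * R) ^ N) / R ^ (N + 1) := by gcongr; omega
      _ = _ := by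
        rw [mul_pow, pow_succ]
        field_simp
  refine norm_le_zero_iff.mp (ge_of_tendsto
    (tendsto_const_nhds.div_atTop tendsto_id :
      Tendsto (fun R : ℝ => k.factorial * (C * 2 ^ N) / R) atTop (𝓝 0)) ?_)
  exact (eventually_ge_atTop 1).mono hcauchy

theorem HasPolyBoundOn.exists_eq_eval {u : ℂ → ℂ} (h : HasPolyBoundOn u univ)
    (hu : Differentiable ℂ u) : ∃ Q : ℂ[X], ∀ z, u z = Q.eval z := by
  obtain ⟨C, N, h⟩ := h
  refine ⟨∑ k ∈ Finset.range (N + 1),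
    Polynomial.C ((k.factorial : ℂ)⁻¹ * iteratedDeriv k u 0) * X ^ k, fun z => ?_⟩
  rw [← taylorSeries_eq_of_entire' 0 z hu, tsum_eq_sum (s := Finset.range (N + 1)), eval_finsetSum]
  · simp only [sub_zero, eval_mul, eval_C, eval_pow, eval_X]
  · intro k hk
    rw [iteratedDeriv_zero_eq_zero_of_norm_le hu (fun z => h z (mem_univ z))
      (by simpa using hk), mul_zero, zero_mul]

end PolynomialGrowth

section Sectors

open Set

/-- The closed ray from the origin in the direction `ω`. -/
def ray (ω : ℂ) : Set ℂ := (fun x : ℝ => ω * x) '' Ici 0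

/-- The closed sector of the points whose argument lies between `α` and `β`. -/
def closedSector (α β : ℝ) : Set ℂ := ⋃ θ ∈ Icc α β, ray (exp (θ * I))

theorem exp_mem_ray {θ : ℝ} {ζ : ℂ} (hζ : ζ.im = θ) : exp ζ ∈ ray (exp (θ * I)) := by
  refine ⟨Real.exp ζ.re, (Real.exp_pos _).le, ?_⟩
  simp only [← hζ, ofReal_exp]
  rw [← Complex.exp_add, add_comm, re_add_im]

theorem exists_exp_eq_of_mem_closedSector {α β : ℝ} {z : ℂ} (hz : z ∈ closedSector α β)
    (hz0 : z ≠ 0) : ∃ ζ : ℂ, α ≤ ζ.im ∧ ζ.im ≤ β ∧ exp ζ = z := by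
  obtain ⟨θ, hθ, x, hx, rfl⟩ := mem_iUnion₂.mp hz
  have hxpos : 0 < x := lt_of_le_of_ne hx fun h => hz0 (by simp [← h])
  refine ⟨Real.log x + θ * I, by simpa using hθ.1, by simpa using hθ.2, ?_⟩
  rw [Complex.exp_add, ← ofReal_exp, Real.exp_log hxpos, mul_comm]

theorem exists_biUnion_closedSector_eq_univ {a : ℝ} (ha : 0 < a) :
    ∃ L : ℕ, ⋃ l < L, closedSector (l * a) ((l + 1) * a) = univ := by
  refine ⟨⌊3 * Real.pi / a⌋₊ + 1, eq_univ_of_forall fun z => ?_⟩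
  set φ := z.arg + 2 * Real.pi with hφ
  have hφ0 : 0 ≤ φ := by linarith [neg_pi_lt_arg z, Real.pi_pos]
  have hfloor : (⌊φ / a⌋₊ : ℝ) * a ≤ φ := (le_div_iff₀ ha).mp (Nat.floor_le (by positivity))
  have hfloor' : φ ≤ (⌊φ / a⌋₊ + 1) * a := ((div_lt_iff₀ ha).mp (Nat.lt_floor_add_one _)).le
  have hlt : ⌊φ / a⌋₊ < ⌊3 * Real.pi / a⌋₊ + 1 := by
    refine Nat.lt_succ_of_le (Nat.floor_le_floor ?_)
    gcongr
    linarith [arg_le_pi z]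
  refine mem_iUnion₂.mpr ⟨_, hlt, mem_iUnion₂.mpr ⟨φ, ⟨hfloor, hfloor'⟩, ‖z‖, norm_nonneg z, ?_⟩⟩
  simp only [hφ, ofReal_add, add_mul, Complex.exp_add, ofReal_mul, ofReal_ofNat, exp_two_pi_mul_I,
    mul_one]
  rw [mul_comm, norm_mul_exp_arg_mul_I]

theorem one_le_norm_one_add {w : ℂ} (hw : 0 ≤ w.re) : 1 ≤ ‖1 + w‖ := by
  refine le_trans ?_ (re_le_norm (1 + w))
  rw [add_re, one_re]
  exact le_add_of_nonneg_right hw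

theorem norm_le_norm_one_add {w : ℂ} (hw : 0 ≤ w.re) : ‖w‖ ≤ ‖1 + w‖ := by
  rw [← sq_le_sq₀ (norm_nonneg _) (norm_nonneg _), Complex.sq_norm, Complex.sq_norm,
    normSq_apply, normSq_apply, add_re, one_re, add_im, one_im]
  linarith

theorem norm_div_one_add_pow_le {v w : ℂ} (hw : 0 ≤ w.re) {C : ℝ} {N : ℕ}
    (h : ‖v‖ ≤ C * (1 + ‖w‖) ^ N) : ‖v / (1 + w) ^ N‖ ≤ C * 2 ^ N := by
  have hone := one_le_norm_one_add hw
  have hC : 0 ≤ C := nonneg_of_mul_nonneg_left ((norm_nonneg v).trans h) (by positivity)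
  rw [norm_div, norm_pow, div_le_iff₀ (by positivity), mul_assoc, ← mul_pow]
  refine h.trans ?_
  gcongr
  linarith [norm_le_norm_one_add hw]

theorem norm_comp_exp_le {u : ℂ → ℂ} {C : ℝ} {M : ℕ}
    (h : ∀ z, ‖u z‖ ≤ C * Real.exp (C * (1 + ‖z‖) ^ M)) (ζ : ℂ) :
    ‖u (exp ζ)‖ ≤ C * Real.exp (C * 2 ^ M * Real.exp (M * |ζ.re|)) := by
  have hC : 0 ≤ C := nonneg_of_mul_nonneg_left ((norm_nonneg _).trans (h 0)) (Real.exp_pos _)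
  have hone : 1 ≤ Real.exp |ζ.re| := Real.one_le_exp (abs_nonneg _)
  refine (h _).trans ?_
  rw [Real.exp_nat_mul, mul_assoc, ← mul_pow, norm_exp]
  gcongr
  linarith [Real.exp_le_exp.mpr (le_abs_self ζ.re)]

theorem re_exp_sub_mul_I_nonneg {α β : ℝ} (hβ : β ≤ α + Real.pi / 2) {ζ : ℂ} (hα : α ≤ ζ.im)
    (hζβ : ζ.im ≤ β) : 0 ≤ (exp (ζ - α * I)).re := by
  rw [exp_re]
  refine mul_nonneg (Real.exp_pos _).le (Real.cos_nonneg_of_neg_pi_div_two_le_of_le ?_ ?_) <;>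
    simp only [sub_im, mul_im, ofReal_re, I_im, ofReal_im, I_re] <;> linarith [Real.pi_pos]

theorem norm_exp_sub_mul_I (ζ : ℂ) (α : ℝ) : ‖exp (ζ - α * I)‖ = ‖exp ζ‖ := by
  simp [norm_exp]

theorem norm_div_one_add_exp_pow_le {u : ℂ → ℂ} (hu : Differentiable ℂ u) {C₀ C : ℝ} {M N : ℕ}
    (hgrowth : ∀ z, ‖u z‖ ≤ C₀ * Real.exp (C₀ * (1 + ‖z‖) ^ M)) {α β : ℝ} (hαβ : α < β)
    (hβ : β ≤ α + Real.pi / 2) (hM : M < Real.pi / (β - α))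
    (h : ∀ z ∈ ray (exp (α * I)) ∪ ray (exp (β * I)), ‖u z‖ ≤ C * (1 + ‖z‖) ^ N) {ζ : ℂ}
    (hα : α ≤ ζ.im) (hζβ : ζ.im ≤ β) : ‖u (exp ζ) / (1 + exp (ζ - α * I)) ^ N‖ ≤ C * 2 ^ N := by
  have hre (ζ : ℂ) (h₁ : α ≤ ζ.im) (h₂ : ζ.im ≤ β) : 0 ≤ (exp (ζ - α * I)).re :=
    re_exp_sub_mul_I_nonneg hβ h₁ h₂
  refine PhragmenLindelof.horizontal_strip (a := α) (b := β)
    (f := fun ζ => u (exp ζ) / (1 + exp (ζ - α * I)) ^ N) ?_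
    ⟨M, hM, C₀ * 2 ^ M, Asymptotics.IsBigO.of_bound C₀ ?_⟩ (fun ζ hζ => ?_) (fun ζ hζ => ?_) hα hζβ
  · refine DifferentiableOn.diffContOnCl fun ζ hζ => DifferentiableAt.differentiableWithinAt ?_
    rw [closure_preimage_im, closure_Ioo hαβ.ne] at hζ
    refine (hu.comp differentiable_exp ζ).div (by fun_prop) (pow_ne_zero _ (norm_pos_iff.mp ?_))
    exact one_pos.trans_le (one_le_norm_one_add (hre ζ hζ.1 hζ.2))
  · refine (eventually_principal.mpr fun ζ hζ => ?_).filter_mono inf_le_right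
    rw [norm_div, Real.norm_of_nonneg (Real.exp_pos _).le, norm_pow]
    have hone := one_le_pow₀ (one_le_norm_one_add (hre ζ hζ.1.le hζ.2.le)) (n := N)
    exact (div_le_self (norm_nonneg _) hone).trans (norm_comp_exp_le hgrowth ζ)
  · exact norm_div_one_add_pow_le (hre ζ hζ.ge (hζ.trans_le hαβ.le))
      ((norm_exp_sub_mul_I ζ α).symm ▸ h _ (Or.inl (exp_mem_ray hζ)))
  · exact norm_div_one_add_pow_le (hre ζ (hαβ.le.trans_eq hζ.symm) hζ.le)
      ((norm_exp_sub_mul_I ζ α).symm ▸ h _ (Or.inr (exp_mem_ray hζ)))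

theorem hasPolyBoundOn_closedSector {u : ℂ → ℂ} (hu : Differentiable ℂ u) {C₀ : ℝ} {M : ℕ}
    (hgrowth : ∀ z, ‖u z‖ ≤ C₀ * Real.exp (C₀ * (1 + ‖z‖) ^ M)) {α β : ℝ} (hαβ : α < β)
    (hβ : β ≤ α + Real.pi / 2) (hM : M < Real.pi / (β - α))
    (hα : HasPolyBoundOn u (ray (exp (α * I)))) (hβ' : HasPolyBoundOn u (ray (exp (β * I)))) :
    HasPolyBoundOn u (closedSector α β) := by
  obtain ⟨C, N, h⟩ := hα.union hβ'
  suffices hpos : HasPolyBoundOn u (closedSector α β \ {0}) from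
    (hpos.union (hasPolyBoundOn_of_isCompact hu.continuous (isCompact_singleton (x := 0)))).mono
      (by simp)
  refine ⟨C * 2 ^ N, N, fun z ⟨hz, hz0⟩ => ?_⟩
  obtain ⟨ζ, h₁, h₂, rfl⟩ := exists_exp_eq_of_mem_closedSector hz hz0
  have hle := norm_div_one_add_exp_pow_le hu hgrowth hαβ hβ hM h h₁ h₂
  have hone := one_le_norm_one_add (re_exp_sub_mul_I_nonneg hβ h₁ h₂)
  rw [norm_div, norm_pow, div_le_iff₀ (by positivity)] at hle
  have hC : 0 ≤ C * 2 ^ N := nonneg_of_mul_nonneg_left ((norm_nonneg _).trans hle) (by positivity)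
  refine hle.trans ?_
  gcongr
  refine (norm_add_le _ _).trans_eq ?_
  rw [norm_one, norm_exp_sub_mul_I]

theorem hasPolyBoundOn_univ_of_forall_ray {u : ℂ → ℂ} (hu : Differentiable ℂ u) {C₀ : ℝ} {M n : ℕ}
    (hgrowth : ∀ z, ‖u z‖ ≤ C₀ * Real.exp (C₀ * (1 + ‖z‖) ^ M)) (hn : 4 ≤ n) (hM : 2 * M < n)
    (h : ∀ ω : ℂ, ω ^ n = 1 → HasPolyBoundOn u (ray ω)) : HasPolyBoundOn u univ := by
  have hn' : (4 : ℝ) ≤ n := by exact_mod_cast hn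
  have hM' : (2 * M : ℝ) < n := by exact_mod_cast hM
  set a := 2 * Real.pi / n with ha
  have hapos : 0 < a := by positivity
  have hray (l : ℕ) : HasPolyBoundOn u (ray (exp ((l * a : ℝ) * I))) := by
    refine h _ ?_
    rw [← Complex.exp_nat_mul, ← exp_nat_mul_two_pi_mul_I l, ha]
    congr 1
    have hn0 : (n : ℂ) ≠ 0 := Nat.cast_ne_zero.mpr (by omega)
    push_cast
    field_simp
  have hsector (l : ℕ) : HasPolyBoundOn u (closedSector (l * a) ((l + 1) * a)) := by
    refine hasPolyBoundOn_closedSector hu hgrowth (by linarith) ?_ ?_ (hray l)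
      (by exact_mod_cast hray (l + 1))
    · have hquarter : a ≤ Real.pi / 2 := by
        rw [ha, div_le_div_iff₀ (by positivity) two_pos]
        nlinarith [Real.pi_pos]
      linarith
    · rw [add_mul, one_mul, add_sub_cancel_left, ha, lt_div_iff₀ (by positivity), mul_div_assoc',
        div_lt_iff₀ (by positivity)]
      nlinarith [Real.pi_pos]
  obtain ⟨L, hL⟩ := exists_biUnion_closedSector_eq_univ hapos
  exact hL ▸ hasPolyBoundOn_biUnion_lt hsector L

end Sectors

section RayGrowth

open Set

theorem hasDerivAt_comp_mul_ofReal {E : Type*} [NormedAddCommGroup E] [NormedSpace ℂ E]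
    {f : ℂ → E} {f' : E} {ω : ℂ} {x : ℝ} (hf : HasDerivAt f f' (ω * x)) :
    HasDerivAt (fun x : ℝ => f (ω * x)) (ω • f') x := by
  have hline : HasDerivAt (fun x : ℝ => ω * (x : ℂ)) ω x := by
    simpa using ofRealCLM.hasDerivAt.const_mul ω
  exact hf.scomp x hline

theorem norm_le_mul_exp_of_norm_deriv_le {E : Type*} [NormedAddCommGroup E] [NormedSpace ℂ E]
    {f f' : ℂ → E} {z : ℂ} {ℓ : ℝ} (hf : ∀ w, HasDerivAt f (f' w) w)
    (h : ∀ w, ‖w‖ ≤ ‖z‖ → ‖f' w‖ ≤ ℓ * ‖f w‖) : ‖f z‖ ≤ ‖f 0‖ * Real.exp (ℓ * ‖z‖) := by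
  have hderiv (t : ℝ) : HasDerivAt (fun t : ℝ => f (z * t)) (z • f' (z * t)) t :=
    hasDerivAt_comp_mul_ofReal (hf _)
  have hbound (t : ℝ) (ht : t ∈ Ico (0 : ℝ) 1) :
      ‖z • f' (z * t)‖ ≤ ℓ * ‖z‖ * ‖f (z * t)‖ + 0 := by
    have hzt : ‖z * t‖ ≤ ‖z‖ := by
      rw [norm_mul, Complex.norm_of_nonneg ht.1]
      exact mul_le_of_le_one_right (norm_nonneg z) ht.2.le
    rw [norm_smul, add_zero, mul_comm ℓ, mul_assoc]
    exact mul_le_mul_of_nonneg_left (h _ hzt) (norm_nonneg z)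
  have hgronwall := norm_le_gronwallBound_of_norm_deriv_right_le (δ := ‖f 0‖)
    (fun t _ => (hderiv t).continuousAt.continuousWithinAt)
    (fun t _ => (hderiv t).hasDerivWithinAt) (by simp) hbound 1 (right_mem_Icc.mpr zero_le_one)
  simpa [gronwallBound_ε0] using hgronwall

theorem hasPolyBoundOn_ray_of_norm_sq_le {u : ℂ → ℂ} (hu : Continuous u) {ω : ℂ} (hω : ‖ω‖ = 1)
    {A p x₀ : ℝ} (hx₀ : 1 ≤ x₀) (h : ∀ x, x₀ ≤ x → ‖u (ω * x)‖ ^ 2 ≤ A * x ^ p) :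
    HasPolyBoundOn u (ray ω) := by
  have hcompact : HasPolyBoundOn u ((fun x : ℝ => ω * x) '' Icc 0 x₀) :=
    hasPolyBoundOn_of_isCompact hu (isCompact_Icc.image (by fun_prop))
  have htail : HasPolyBoundOn u ((fun x : ℝ => ω * x) '' Ici x₀) := by
    obtain ⟨N, hN⟩ := exists_nat_ge p
    refine ⟨1 + |A|, N, ?_⟩
    rintro _ ⟨x, hx, rfl⟩
    have hx1 : 1 ≤ x := hx₀.trans hx
    have hone : 1 ≤ (1 + x) ^ N := one_le_pow₀ (by linarith)
    rw [norm_mul, hω, one_mul, Complex.norm_of_nonneg (by linarith)]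
    refine (pow_le_pow_iff_left₀ (norm_nonneg _) (by positivity) two_ne_zero).mp ?_
    calc ‖u (ω * x)‖ ^ 2 ≤ A * x ^ p := h x hx
      _ ≤ |A| * x ^ (N : ℝ) := by
        gcongr
        exact le_abs_self A
      _ ≤ (1 + |A|) * (1 + x) ^ N := by
        rw [Real.rpow_natCast]
        gcongr <;> linarith
      _ ≤ ((1 + |A|) * (1 + x) ^ N) ^ 2 :=
        le_self_pow₀ (one_le_mul_of_one_le_of_one_le (by simp) hone) two_ne_zero
  refine (hcompact.union htail).mono ?_
  rw [← image_union, Icc_union_Ici_eq_Ici (by linarith)]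
  exact Subset.rfl

end RayGrowth

section WKB

open Polynomial

/-- A solution `y` of `y'' = (b² + r) y`, where `b` is monic of degree `K + 1` and `r` has degree
at most `K`, together with a primitive `B` of `b`: the WKB ansatz for a solution decaying along
a ray `ω` with `ω ^ (K + 2) = 1` is `y = u * exp (-B)`. -/
structure WKBSolution (K : ℕ) where
  b : ℂ[X]
  r : ℂ[X]
  B : ℂ[X]
  y : ℂ → ℂ
  monic : b.Monic
  natDegree_b : b.natDegree = K + 1
  natDegree_r : r.natDegree ≤ K
  derivative_B : derivative B = b
  differentiable : Differentiable ℂ y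
  deriv_deriv_y : ∀ z, deriv (deriv y) z = (b ^ 2 + r).eval z * y z

namespace WKBSolution

variable {K : ℕ} (D : WKBSolution K)

/-- The component `y' + b y` of a solution, which vanishes to leading order when `y` decays like
`exp (-B)`. -/
noncomputable def g (z : ℂ) : ℂ := deriv D.y z + D.b.eval z * D.y z

/-- The coefficient `s = r + b'` of the coupling `g' = b g + s y`. -/
noncomputable def s : ℂ[X] := D.r + derivative D.b

/-- The amplitude `y exp B` of a solution. -/
noncomputable def u (z : ℂ) : ℂ := D.y z * exp (D.B.eval z)

/-- The derivative of the amplitude. -/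
noncomputable def w (z : ℂ) : ℂ := D.g z * exp (D.B.eval z)

theorem hasDerivAt_y (z : ℂ) : HasDerivAt D.y (-D.b.eval z * D.y z + D.g z) z := by
  refine (D.differentiable z).hasDerivAt.congr_deriv ?_
  rw [g]
  ring

theorem hasDerivAt_deriv_y (z : ℂ) :
    HasDerivAt (deriv D.y) ((D.b ^ 2 + D.r).eval z * D.y z) z :=
  (D.differentiable.analyticAt z).deriv.differentiableAt.hasDerivAt.congr_deriv (D.deriv_deriv_y z)

theorem hasDerivAt_g (z : ℂ) : HasDerivAt D.g (D.b.eval z * D.g z + D.s.eval z * D.y z) z := by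
  refine ((D.hasDerivAt_deriv_y z).add ((D.b.hasDerivAt z).mul (D.hasDerivAt_y z))).congr_deriv ?_
  simp only [s, g, eval_add, eval_pow]
  ring

theorem hasDerivAt_exp (z : ℂ) :
    HasDerivAt (fun z => exp (D.B.eval z)) (exp (D.B.eval z) * D.b.eval z) z :=
  D.derivative_B ▸ (D.B.hasDerivAt z).cexp

theorem hasDerivAt_u (z : ℂ) : HasDerivAt D.u (D.w z) z := by
  refine ((D.hasDerivAt_y z).mul (D.hasDerivAt_exp z)).congr_deriv ?_
  rw [w]
  ring

theorem hasDerivAt_w (z : ℂ) :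
    HasDerivAt D.w (2 * D.b.eval z * D.w z + D.s.eval z * D.u z) z := by
  refine ((D.hasDerivAt_g z).mul (D.hasDerivAt_exp z)).congr_deriv ?_
  rw [w, u]
  ring

theorem differentiable_u : Differentiable ℂ D.u :=
  fun z => (D.hasDerivAt_u z).differentiableAt

theorem natDegree_s : D.s.natDegree ≤ K := by
  refine (natDegree_add_le _ _).trans (max_le D.natDegree_r ?_)
  have := natDegree_derivative_le D.b
  have := D.natDegree_b
  omega

theorem coeff_b : D.b.coeff (K + 1) = 1 :=
  D.natDegree_b ▸ D.monic.coeff_natDegree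

theorem natDegree_sq_b : (D.b ^ 2).natDegree = 2 * (K + 1) := by
  rw [D.monic.natDegree_pow, D.natDegree_b]

theorem natDegree_sq_b_add_r : (D.b ^ 2 + D.r).natDegree ≤ 2 * (K + 1) := by
  refine (natDegree_add_le _ _).trans (max_le D.natDegree_sq_b.le ?_)
  have := D.natDegree_r
  omega

theorem coeff_sq_b_add_r : (D.b ^ 2 + D.r).coeff (2 * (K + 1)) = 1 := by
  have hr : D.r.natDegree < 2 * (K + 1) := by
    have := D.natDegree_r
    omega
  rw [coeff_add, coeff_eq_zero_of_natDegree_lt hr, add_zero, ← D.natDegree_sq_b]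
  exact (D.monic.pow 2).coeff_natDegree

theorem eventually_le_re_mul_eval_b {ω : ℂ} (h : ω ^ (K + 2) = 1) :
    ∀ᶠ x : ℝ in atTop, 1 / 2 * x ^ (K + 1) ≤ (ω * D.b.eval (ω * x)).re := by
  have hlim := eventually_le_re_eval_mul_ofReal (p := C ω * D.b) (ω := ω) (c := 1 / 2)
    ((natDegree_C_mul_le _ _).trans D.natDegree_b.le)
    (by rw [coeff_C_mul, D.coeff_b, mul_one, ← pow_succ', h]; norm_num)
  simpa only [eval_mul, eval_C] using hlim

theorem eventually_le_re_mul_eval_sq_b_add_r {ω : ℂ} (h : ω ^ (K + 2) = 1) :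
    ∀ᶠ x : ℝ in atTop,
      1 / 2 * (x ^ (K + 1)) ^ 2 ≤ (ω ^ 2 * (D.b ^ 2 + D.r).eval (ω * x)).re := by
  have hpow : ω ^ 2 * ω ^ (2 * (K + 1)) = 1 := by
    rw [← pow_add, show 2 + 2 * (K + 1) = (K + 2) * 2 by ring, pow_mul, h, one_pow]
  have hlim := eventually_le_re_eval_mul_ofReal (p := C (ω ^ 2) * (D.b ^ 2 + D.r)) (ω := ω)
    (c := 1 / 2) ((natDegree_C_mul_le _ _).trans D.natDegree_sq_b_add_r)
    (by rw [coeff_C_mul, D.coeff_sq_b_add_r, mul_one, hpow]; norm_num)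
  simpa only [eval_mul, eval_C, mul_comm 2 (K + 1), pow_mul] using hlim

theorem hasPolyBoundOn_ray_of_re_neg {ω : ℂ} (hω : ‖ω‖ = 1) (h : (ω ^ (K + 2)).re < 0) :
    HasPolyBoundOn D.u (ray ω) := by
  obtain ⟨C, -, hC⟩ := exists_norm_eval_mul_ofReal_le_mul_pow D.natDegree_s hω
  have hcoeff : ((Polynomial.C (2 * ω) * D.b).coeff (K + 1) * ω ^ (K + 1)).re <
      -(-(ω ^ (K + 2)).re) := by
    rw [coeff_C_mul, D.coeff_b, mul_one, mul_assoc, ← pow_succ', ← ofReal_ofNat, re_ofReal_mul]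
    linarith
  obtain ⟨x₀, hx₀⟩ := eventually_atTop.mp (eventually_re_eval_mul_ofReal_le
    ((natDegree_C_mul_le _ _).trans D.natDegree_b.le) hcoeff)
  obtain ⟨A, p, hA⟩ := exists_norm_sq_le_mul_rpow (K := K) (x₀ := max 1 x₀) (C := C)
    (U := fun x => D.u (ω * x)) (W := fun x => ω * D.w (ω * x))
    (a := fun x => 2 * ω * D.b.eval (ω * x)) (v := fun x => ω ^ 2 * D.s.eval (ω * x))
    (one_pos.trans_le (le_max_left _ _)) (neg_pos.mpr h)
    (fun x _ => hasDerivAt_comp_mul_ofReal (D.hasDerivAt_u _))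
    (fun x _ => ((hasDerivAt_comp_mul_ofReal (D.hasDerivAt_w _)).const_mul ω).congr_deriv
      (by rw [smul_eq_mul]; ring))
    (fun x hx => by
      simpa only [eval_mul, eval_C, neg_mul] using hx₀ x ((le_max_right _ _).trans hx))
    (fun x hx => by
      rw [norm_mul, norm_pow, hω, one_pow, one_mul]
      exact hC x ((le_max_left _ _).trans hx))
  exact hasPolyBoundOn_ray_of_norm_sq_le D.differentiable_u.continuous hω (le_max_left _ _) hA

theorem exists_norm_g_le {ω : ℂ} (hω : ‖ω‖ = 1) (h : ω ^ (K + 2) = 1)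
    (ht : Tendsto (fun x : ℝ => D.y (ω * x)) atTop (𝓝 0)) :
    ∃ A x₁ : ℝ, 1 ≤ x₁ ∧ ∀ x : ℝ, x₁ ≤ x → ‖D.g (ω * x)‖ ≤ A / x * ‖D.y (ω * x)‖ := by
  obtain ⟨C₁, hC₁, hs⟩ := exists_norm_eval_mul_ofReal_le_mul_pow D.natDegree_s hω
  obtain ⟨C₂, -, hb⟩ := exists_norm_eval_mul_ofReal_le_mul_pow D.natDegree_b.le hω
  obtain ⟨x₀, hx₀⟩ := eventually_atTop.mp
    ((D.eventually_le_re_mul_eval_b h).and (D.eventually_le_re_mul_eval_sq_b_add_r h))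
  have hderiv : (fun x : ℝ => -(ω * D.b.eval (ω * x)) * D.y (ω * x) + ω * D.g (ω * x)) =
      fun x : ℝ => ω * deriv D.y (ω * x) := by
    funext x
    rw [g]
    ring
  have hnorm {p : ℂ[X]} {C : ℝ} {N : ℕ} (hp : ∀ x : ℝ, 1 ≤ x → ‖p.eval (ω * x)‖ ≤ C * x ^ N)
      (hC : C ≤ max C₁ C₂) (x : ℝ) (hx : max 1 x₀ ≤ x) :
      ‖ω * p.eval (ω * x)‖ ≤ max C₁ C₂ * x ^ N := by
    have hx1 : 1 ≤ x := (le_max_left _ _).trans hx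
    rw [norm_mul, hω, one_mul]
    exact (hp x hx1).trans (by gcongr)
  obtain ⟨A, x₁, hx₁, hA⟩ := exists_norm_le_div_mul_norm (K := K) (x₀ := max 1 x₀)
    (Y := fun x => D.y (ω * x)) (g := fun x => D.g (ω * x)) (β := fun x => ω * D.b.eval (ω * x))
    (v := fun x => ω * D.s.eval (ω * x)) (R := fun x => ω ^ 2 * (D.b ^ 2 + D.r).eval (ω * x))
    (le_max_left _ _) one_half_pos (lt_max_of_lt_left hC₁) hω
    (fun x _ => (hasDerivAt_comp_mul_ofReal (D.hasDerivAt_y _)).congr_deriv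
      (by rw [smul_eq_mul]; ring))
    (fun x _ => (hasDerivAt_comp_mul_ofReal (D.hasDerivAt_g _)).congr_deriv
      (by rw [smul_eq_mul]; ring))
    (fun x _ => hderiv ▸ ((hasDerivAt_comp_mul_ofReal (D.hasDerivAt_deriv_y _)).const_mul ω)
      |>.congr_deriv (by rw [smul_eq_mul]; ring))
    (fun x hx => (hx₀ x ((le_max_right _ _).trans hx)).1) (hnorm hb (le_max_right _ _))
    (hnorm hs (le_max_left _ _)) (fun x hx => (hx₀ x ((le_max_right _ _).trans hx)).2) ht
  exact ⟨A, x₁, (le_max_left _ _).trans hx₁, hA⟩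

open scoped InnerProductSpace in
theorem hasPolyBoundOn_ray_of_tendsto {ω : ℂ} (hω : ‖ω‖ = 1) (h : ω ^ (K + 2) = 1)
    (ht : Tendsto (fun x : ℝ => D.y (ω * x)) atTop (𝓝 0)) : HasPolyBoundOn D.u (ray ω) := by
  obtain ⟨A, x₁, hx₁, hA⟩ := D.exists_norm_g_le hω h ht
  have hx₁pos : 0 < x₁ := one_pos.trans_le hx₁
  have hgrowth (x : ℝ) (hx : x₁ ≤ x) :
      x * (2 * ⟪D.u (ω * x), ω • D.w (ω * x)⟫_ℝ) ≤ 2 * A * ‖D.u (ω * x)‖ ^ 2 := by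
    have hxpos : 0 < x := hx₁pos.trans_le hx
    have hw : ‖D.w (ω * x)‖ ≤ A / x * ‖D.u (ω * x)‖ := by
      rw [w, u, norm_mul, norm_mul, ← mul_assoc]
      exact mul_le_mul_of_nonneg_right (hA x hx) (norm_nonneg _)
    calc x * (2 * ⟪D.u (ω * x), ω • D.w (ω * x)⟫_ℝ)
        ≤ x * (2 * (‖D.u (ω * x)‖ * (A / x * ‖D.u (ω * x)‖))) := by
          gcongr
          refine (real_inner_le_norm _ _).trans ?_
          rw [norm_smul, hω, one_mul]
          gcongr
      _ = 2 * A * ‖D.u (ω * x)‖ ^ 2 := by field_simp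
  exact hasPolyBoundOn_ray_of_norm_sq_le D.differentiable_u.continuous hω hx₁ fun x hx =>
    le_mul_rpow_of_mul_deriv_le hx₁pos
      (fun x _ => (hasDerivAt_comp_mul_ofReal (D.hasDerivAt_u (ω * x))).norm_sq) hgrowth hx

theorem norm_deriv_u_w_le (z : ℂ) :
    ‖(D.w z, 2 * D.b.eval z * D.w z + D.s.eval z * D.u z)‖ ≤
      (1 + 2 * ‖D.b.eval z‖ + ‖D.s.eval z‖) * ‖(D.u z, D.w z)‖ := by
  have hu : ‖D.u z‖ ≤ ‖(D.u z, D.w z)‖ := norm_fst_le (D.u z, D.w z)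
  have hw : ‖D.w z‖ ≤ ‖(D.u z, D.w z)‖ := norm_snd_le (D.u z, D.w z)
  refine max_le ?_ ?_
  · refine hw.trans (le_mul_of_one_le_left (norm_nonneg _) ?_)
    linarith [norm_nonneg (D.b.eval z), norm_nonneg (D.s.eval z)]
  · calc ‖2 * D.b.eval z * D.w z + D.s.eval z * D.u z‖
        ≤ 2 * ‖D.b.eval z‖ * ‖D.w z‖ + ‖D.s.eval z‖ * ‖D.u z‖ := by
          refine (norm_add_le _ _).trans_eq ?_
          rw [norm_mul, norm_mul, norm_mul, Complex.norm_two]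
      _ ≤ 2 * ‖D.b.eval z‖ * ‖(D.u z, D.w z)‖ + ‖D.s.eval z‖ * ‖(D.u z, D.w z)‖ := by gcongr
      _ ≤ _ := by linarith [norm_nonneg (D.u z, D.w z)]

theorem exists_norm_u_le_mul_exp :
    ∃ C : ℝ, ∀ z, ‖D.u z‖ ≤ C * Real.exp (C * (1 + ‖z‖) ^ (K + 2)) := by
  obtain ⟨C₁, hC₁, hb⟩ := exists_norm_eval_le_mul_one_add_norm_pow D.natDegree_b.le
  obtain ⟨C₂, hC₂, hs⟩ := exists_norm_eval_le_mul_one_add_norm_pow (D.natDegree_s.trans K.le_succ)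
  set δ := ‖(D.u 0, D.w 0)‖
  refine ⟨δ + (1 + 2 * C₁ + C₂), fun z => ?_⟩
  have hone : 1 ≤ (1 + ‖z‖) ^ (K + 1) := one_le_pow₀ (le_add_of_nonneg_right (norm_nonneg z))
  have hbound (w : ℂ) (hw : ‖w‖ ≤ ‖z‖) : 1 + 2 * ‖D.b.eval w‖ + ‖D.s.eval w‖ ≤
      (1 + 2 * C₁ + C₂) * (1 + ‖z‖) ^ (K + 1) := by
    have hpow : (1 + ‖w‖) ^ (K + 1) ≤ (1 + ‖z‖) ^ (K + 1) := by gcongr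
    calc _ ≤ 1 + 2 * (C₁ * (1 + ‖w‖) ^ (K + 1)) + C₂ * (1 + ‖w‖) ^ (K + 1) := by
          gcongr
          exacts [hb w, hs w]
      _ ≤ 1 + 2 * (C₁ * (1 + ‖z‖) ^ (K + 1)) + C₂ * (1 + ‖z‖) ^ (K + 1) := by gcongr
      _ ≤ _ := by linarith
  have hgronwall := norm_le_mul_exp_of_norm_deriv_le (z := z)
    (fun w => (D.hasDerivAt_u w).prodMk (D.hasDerivAt_w w)) fun w hw =>
      (D.norm_deriv_u_w_le w).trans (mul_le_mul_of_nonneg_right (hbound w hw) (norm_nonneg _))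
  refine (norm_fst_le (D.u z, D.w z)).trans (hgronwall.trans ?_)
  have hδ : 0 ≤ δ := norm_nonneg _
  have hle : 1 + 2 * C₁ + C₂ ≤ δ + (1 + 2 * C₁ + C₂) := le_add_of_nonneg_left hδ
  have hz : ‖z‖ ≤ 1 + ‖z‖ := le_add_of_nonneg_left zero_le_one
  rw [pow_succ _ (K + 1), ← mul_assoc]
  gcongr ?_ * Real.exp (?_ * _ * ?_)
  linarith

end WKBSolution

end WKB

section PolynomialTimesExp

open Polynomial

theorem re_neg_of_pow_three_eq_one {z : ℂ} (h : z ^ 3 = 1) (hz : z ≠ 1) : z.re < 0 := by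
  have hquad : z ^ 2 + z + 1 = 0 :=
    (mul_eq_zero.mp (by linear_combination h : (z - 1) * (z ^ 2 + z + 1) = 0)).resolve_left
      (sub_ne_zero.mpr hz)
  have hre : z.re * z.re - z.im * z.im + z.re + 1 = 0 := by
    simpa [pow_two] using congrArg re hquad
  have him : z.im * (2 * z.re + 1) = 0 := by
    have h := congrArg im hquad
    simp only [pow_two, add_im, mul_im, one_im, zero_im] at h
    linarith
  rcases mul_eq_zero.mp him with him | him
  · rw [him] at hre
    nlinarith
  · linarith

theorem rootMultiplicity_le_one_of_derivative_derivative_eq {F : Type*} [Field F] [CharZero F]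
    {Q p s : F[X]} (hQ : Q ≠ 0) (h : derivative (derivative Q) = p * derivative Q + s * Q) (z : F) :
    Q.rootMultiplicity z ≤ 1 := by
  by_contra! hmult
  obtain ⟨hz, hz'⟩ := (one_lt_rootMultiplicity_iff_isRoot hQ).mp hmult
  have hderiv {P : F[X]} (hP : P ≠ 0) (hPz : P.IsRoot z) : derivative P ≠ 0 := fun h0 => by
    rw [eq_C_of_derivative_eq_zero h0, IsRoot, eval_C] at hPz
    exact hP (by rw [eq_C_of_derivative_eq_zero h0, hPz, C_0])
  have hQ' : derivative Q ≠ 0 := hderiv hQ hz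
  have hm := derivative_rootMultiplicity_of_root hz
  have hm' := derivative_rootMultiplicity_of_root hz'
  have hdvd : (X - C z) ^ (derivative Q).rootMultiplicity z ∣ derivative (derivative Q) := by
    rw [h]
    refine dvd_add ((pow_rootMultiplicity_dvd _ z).mul_left _) (Dvd.dvd.mul_left ?_ _)
    exact (pow_dvd_pow _ (by omega)).trans (pow_rootMultiplicity_dvd Q z)
  have hle := (le_rootMultiplicity_iff (hderiv hQ' hz')).mpr hdvd
  omega

theorem finite_and_ncard_preimage_zero_eval_mul_exp {Q p s : ℂ[X]} (hQ : Q ≠ 0)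
    (h : derivative (derivative Q) = p * derivative Q + s * Q) (f : ℂ → ℂ) :
    ((fun z => Q.eval z * exp (f z)) ⁻¹' {0}).Finite ∧
      ((fun z => Q.eval z * exp (f z)) ⁻¹' {0}).ncard = Q.natDegree := by
  have hzeros : (fun z => Q.eval z * exp (f z)) ⁻¹' {0} = (Q.roots.toFinset : Set ℂ) := by
    ext z
    simp [hQ, exp_ne_zero]
  have hnodup : Q.roots.Nodup := Multiset.nodup_iff_count_le_one.mpr fun z =>
    (count_roots Q).trans_le (rootMultiplicity_le_one_of_derivative_derivative_eq hQ h z)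
  rw [hzeros]
  refine ⟨Finset.finite_toSet _, ?_⟩
  rw [Set.ncard_coe_finset, Multiset.toFinset_card_of_nodup hnodup,
    ← (IsAlgClosed.splits Q).natDegree_eq_card_roots]

theorem tendsto_eval_mul_exp_neg_eval {B : ℂ[X]} {N : ℕ} (hB : B.natDegree ≤ N) (hN : N ≠ 0)
    (Q : ℂ[X]) {ω : ℂ} (hω : ‖ω‖ = 1) (h : 0 < (B.coeff N * ω ^ N).re) :
    Tendsto (fun x : ℝ => Q.eval (ω * x) * exp (-B.eval (ω * x))) atTop (𝓝 0) := by
  obtain ⟨c, hc, hcB⟩ := exists_between h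
  obtain ⟨C, hC, hQ⟩ := exists_norm_eval_mul_ofReal_le_mul_pow (le_refl Q.natDegree) hω
  have hlim := (tendsto_rpow_mul_exp_neg_mul_atTop_nhds_zero Q.natDegree c hc).const_mul C
  rw [mul_zero] at hlim
  refine squeeze_zero_norm' ?_ hlim
  filter_upwards [eventually_le_re_eval_mul_ofReal hB hcB, eventually_ge_atTop 1] with x hx hx1
  have hpow : c * x ≤ c * x ^ N := by
    gcongr
    exact le_self_pow₀ hx1 hN
  rw [norm_mul, norm_exp, neg_re, Real.rpow_natCast, ← mul_assoc]
  gcongr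
  · exact hQ x hx1
  · linarith

theorem hasDerivAt_eval_mul_exp_neg_eval (P B : ℂ[X]) (z : ℂ) :
    HasDerivAt (fun z => P.eval z * exp (-B.eval z))
      ((derivative P - derivative B * P).eval z * exp (-B.eval z)) z := by
  have hexp : HasDerivAt (fun z => exp (-B.eval z))
      (exp (-B.eval z) * -(derivative B).eval z) z := (B.hasDerivAt z).neg.cexp
  refine ((P.hasDerivAt z).mul hexp).congr_deriv ?_
  simp only [eval_sub, eval_mul]
  ring

theorem deriv_deriv_eval_mul_exp_neg_eval {Q s : ℂ[X]} (B : ℂ[X])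
    (h : derivative (derivative Q) - 2 * derivative B * derivative Q = s * Q) (z : ℂ) :
    deriv (deriv fun z => Q.eval z * exp (-B.eval z)) z =
      (derivative B ^ 2 - derivative (derivative B) + s).eval z *
        (Q.eval z * exp (-B.eval z)) := by
  have hode : derivative (derivative Q - derivative B * Q) -
      derivative B * (derivative Q - derivative B * Q) =
        (derivative B ^ 2 - derivative (derivative B) + s) * Q := by
    simp only [derivative_sub, derivative_mul]
    linear_combination h
  rw [funext fun z => (hasDerivAt_eval_mul_exp_neg_eval Q B z).deriv,
    (hasDerivAt_eval_mul_exp_neg_eval _ B z).deriv, hode, eval_mul, mul_assoc]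

theorem coeff_eq_neg_two_mul_natDegree {Q b s : ℂ[X]} {K : ℕ} (hb : b.Monic)
    (hK : b.natDegree = K + 1) (hs : s.natDegree ≤ K) (hQ : Q ≠ 0)
    (h : derivative (derivative Q) - 2 * b * derivative Q = s * Q) :
    s.coeff K = -2 * Q.natDegree := by
  have hdiffOp : diffOp K 0 1 b Q = s * Q := by
    rw [diffOp_apply, ← h]
    simp
  have hcoeff := coeff_diffOp_of_natDegree_le (m := 0) (ε := 1) hb hK (le_refl Q.natDegree)
  rw [hdiffOp, add_comm, coeff_mul_add_eq_of_natDegree_le hs le_rfl] at hcoeff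
  refine mul_right_cancel₀ (leadingCoeff_ne_zero.mpr hQ) (hcoeff.trans ?_)
  rw [leadingCoeff]
  simp

namespace WKBSolution

variable {K : ℕ} (D : WKBSolution K)

theorem hasPolyBoundOn_ray_of_pow_eq_one
    (h : ∀ ω : ℂ, ω ^ (K + 2) = 1 → Tendsto (fun x : ℝ => D.y (ω * x)) atTop (𝓝 0)) {ω : ℂ}
    (hω : ω ^ (3 * (K + 2)) = 1) : HasPolyBoundOn D.u (ray ω) := by
  have hnorm : ‖ω‖ = 1 := norm_eq_one_of_pow_eq_one hω (by positivity)
  by_cases hone : ω ^ (K + 2) = 1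
  · exact D.hasPolyBoundOn_ray_of_tendsto hnorm hone (h ω hone)
  · rw [mul_comm, pow_mul] at hω
    exact D.hasPolyBoundOn_ray_of_re_neg hnorm (re_neg_of_pow_three_eq_one hω hone)

theorem exists_u_eq_eval
    (h : ∀ ω : ℂ, ω ^ (K + 2) = 1 → Tendsto (fun x : ℝ => D.y (ω * x)) atTop (𝓝 0)) :
    ∃ Q : ℂ[X], ∀ z, D.u z = Q.eval z := by
  obtain ⟨C, hC⟩ := D.exists_norm_u_le_mul_exp
  exact (hasPolyBoundOn_univ_of_forall_ray D.differentiable_u hC (by omega) (by omega)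
    fun _ => D.hasPolyBoundOn_ray_of_pow_eq_one h).exists_eq_eval D.differentiable_u

theorem exists_y_eq_eval_mul_exp (hy : D.y ≠ 0)
    (h : ∀ ω : ℂ, ω ^ (K + 2) = 1 → Tendsto (fun x : ℝ => D.y (ω * x)) atTop (𝓝 0)) :
    ∃ Q : ℂ[X], Q ≠ 0 ∧ derivative (derivative Q) - 2 * D.b * derivative Q = D.s * Q ∧
      ∀ z, D.y z = Q.eval z * exp (-D.B.eval z) := by
  obtain ⟨Q, hQ⟩ := D.exists_u_eq_eval h
  have hyQ (z : ℂ) : D.y z = Q.eval z * exp (-D.B.eval z) := by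
    rw [← hQ, u, mul_assoc, ← Complex.exp_add, add_neg_cancel, Complex.exp_zero, mul_one]
  have hwQ (z : ℂ) : D.w z = (derivative Q).eval z :=
    (funext hQ ▸ D.hasDerivAt_u z).unique (Q.hasDerivAt z)
  refine ⟨Q, ?_, Polynomial.funext fun z => ?_, hyQ⟩
  · rintro rfl
    exact hy (funext fun z => by simp [hyQ])
  · have hw' := (funext hwQ ▸ D.hasDerivAt_w z).unique ((derivative Q).hasDerivAt z)
    rw [hQ] at hw'
    simp only [eval_sub, eval_mul, eval_ofNat, ← hw']
    ring

end WKBSolution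

end PolynomialTimesExp

section PolynomialSqrt

open Polynomial

variable {T F : Type*} [TopologicalSpace T] [Field F]

theorem exists_rootPoly_eq [IsAlgClosed F] {n : ℕ} {b : F[X]} (hb : b.Monic)
    (hn : b.natDegree = n) : ∃ γ : Fin n → F, rootPoly γ = b := by
  have hcard : b.roots.toList.length = n := by
    rw [Multiset.length_toList, ← (IsAlgClosed.splits b).natDegree_eq_card_roots, hn]
  subst hcard
  refine ⟨b.roots.toList.get, ?_⟩
  calc rootPoly b.roots.toList.get = (b.roots.toList.map fun a => X - C a).prod := by
        rw [rootPoly, ← List.prod_ofFn]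
        exact congrArg _ (List.ext_get (by simp) (by simp))
    _ = (b.roots.map fun a => X - C a).prod := by
        rw [← Multiset.prod_coe, ← Multiset.map_coe, Multiset.coe_toList]
    _ = b := ((IsAlgClosed.splits b).eq_prod_roots_of_monic hb).symm

theorem degree_sub_sq_add_C_mul_X_pow_lt [NeZero (2 : F)] {P b : F[X]} {n i : ℕ} (hb : b.Monic)
    (hn : b.natDegree = n) (hi : i < n) (h : (P - b ^ 2).degree < (n + (i + 1) : ℕ)) :
    (P - (b + C ((P - b ^ 2).coeff (n + i) / 2) * X ^ i) ^ 2).degree <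
      ((n + i : ℕ) : WithBot ℕ) := by
  set c := (P - b ^ 2).coeff (n + i) / 2 with hc
  have hcoeff : b.coeff n = 1 := by
    rw [← hn]
    exact hb.coeff_natDegree
  have hexpand : P - (b + C c * X ^ i) ^ 2 =
      P - b ^ 2 - C (2 * c) * (b * X ^ i) - C (c ^ 2) * X ^ (2 * i) := by
    rw [C_mul, C_pow, pow_mul', C_ofNat]
    ring
  rw [degree_lt_iff_coeff_zero] at h ⊢
  intro k hk
  rw [hexpand, coeff_sub, coeff_sub, coeff_C_mul, coeff_C_mul_X_pow, if_neg (by omega), sub_zero]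
  rcases hk.eq_or_lt with rfl | hk
  · rw [coeff_mul_X_pow, hcoeff, mul_one, hc, mul_div_cancel₀ _ two_ne_zero, sub_self]
  · obtain ⟨l, rfl⟩ : ∃ l, k = l + i := ⟨k - i, by omega⟩
    rw [h _ (by omega), coeff_mul_X_pow, coeff_eq_zero_of_natDegree_lt (p := b) (by omega),
      mul_zero, sub_zero]

variable [TopologicalSpace F]

/-- A continuous family of monic polynomials of degree `n` whose squares agree with the given
polynomials in all degrees from `N` on. -/
structure IsApproxSqrt (P b : T → F[X]) (n N : ℕ) : Prop where
  continuous_coeff : ∀ k, Continuous fun x => (b x).coeff k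
  monic : ∀ x, (b x).Monic
  natDegree_eq : ∀ x, (b x).natDegree = n
  degree_sub_sq_lt : ∀ x, (P x - b x ^ 2).degree < N

theorem isApproxSqrt_X_pow {P : T → F[X]} {n : ℕ} (hmonic : ∀ x, (P x).Monic)
    (hdeg : ∀ x, (P x).natDegree = 2 * n) : IsApproxSqrt P (fun _ => X ^ n) n (n + n) where
  continuous_coeff _ := continuous_const
  monic _ := monic_X_pow n
  natDegree_eq _ := natDegree_X_pow n
  degree_sub_sq_lt x := by
    have hP : (P x).degree = (n + n : ℕ) := by
      rw [degree_eq_natDegree (hmonic x).ne_zero, hdeg, two_mul]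
    have hX : ((X ^ n : F[X]) ^ 2).degree = (n + n : ℕ) := by
      rw [← pow_mul, mul_two, degree_X_pow]
    rw [← hP]
    refine degree_sub_lt_left (hP.trans hX.symm) (hmonic x).ne_zero ?_
    rw [(hmonic x).leadingCoeff, ((monic_X_pow n).pow 2).leadingCoeff]

theorem IsApproxSqrt.natDegree_sub_sq_le {P b : T → F[X]} {n K : ℕ}
    (h : IsApproxSqrt P b n (K + 1)) (x : T) : (P x - b x ^ 2).natDegree ≤ K :=
  natDegree_le_iff_coeff_eq_zero.mpr fun k hk =>
    (degree_lt_iff_coeff_zero _ _).mp (h.degree_sub_sq_lt x) k hk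

theorem IsApproxSqrt.natDegree_sub_sq_add_derivative_le {P b : T → F[X]} {K : ℕ}
    (h : IsApproxSqrt P b (K + 1) (K + 1)) (x : T) :
    (P x - b x ^ 2 + derivative (b x)).natDegree ≤ K := by
  have hderiv := natDegree_derivative_le (b x)
  rw [h.natDegree_eq] at hderiv
  exact natDegree_add_le_of_degree_le (h.natDegree_sub_sq_le x) hderiv

variable [IsTopologicalRing F]

theorem continuous_coeff_sq {b : T → F[X]} (hb : ∀ k, Continuous fun x => (b x).coeff k) (k : ℕ) :
    Continuous fun x => (b x ^ 2).coeff k := by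
  simp only [sq, coeff_mul]
  exact continuous_finsetSum _ fun i _ => (hb _).mul (hb _)

variable [NeZero (2 : F)]

theorem IsApproxSqrt.exists_succ {P b : T → F[X]} {n i : ℕ}
    (hP : ∀ k, Continuous fun x => (P x).coeff k) (hi : i < n)
    (h : IsApproxSqrt P b n (n + (i + 1))) : ∃ b', IsApproxSqrt P b' n (n + i) := by
  have hlt (x : T) (c : F) : (C c * X ^ i).natDegree < (b x).natDegree := by
    rw [h.natDegree_eq]
    exact (natDegree_C_mul_X_pow_le c i).trans_lt hi
  refine ⟨fun x => b x + C ((P x - b x ^ 2).coeff (n + i) / 2) * X ^ i, fun k => ?_,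
    fun x => (h.monic x).add_of_left (degree_lt_degree (hlt x _)), fun x => ?_, fun x =>
    degree_sub_sq_add_C_mul_X_pow_lt (h.monic x) (h.natDegree_eq x) hi (h.degree_sub_sq_lt x)⟩
  · simp only [coeff_add, coeff_C_mul, coeff_sub]
    exact (h.continuous_coeff k).add (Continuous.mul (((hP _).sub
      (continuous_coeff_sq h.continuous_coeff _)).div_const 2) continuous_const)
  · rw [natDegree_add_eq_left_of_natDegree_lt (hlt x _), h.natDegree_eq]

theorem exists_isApproxSqrt {P : T → F[X]} {n : ℕ} (hP : ∀ k, Continuous fun x => (P x).coeff k)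
    (hmonic : ∀ x, (P x).Monic) (hdeg : ∀ x, (P x).natDegree = 2 * n) :
    ∃ b, IsApproxSqrt P b n n :=
  Nat.decreasingInduction' (P := fun i => ∃ b, IsApproxSqrt P b n (n + i))
    (fun _ hi _ ⟨_, hb⟩ => hb.exists_succ hP hi) (Nat.zero_le n)
    ⟨_, isApproxSqrt_X_pow hmonic hdeg⟩

end PolynomialSqrt

section Potential

open Polynomial

variable {d : ℕ}

/-- The polynomial `P_α - λ`. -/
noncomputable def potential (d : ℕ) (p : (Fin (d - 1) → ℂ) × ℂ) : ℂ[X] :=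
  X ^ d + (∑ i, C (p.1 i) * X ^ ((i : ℕ) + 1) - C p.2)

theorem potential_eval (d : ℕ) (p : (Fin (d - 1) → ℂ) × ℂ) (z : ℂ) :
    (potential d p).eval z = Pol d p.1 z - p.2 := by
  simp [potential, Pol, eval_finsetSum]
  ring

theorem degree_sum_C_mul_X_pow_succ_sub_C_lt (hd : d ≠ 0) (p : (Fin (d - 1) → ℂ) × ℂ) :
    (∑ i, C (p.1 i) * X ^ ((i : ℕ) + 1) - C p.2).degree < d := by
  refine (degree_lt_iff_coeff_zero _ _).mpr fun k hk => ?_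
  have hne (i : Fin (d - 1)) : k ≠ i + 1 := by omega
  simp [coeff_C, hne, show k ≠ 0 by omega]

theorem potential_monic (hd : d ≠ 0) (p : (Fin (d - 1) → ℂ) × ℂ) : (potential d p).Monic :=
  monic_X_pow_add (degree_sum_C_mul_X_pow_succ_sub_C_lt hd p)

theorem natDegree_potential (hd : d ≠ 0) (p : (Fin (d - 1) → ℂ) × ℂ) :
    (potential d p).natDegree = d := by
  have h := degree_sum_C_mul_X_pow_succ_sub_C_lt hd p
  rw [← degree_X_pow (R := ℂ) d] at h
  rw [potential, natDegree_add_eq_left_of_degree_lt h, natDegree_X_pow]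

theorem continuous_coeff_potential (d k : ℕ) :
    Continuous fun p : (Fin (d - 1) → ℂ) × ℂ => (potential d p).coeff k := by
  simp only [potential, coeff_add, coeff_sub, finsetSum_coeff, coeff_C_mul, coeff_C]
  split_ifs <;> fun_prop

/-- The parameters `(α, λ)` read off from the coefficients of a potential. -/
def params (d : ℕ) (M : ℂ[X]) : (Fin (d - 1) → ℂ) × ℂ :=
  (fun i => M.coeff ((i : ℕ) + 1), -M.coeff 0)

theorem potential_params (hd : d ≠ 0) {M : ℂ[X]} (hM : M.Monic) (hdeg : M.natDegree = d) :
    potential d (params d M) = M := by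
  obtain ⟨e, rfl⟩ := Nat.exists_eq_succ_of_ne_zero hd
  have hcoeff := hM.coeff_natDegree
  have hsum := M.as_sum_range_C_mul_X_pow
  rw [hdeg] at hsum hcoeff
  rw [Finset.sum_range_succ, hcoeff, Finset.sum_range_succ',
    ← Fin.sum_univ_eq_sum_range fun i => C (M.coeff (i + 1)) * X ^ (i + 1)] at hsum
  rw [potential, params]
  conv_rhs => rw [hsum]
  simp
  ring

theorem params_potential (hd : d ≠ 0) (p : (Fin (d - 1) → ℂ) × ℂ) :
    params d (potential d p) = p := by
  refine Prod.ext (funext fun i => ?_) ?_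
  · have hne : (i : ℕ) + 1 ≠ d := by omega
    simp [params, potential, coeff_X_pow, coeff_C, hne, Fin.val_inj]
  · simp [params, potential, coeff_X_pow, hd.symm]

end Potential

section BoundPotential

open Polynomial

/-- The potential `b² - b' + u - 2 m z ^ K`, which has `Q exp (-B)` as a solution whenever `B' = b`
and `(b, u)`, given by the roots of `b` and the coefficients of `u`, satisfies
`Q'' - 2 b Q' + 2 m z ^ K Q = u Q`. -/
noncomputable def boundPotential (K m : ℕ) (x : (Fin (K + 1) → ℂ) × (Fin K → ℂ)) : ℂ[X] :=
  rootPoly x.1 ^ 2 - derivative (rootPoly x.1) + (ofFn K x.2 - C (2 * m : ℂ) * X ^ K)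

theorem exists_boundPotential_eq (K m : ℕ) (x : (Fin (K + 1) → ℂ) × (Fin K → ℂ)) :
    ∃ t : ℂ[X], boundPotential K m x = rootPoly x.1 ^ 2 + t ∧
      t.natDegree < (rootPoly x.1 ^ 2).natDegree := by
  refine ⟨ofFn K x.2 - C (2 * m : ℂ) * X ^ K - derivative (rootPoly x.1), ?_, ?_⟩
  · rw [boundPotential]
    ring
  · have hu : (ofFn K x.2).natDegree ≤ K := natDegree_le_iff_degree_le.mpr (ofFn_degree_lt x.2).le
    have hderiv := natDegree_derivative_le (rootPoly x.1)
    rw [natDegree_rootPoly] at hderiv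
    rw [(rootPoly_monic x.1).natDegree_pow, natDegree_rootPoly]
    have hle := natDegree_sub_le_of_le (natDegree_sub_le_of_le hu
      (natDegree_C_mul_X_pow_le (2 * m : ℂ) K)) hderiv
    simp only [max_self, Nat.add_sub_cancel] at hle
    omega

theorem boundPotential_monic (K m : ℕ) (x : (Fin (K + 1) → ℂ) × (Fin K → ℂ)) :
    (boundPotential K m x).Monic := by
  obtain ⟨t, ht, hlt⟩ := exists_boundPotential_eq K m x
  rw [ht]
  exact ((rootPoly_monic x.1).pow 2).add_of_left (degree_lt_degree hlt)

theorem natDegree_boundPotential (K m : ℕ) (x : (Fin (K + 1) → ℂ) × (Fin K → ℂ)) :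
    (boundPotential K m x).natDegree = 2 * (K + 1) := by
  obtain ⟨t, ht, hlt⟩ := exists_boundPotential_eq K m x
  rw [ht, natDegree_add_eq_left_of_natDegree_lt hlt, (rootPoly_monic x.1).natDegree_pow,
    natDegree_rootPoly]

theorem continuous_coeff_boundPotential (K m k : ℕ) :
    Continuous fun x : (Fin (K + 1) → ℂ) × (Fin K → ℂ) => (boundPotential K m x).coeff k := by
  have hroot (k : ℕ) : Continuous fun x : (Fin (K + 1) → ℂ) × (Fin K → ℂ) =>
      (rootPoly x.1).coeff k :=
    (differentiable_coeff_rootPoly k).continuous.comp continuous_fst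
  have hofFn : Continuous fun x : (Fin (K + 1) → ℂ) × (Fin K → ℂ) => (ofFn K x.2).coeff k := by
    simp only [ofFn_eq_sum_monomial, finsetSum_coeff, coeff_monomial]
    exact continuous_finsetSum _ fun i _ => by split_ifs <;> fun_prop
  simp only [boundPotential, coeff_add, coeff_sub, coeff_derivative]
  exact ((continuous_coeff_sq hroot k).sub ((hroot _).mul continuous_const)).add
    (hofFn.sub continuous_const)

theorem continuous_params_boundPotential (K m d : ℕ) :
    Continuous fun x => params d (boundPotential K m x) :=
  (continuous_pi fun _ => continuous_coeff_boundPotential K m _).prodMk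
    (continuous_coeff_boundPotential K m _).neg

theorem exists_mem_spectralSet_boundPotential_eq {K : ℕ} {P Q b : ℂ[X]} (hb : b.Monic)
    (hbK : b.natDegree = K + 1) (hr : (P - b ^ 2 + derivative b).natDegree ≤ K) (hQ : Q ≠ 0)
    (h : derivative (derivative Q) - 2 * b * derivative Q = (P - b ^ 2 + derivative b) * Q) :
    ∃ x ∈ spectralSet K Q.natDegree, boundPotential K Q.natDegree x = P := by
  obtain ⟨γ, rfl⟩ := exists_rootPoly_eq hb hbK
  set s := P - rootPoly γ ^ 2 + derivative (rootPoly γ) with hs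
  set u := s + C (2 * Q.natDegree : ℂ) * X ^ K with hu
  have hdegree : u.degree < K := by
    refine (degree_lt_iff_coeff_zero _ _).mpr fun k hk => ?_
    rw [hu, coeff_add, coeff_C_mul_X_pow]
    rcases hk.eq_or_lt with rfl | hk
    · rw [coeff_eq_neg_two_mul_natDegree hb hbK hr hQ h, if_pos rfl]
      ring
    · rw [if_neg hk.ne', add_zero, coeff_eq_zero_of_natDegree_lt (hr.trans_lt hk)]
  have hofFn : ofFn K (toFn K u) = u :=
    eq_of_toFn_eq_of_degree_lt (ofFn_degree_lt _) hdegree (toFn_comp_ofFn_eq_id K _)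
  refine ⟨(γ, toFn K u), ⟨Q, hQ, le_rfl, ?_⟩, ?_⟩
  · rw [hofFn, hu, diffOp_apply, C_1]
    linear_combination h
  · rw [boundPotential, hofFn, hu, hs]
    ring

end BoundPotential

section StokesSectors

open Polynomial

variable {N i : ℕ}

theorem re_exp_mul_I_pow_pos_of_dirIn (hN : N ≠ 0) {θ : ℝ} (hθ : DirIn (2 * N) (2 * i) θ) :
    0 < (exp (θ * I) ^ N).re := by
  have hN : (0 : ℝ) < N := by positivity
  rw [DirIn] at hθ
  push_cast at hθ
  have hscale := mul_lt_mul_of_pos_left hθ hN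
  have hcenter : N * (θ - 2 * Real.pi * (2 * i) / (2 * N)) = N * θ - 2 * Real.pi * i := by
    field_simp
  have hwidth : N * (Real.pi / (2 * N)) = Real.pi / 2 := by
    field_simp
  rw [← abs_of_pos hN, ← abs_mul, abs_of_pos hN, hcenter, hwidth, abs_lt] at hscale
  have hexp : exp (θ * I) ^ N = exp ((N * θ - 2 * Real.pi * i : ℝ) * I) := by
    rw [← Complex.exp_nat_mul, ← mul_one (exp (_ * I)), ← exp_nat_mul_two_pi_mul_I i,
      ← Complex.exp_add]
    congr 1
    push_cast
    ring
  rw [hexp, exp_ofReal_mul_I_re]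
  exact Real.cos_pos_of_mem_Ioo ⟨by linarith [hscale.1], hscale.2⟩

theorem subdominant_eval_mul_exp_neg_eval {B : ℂ[X]} (hB : B.natDegree ≤ N) (hN : N ≠ 0)
    (Q : ℂ[X]) {c : ℝ} (hc : 0 < c) (hcoeff : B.coeff N = c) :
    Subdominant (2 * N) (2 * i) fun z => Q.eval z * exp (-B.eval z) := fun θ hθ => by
  have hre : 0 < (B.coeff N * exp (θ * I) ^ N).re := by
    rw [hcoeff, re_ofReal_mul]
    exact mul_pos hc (re_exp_mul_I_pow_pos_of_dirIn hN hθ)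
  simpa only [mul_comm] using
    tendsto_eval_mul_exp_neg_eval hB hN Q (norm_exp_ofReal_mul_I θ) hre

theorem tendsto_mul_ofReal_of_forall_subdominant {y : ℂ → ℂ} (hN : N ≠ 0)
    (h : ∀ i < N, Subdominant (2 * N) (2 * i) y) {ω : ℂ} (hω : ω ^ N = 1) :
    Tendsto (fun x : ℝ => y (ω * x)) atTop (𝓝 0) := by
  have : NeZero N := ⟨hN⟩
  obtain ⟨i, hi, rfl⟩ := (isPrimitiveRoot_exp N hN).eq_pow_of_pow_eq_one hω
  have hcenter : DirIn (2 * N) (2 * i) (2 * Real.pi * i / N) := by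
    have hzero : 2 * Real.pi * i / N - 2 * Real.pi * (2 * i : ℕ) / (2 * N : ℕ) = 0 := by
      push_cast
      field_simp
      ring
    rw [DirIn, hzero, abs_zero]
    positivity
  have hexp : exp (2 * Real.pi * I / N) ^ i = exp ((2 * Real.pi * i / N : ℝ) * I) := by
    rw [← Complex.exp_nat_mul]
    congr 1
    push_cast
    ring
  rw [hexp]
  simpa only [mul_comm] using h i hi _ hcenter

end StokesSectors

section BoundStates

open Polynomial

/-- A nonzero solution that is subdominant in all even sectors. -/
def IsBound (d n : ℕ) (p : (Fin (d - 1) → ℂ) × ℂ) (y : ℂ → ℂ) : Prop :=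
  y ≠ 0 ∧ IsSol d p.1 p.2 y ∧ ∀ i : ℕ, i < n / 2 → Subdominant n (2 * i) y

variable {K : ℕ}

theorem isBound_eval_mul_exp_neg_eval {p : (Fin (2 * (K + 1) - 1) → ℂ) × ℂ} {Q B : ℂ[X]}
    (hQ : Q ≠ 0) (hB : (derivative B).Monic) (hBK : (derivative B).natDegree = K + 1)
    (h : derivative (derivative Q) - 2 * derivative B * derivative Q =
      (potential _ p - derivative B ^ 2 + derivative (derivative B)) * Q) :
    IsBound (2 * (K + 1)) (2 * (K + 2)) p fun z => Q.eval z * exp (-B.eval z) := by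
  have hcoeff : B.coeff (K + 2) = ((1 / (K + 2) : ℝ) : ℂ) := by
    have hlead := hB.coeff_natDegree
    rw [hBK, coeff_derivative] at hlead
    push_cast at hlead ⊢
    refine eq_div_of_mul_eq (by exact_mod_cast (by omega : K + 2 ≠ 0)) ?_
    linear_combination hlead
  have hdeg : B.natDegree ≤ K + 2 := by
    rw [natDegree_derivative] at hBK
    omega
  refine ⟨fun hy => hQ (Polynomial.funext fun z => ?_), ⟨?_, fun z => ?_⟩, fun i _ =>
    subdominant_eval_mul_exp_neg_eval hdeg (by omega) Q (by positivity) hcoeff⟩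
  · simpa [exp_ne_zero] using congrFun hy z
  · exact fun z => (hasDerivAt_eval_mul_exp_neg_eval Q B z).differentiableAt
  · rw [deriv_deriv_eval_mul_exp_neg_eval B h, ← potential_eval]
    congr 2
    ring

theorem exists_isBound_of_mem_spectralSet {m : ℕ} {x : (Fin (K + 1) → ℂ) × (Fin K → ℂ)}
    (hx : x ∈ spectralSet K m) :
    ∃ y, IsBound (2 * (K + 1)) (2 * (K + 2)) (params _ (boundPotential K m x)) y ∧
      (y ⁻¹' {0}).Finite ∧ (y ⁻¹' {0}).ncard = m := by
  obtain ⟨Q, hQ, -, h⟩ := hx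
  obtain ⟨B, hB⟩ := exists_derivative_eq (rootPoly x.1)
  have hbm := rootPoly_monic x.1
  have hbK := natDegree_rootPoly x.1
  have hdeg := natDegree_eq_of_diffOp_eq_mul hbm hbK (ofFn_degree_lt x.2) hQ h
  have hode : derivative (derivative Q) - 2 * derivative B * derivative Q =
      (potential _ (params (2 * (K + 1)) (boundPotential K m x)) - derivative B ^ 2 +
        derivative (derivative B)) * Q := by
    rw [potential_params (by omega) (boundPotential_monic K m x) (natDegree_boundPotential K m x),
      boundPotential, hB]
    rw [diffOp_apply, C_1] at h
    linear_combination h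
  refine ⟨_, isBound_eval_mul_exp_neg_eval hQ (hB ▸ hbm) (hB ▸ hbK) hode, ?_⟩
  rw [← hdeg]
  exact finite_and_ncard_preimage_zero_eval_mul_exp hQ (eq_add_of_sub_eq' hode) _

theorem exists_isApproxSqrt_potential (K : ℕ) :
    ∃ b, IsApproxSqrt (potential (2 * (K + 1))) b (K + 1) (K + 1) :=
  exists_isApproxSqrt (continuous_coeff_potential _) (potential_monic (by omega))
    (natDegree_potential (by omega))

namespace IsBound

variable {p : (Fin (2 * (K + 1) - 1) → ℂ) × ℂ} {y : ℂ → ℂ}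
  {b : (Fin (2 * (K + 1) - 1) → ℂ) × ℂ → ℂ[X]}

theorem exists_eq_eval_mul_exp (hy : IsBound (2 * (K + 1)) (2 * (K + 2)) p y)
    (hb : IsApproxSqrt (potential _) b (K + 1) (K + 1)) :
    ∃ Q B : ℂ[X], Q ≠ 0 ∧ derivative (derivative Q) - 2 * b p * derivative Q =
      (potential _ p - b p ^ 2 + derivative (b p)) * Q ∧
        y = fun z => Q.eval z * exp (-B.eval z) := by
  obtain ⟨B, hB⟩ := exists_derivative_eq (b p)
  let D : WKBSolution K :=
    { b := b p
      r := potential _ p - b p ^ 2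
      B := B
      y := y
      monic := hb.monic p
      natDegree_b := hb.natDegree_eq p
      natDegree_r := hb.natDegree_sub_sq_le p
      derivative_B := hB
      differentiable := hy.2.1.1
      deriv_deriv_y := fun z => by rw [add_sub_cancel, potential_eval, hy.2.1.2 z] }
  obtain ⟨Q, hQ, hode, hyQ⟩ := D.exists_y_eq_eval_mul_exp hy.1 fun ω hω =>
    tendsto_mul_ofReal_of_forall_subdominant (by omega) (fun i hi => hy.2.2 i (by omega)) hω
  exact ⟨Q, B, hQ, hode, funext hyQ⟩

theorem finite_zeros (hy : IsBound (2 * (K + 1)) (2 * (K + 2)) p y) : (y ⁻¹' {0}).Finite := by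
  obtain ⟨b, hb⟩ := exists_isApproxSqrt_potential K
  obtain ⟨Q, B, hQ, hode, rfl⟩ := hy.exists_eq_eval_mul_exp hb
  exact (finite_and_ncard_preimage_zero_eval_mul_exp hQ (eq_add_of_sub_eq' hode) _).1

theorem coeff_eq_neg_two_mul_ncard_zeros (hy : IsBound (2 * (K + 1)) (2 * (K + 2)) p y)
    (hb : IsApproxSqrt (potential _) b (K + 1) (K + 1)) :
    (potential _ p - b p ^ 2 + derivative (b p)).coeff K = -2 * (y ⁻¹' {0}).ncard := by
  obtain ⟨Q, B, hQ, hode, rfl⟩ := hy.exists_eq_eval_mul_exp hb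
  rw [(finite_and_ncard_preimage_zero_eval_mul_exp hQ (eq_add_of_sub_eq' hode) _).2]
  exact coeff_eq_neg_two_mul_natDegree (hb.monic p) (hb.natDegree_eq p)
    (hb.natDegree_sub_sq_add_derivative_le p) hQ hode

theorem mem_image_spectralSet (hy : IsBound (2 * (K + 1)) (2 * (K + 2)) p y) :
    p ∈ (fun x => params _ (boundPotential K (y ⁻¹' {0}).ncard x)) ''
      spectralSet K (y ⁻¹' {0}).ncard := by
  obtain ⟨b, hb⟩ := exists_isApproxSqrt_potential K
  obtain ⟨Q, B, hQ, hode, rfl⟩ := hy.exists_eq_eval_mul_exp hb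
  rw [(finite_and_ncard_preimage_zero_eval_mul_exp hQ (eq_add_of_sub_eq' hode) _).2]
  obtain ⟨x, hx, hxp⟩ := exists_mem_spectralSet_boundPotential_eq (hb.monic p)
    (hb.natDegree_eq p) (hb.natDegree_sub_sq_add_derivative_le p) hQ hode
  exact ⟨x, hx, (congrArg _ hxp).trans (params_potential (by omega) p)⟩

end IsBound

end BoundStates

theorem connectedComponentIn_eq_of_isClopen_preimage {X : Type*} [TopologicalSpace X]
    {S U : Set X} (hU : IsPreconnected U) (hUS : U ⊆ S)
    (h : IsClopen (Subtype.val ⁻¹' U : Set S)) {x : X} (hx : x ∈ U) :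
    connectedComponentIn S x = U := by
  refine Set.Subset.antisymm ?_ (hU.subset_connectedComponentIn hx hUS)
  rw [connectedComponentIn_eq_image (hUS hx), Set.image_subset_iff]
  exact h.connectedComponent_subset hx

section BoundSpectrum

open Polynomial

/-- The set `Σ` of parameters for which a bound solution exists. -/
def boundSpectrum (d n : ℕ) : Set ((Fin (d - 1) → ℂ) × ℂ) :=
  {p | ∃ y, IsBound d n p y}

/-- The set `Σ_m` of parameters having a bound solution with exactly `m` zeros. -/
def boundSpectrumOfZeros (d n m : ℕ) : Set ((Fin (d - 1) → ℂ) × ℂ) :=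
  {p | ∃ y, IsBound d n p y ∧ (y ⁻¹' {0}).Finite ∧ (y ⁻¹' {0}).ncard = m}

theorem boundSpectrumOfZeros_subset (d n m : ℕ) :
    boundSpectrumOfZeros d n m ⊆ boundSpectrum d n :=
  fun _ ⟨y, hy, _⟩ => ⟨y, hy⟩

theorem boundSpectrumOfZeros_eq_image (K m : ℕ) :
    boundSpectrumOfZeros (2 * (K + 1)) (2 * (K + 2)) m =
      (fun x => params _ (boundPotential K m x)) '' spectralSet K m := by
  refine Set.Subset.antisymm ?_
    (Set.image_subset_iff.mpr fun _ => exists_isBound_of_mem_spectralSet)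
  rintro p ⟨y, hy, -, rfl⟩
  exact hy.mem_image_spectralSet

theorem isConnected_boundSpectrumOfZeros (K m : ℕ) :
    IsConnected (boundSpectrumOfZeros (2 * (K + 1)) (2 * (K + 2)) m) := by
  rw [boundSpectrumOfZeros_eq_image]
  exact (isConnected_spectralSet K m).image _
    (continuous_params_boundPotential K m _).continuousOn

theorem isClopen_preimage_boundSpectrumOfZeros (K m : ℕ) :
    IsClopen (Subtype.val ⁻¹' boundSpectrumOfZeros (2 * (K + 1)) (2 * (K + 2)) m :
      Set (boundSpectrum (2 * (K + 1)) (2 * (K + 2)))) := by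
  obtain ⟨b, hb⟩ := exists_isApproxSqrt_potential K
  choose y hy using fun p : boundSpectrum (2 * (K + 1)) (2 * (K + 2)) => p.2
  have hcontinuous : Continuous fun p => (y p ⁻¹' {0}).ncard := by
    refine Nat.isClosedEmbedding_coe_real.isInducing.continuous_iff.mpr ?_
    have hre (p) : ((y p ⁻¹' {0}).ncard : ℝ) =
        ((potential _ p.1 - b p ^ 2 + derivative (b p)).coeff K / -2).re := by
      rw [(hy p).coeff_eq_neg_two_mul_ncard_zeros hb,
        mul_div_cancel_left₀ _ (neg_ne_zero.mpr two_ne_zero), natCast_re]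
    have hcoeff : Continuous fun p => (potential _ p - b p ^ 2 + derivative (b p)).coeff K := by
      simp only [coeff_add, coeff_sub, coeff_derivative]
      exact ((continuous_coeff_potential _ K).sub (continuous_coeff_sq hb.continuous_coeff K)).add
        ((hb.continuous_coeff _).mul continuous_const)
    refine Continuous.congr ?_ fun p => (hre p).symm
    exact continuous_re.comp ((hcoeff.comp continuous_subtype_val).div_const _)
  refine (congrArg IsClopen (Set.ext fun p => ?_)).mpr
    ((isClopen_discrete {m}).preimage hcontinuous)
  refine ⟨?_, fun h => ⟨y p, hy p, (hy p).finite_zeros, h⟩⟩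
  rintro ⟨y', hy', -, hcard⟩
  have heq := (hy p).coeff_eq_neg_two_mul_ncard_zeros hb
  rw [hy'.coeff_eq_neg_two_mul_ncard_zeros hb, hcard] at heq
  exact_mod_cast (mul_left_cancel₀ (neg_ne_zero.mpr two_ne_zero) heq).symm

end BoundSpectrum

theorem stmt6 (d : ℕ) (hd : 2 ≤ d) (hev : Even d) (n : ℕ) (hn : n = d + 2)
    (Sig : Set ((Fin (d - 1) → ℂ) × ℂ))
    (hSig : Sig = {p : (Fin (d - 1) → ℂ) × ℂ |
      ∃ y : ℂ → ℂ, y ≠ 0 ∧ IsSol d p.1 p.2 y ∧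
        ∀ i : ℕ, i < n / 2 → Subdominant n (2 * i) y})
    (Sigm : ℕ → Set ((Fin (d - 1) → ℂ) × ℂ))
    (hSigm : ∀ m : ℕ, Sigm m = {p ∈ Sig |
      ∃ y : ℂ → ℂ, y ≠ 0 ∧ IsSol d p.1 p.2 y ∧
        (∀ i : ℕ, i < n / 2 → Subdominant n (2 * i) y) ∧
        (y ⁻¹' {0}).Finite ∧ (y ⁻¹' {0}).ncard = m}) :
    ∀ m : ℕ, (Sigm m).Nonempty ∧ IsConnected (Sigm m) ∧
      IsOpen (Subtype.val ⁻¹' (Sigm m) : Set ↥Sig) ∧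
      IsClosed (Subtype.val ⁻¹' (Sigm m) : Set ↥Sig) ∧
      ∀ p ∈ Sigm m, connectedComponentIn Sig p = Sigm m := by
  obtain ⟨K, rfl⟩ : ∃ K, d = 2 * (K + 1) := by
    obtain ⟨k, rfl⟩ := hev
    exact ⟨k - 1, by omega⟩
  obtain rfl : n = 2 * (K + 2) := by omega
  have hSig' : Sig = boundSpectrum (2 * (K + 1)) (2 * (K + 2)) := hSig
  have hSigm' (m : ℕ) : Sigm m = boundSpectrumOfZeros (2 * (K + 1)) (2 * (K + 2)) m := by
    rw [hSigm, hSig']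
    exact Set.ext fun p => ⟨fun ⟨_, y, hy0, hsol, hsub, hzeros⟩ => ⟨y, ⟨hy0, hsol, hsub⟩, hzeros⟩,
      fun ⟨y, hy, hzeros⟩ => ⟨⟨y, hy⟩, y, hy.1, hy.2.1, hy.2.2, hzeros⟩⟩
  intro m
  have hconn := isConnected_boundSpectrumOfZeros K m
  have hclopen := isClopen_preimage_boundSpectrumOfZeros K m
  rw [hSigm', hSig']
  exact ⟨hconn.nonempty, hconn, hclopen.isOpen, hclopen.isClosed, fun p hp =>
    connectedComponentIn_eq_of_isClopen_preimage hconn.isPreconnected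
      (boundSpectrumOfZeros_subset _ _ m) hclopen hp⟩
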